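/- arXiv:1310.7260 — 4 statements merged into one kernel-verified Lean document; each statement's English description precedes it below -/
import Mathlib

section
/- The laws of W_n := n^{-2} ∑_{1≤i,j≤n} 1_{gcd(X_i,X_j)=1} satisfy a large deviation principle with speed n and rate function I₁: for every Borel set A ⊆ [0,1], −inf_{x∈A°} I₁(x) ≤ liminf_{n→∞} (1/n) log P(W_n ∈ A) ≤ limsup_{n→∞} (1/n) log P(W_n ∈ A) ≤ −inf_{x∈closure(A)} I₁(x), where I₁(x) = inf{ ∫_{[0,1]} log(dμ/dν) dμ : μ a Borel probability measure on [0,1] with ∬_{[0,1]²} f(u,v) μ(du) μ(dv) = x }, the relative entropy being +∞ when μ is not absolutely continuous with respect to ν. -/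
open MeasureTheory ProbabilityTheory Filter Real
open scoped ENNReal

/-- The joint law of `n` i.i.d. random variables, each uniformly distributed on
`{1, 2, …, n}` (the coordinates `ω ↦ ω i` are the random variables `X_i`). -/
noncomputable def unifVec (n : ℕ) : Measure (Fin n → ℕ) :=
  Measure.pi fun _ => uniformOn (Set.Icc 1 n)

/-- `digit i a` is the `(i+1)`-st digit of the binary expansion of `a`
(the finite expansion is selected for dyadic rationals). -/
noncomputable def digit (i : ℕ) (a : ℝ) : ℕ := ⌊a * 2 ^ (i + 1)⌋.toNat % 2

/-- `f(x,y) = 1` if the binary expansions of `x` and `y` never share a digit `1`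
in the same position, and `f(x,y) = 0` otherwise. -/
noncomputable def coprimeKernel (x y : ℝ) : ℝ :=
  Set.indicator {p : ℝ × ℝ | ∀ i : ℕ, ¬(digit i p.1 = 1 ∧ digit i p.2 = 1)}
    (fun _ => (1 : ℝ)) (x, y)

open Classical in
/-- Relative entropy `∫ log(dμ/dν) dμ`, with value `+∞` when `μ` is not
absolutely continuous with respect to `ν` (or when the defining integral is
infinite); for `μ ≪ ν` it is computed as `∫ (g log g − g + 1) dν` with
`g = dμ/dν`, whose integrand is nonnegative. -/
noncomputable def relEntropy {α : Type*} [MeasurableSpace α] (μ ν : Measure α) : EReal :=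
  if μ ≪ ν then
    ((∫⁻ a, ENNReal.ofReal ((μ.rnDeriv ν a).toReal * Real.log (μ.rnDeriv ν a).toReal
        - (μ.rnDeriv ν a).toReal + 1) ∂ν : ℝ≥0∞) : EReal)
  else ⊤

/-- The rate function
`I₁(x) = inf { ∫ log(dμ/dν) dμ : μ prob. measure on [0,1], ∬ f dμ dμ = x }`
(the infimum of the empty set being `+∞`). -/
noncomputable def coprimeRate (ν : Measure ℝ) (x : ℝ) : EReal :=
  ⨅ (μ : Measure ℝ) (_ : IsProbabilityMeasure μ ∧ μ (Set.Icc 0 1) = 1 ∧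
      (∫ a, ∫ b, coprimeKernel a b ∂μ ∂μ) = x), relEntropy μ ν

open MeasureTheory ProbabilityTheory Filter Real
open scoped ENNReal

namespace LDP
open Topology

/-- Variational form of `relEntropy μ ν ≤ c`. -/
def VarLe {α : Type*} [MeasurableSpace α] (μ ν : Measure α) (c : ℝ) : Prop :=
  ∀ φ : α → ℝ, Measurable φ → (∃ M, ∀ x, |φ x| ≤ M) →
    ∫ x, φ x ∂μ ≤ c + ∫ x, (Real.exp (φ x) - 1) ∂ν

lemma young (g φ : ℝ) (hg : 0 ≤ g) :
    g * φ ≤ (g * Real.log g - g + 1) + (Real.exp φ - 1) := by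
  rcases hg.eq_or_lt with h | h
  · subst h; simp; positivity
  · have := Real.add_one_le_exp (φ - Real.log g)
    rw [Real.exp_sub, Real.exp_log h, le_div_iff₀ h] at this
    nlinarith

lemma kl_nonneg (g : ℝ) (hg : 0 ≤ g) : 0 ≤ g * Real.log g - g + 1 := by
  have := young g 0 hg
  simpa using this

lemma integrable_bdd {α : Type*} [MeasurableSpace α] {μ : Measure α} [IsFiniteMeasure μ]
    {φ : α → ℝ} (hφ : Measurable φ) {M : ℝ} (hM : ∀ x, |φ x| ≤ M) : Integrable φ μ :=
  Integrable.of_bound hφ.aestronglyMeasurable M (Eventually.of_forall (by simpa using hM))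

lemma integrable_exp_bdd {α : Type*} [MeasurableSpace α] {μ : Measure α} [IsFiniteMeasure μ]
    {φ : α → ℝ} (hφ : Measurable φ) {M : ℝ} (hM : ∀ x, |φ x| ≤ M) :
    Integrable (fun x => Real.exp (φ x) - 1) μ := by
  refine Integrable.sub (integrable_bdd (M := Real.exp M) (by fun_prop) fun x => ?_)
    (integrable_const _)
  rw [abs_of_pos (Real.exp_pos _)]
  exact Real.exp_le_exp.2 ((le_abs_self _).trans (hM x))

lemma var_of_relEntropy {α : Type*} [MeasurableSpace α] {μ ν : Measure α}
    [IsProbabilityMeasure μ] [IsProbabilityMeasure ν] {c : ℝ}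
    (h : relEntropy μ ν ≤ (c : EReal)) : VarLe μ ν c := by
  intro φ hφ ⟨M, hM⟩
  unfold relEntropy at h
  split_ifs at h with hac
  swap
  · simp at h
  set g : α → ℝ := fun a => (μ.rnDeriv ν a).toReal with hg
  have hgm : Measurable g := (Measure.measurable_rnDeriv μ ν).ennreal_toReal
  have hc : 0 ≤ c := by
    have : (0 : EReal) ≤ c := le_trans (EReal.coe_ennreal_nonneg _) h
    exact_mod_cast this
  have h2 : (∫⁻ a, ENNReal.ofReal (g a * Real.log (g a) - g a + 1) ∂ν) ≤ ENNReal.ofReal c := by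
    rw [← EReal.coe_ennreal_le_coe_ennreal_iff, EReal.coe_ennreal_ofReal, max_eq_left hc]
    exact h
  have hkm : Measurable (fun a => g a * Real.log (g a) - g a + 1) := by fun_prop
  have hk0 : ∀ a, 0 ≤ g a * Real.log (g a) - g a + 1 := fun a => kl_nonneg _ ENNReal.toReal_nonneg
  have hki : Integrable (fun a => g a * Real.log (g a) - g a + 1) ν := by
    refine ⟨hkm.aestronglyMeasurable, ?_⟩
    rw [hasFiniteIntegral_iff_ofReal (Eventually.of_forall hk0)]
    exact h2.trans_lt ENNReal.ofReal_lt_top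
  have hkle : ∫ a, (g a * Real.log (g a) - g a + 1) ∂ν ≤ c := by
    rw [integral_eq_lintegral_of_nonneg_ae (Eventually.of_forall hk0) hkm.aestronglyMeasurable]
    exact ENNReal.toReal_le_of_le_ofReal hc h2
  have e1 : ∫ x, φ x ∂μ = ∫ x, g x * φ x ∂ν := by
    rw [← integral_rnDeriv_smul hac]; rfl
  have hi : Integrable (fun x => g x * φ x) ν := by
    have := (integrable_rnDeriv_smul_iff (μ := μ) (ν := ν) hac (f := φ)).2 (integrable_bdd hφ hM)
    exact this
  rw [e1]
  calc _ ≤ ∫ x, ((g x * Real.log (g x) - g x + 1) + (Real.exp (φ x) - 1)) ∂ν :=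
        integral_mono hi (hki.add (integrable_exp_bdd hφ hM))
          fun x => young _ _ ENNReal.toReal_nonneg
    _ = (∫ x, (g x * Real.log (g x) - g x + 1) ∂ν) + ∫ x, (Real.exp (φ x) - 1) ∂ν :=
        integral_add hki (integrable_exp_bdd hφ hM)
    _ ≤ _ := by linarith

/-- bound on sets -/
lemma VarLe.set {α : Type*} [MeasurableSpace α] {μ ν : Measure α}
    [IsProbabilityMeasure μ] [IsProbabilityMeasure ν] {c : ℝ} (h : VarLe μ ν c)
    (E : Set α) (hE : MeasurableSet E) (l : ℝ) :
    l * μ.real E ≤ c + (Real.exp l - 1) * ν.real E := by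
  classical
  have := h (E.indicator fun _ => l) (measurable_const.indicator hE) ⟨|l|, fun x => by
    by_cases hx : x ∈ E <;> simp [hx]⟩
  rw [integral_indicator_const _ hE] at this
  have e : (fun x => Real.exp (E.indicator (fun _ => l) x) - 1)
      = E.indicator fun _ => (Real.exp l - 1) := by
    ext x; by_cases hx : x ∈ E <;> simp [hx]
  rw [e, integral_indicator_const _ hE] at this
  simpa [mul_comm] using this

lemma VarLe.ac {α : Type*} [MeasurableSpace α] {μ ν : Measure α}
    [IsProbabilityMeasure μ] [IsProbabilityMeasure ν] {c : ℝ} (h : VarLe μ ν c) : μ ≪ ν := by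
  refine Measure.AbsolutelyContinuous.mk fun E hE h0 => ?_
  by_contra hne
  have hpos : 0 < μ.real E := by
    rw [measureReal_def]; exact ENNReal.toReal_pos hne (measure_ne_top _ _)
  have := h.set E hE ((c + 1) / μ.real E)
  rw [div_mul_cancel₀ _ hpos.ne'] at this
  simp [measureReal_def, h0] at this
  linarith

lemma relEntropy_of_var {α : Type*} [MeasurableSpace α] {μ ν : Measure α}
    [IsProbabilityMeasure μ] [IsProbabilityMeasure ν] {c : ℝ}
    (h : VarLe μ ν c) : relEntropy μ ν ≤ (c : EReal) := by
  have hac := h.ac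
  have hc : 0 ≤ c := by
    have := h.set ∅ MeasurableSet.empty 0
    simpa using this
  unfold relEntropy
  rw [if_pos hac]
  set g : α → ℝ := fun a => (μ.rnDeriv ν a).toReal with hg
  have hgm : Measurable g := (Measure.measurable_rnDeriv μ ν).ennreal_toReal
  have hg0 : ∀ a, 0 ≤ g a := fun a => ENNReal.toReal_nonneg
  suffices h2 : (∫⁻ a, ENNReal.ofReal (g a * Real.log (g a) - g a + 1) ∂ν)
      ≤ ENNReal.ofReal c by
    rw [← EReal.coe_ennreal_le_coe_ennreal_iff, EReal.coe_ennreal_ofReal, max_eq_left hc] at h2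
    exact h2
  let φ : ℕ → α → ℝ := fun j a =>
    if g a = 0 then -(j : ℝ) else max (-(j : ℝ)) (min j (Real.log (g a)))
  have hφm : ∀ j, Measurable (φ j) := fun j =>
    Measurable.ite (hgm (measurableSet_singleton 0)) measurable_const (by fun_prop)
  have hφb : ∀ j a, |φ j a| ≤ j := by
    intro j a
    have hj : (0 : ℝ) ≤ j := Nat.cast_nonneg j
    simp only [φ]
    split_ifs
    · simp
    · rw [abs_le]
      exact ⟨le_max_left _ _, max_le (by linarith) (min_le_left _ _)⟩
  have hh0 : ∀ j a, 0 ≤ g a * φ j a - (Real.exp (φ j a) - 1) := by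
    intro j a
    have hj : (0 : ℝ) ≤ j := Nat.cast_nonneg j
    have key : Real.exp (φ j a) * φ j a ≤ g a * φ j a ∨ g a = 0 := by
      by_cases hz : g a = 0
      · right; exact hz
      left
      have hpos : 0 < g a := lt_of_le_of_ne (hg0 a) (Ne.symm hz)
      have hd : φ j a = max (-(j : ℝ)) (min j (Real.log (g a))) := by simp [φ, hz]
      rcases le_total 0 (Real.log (g a)) with h0 | h0
      · have h1 : 0 ≤ φ j a := by rw [hd]; exact le_max_of_le_right (le_min hj h0)
        have h2 : φ j a ≤ Real.log (g a) := by
          rw [hd]; exact max_le (by linarith) (min_le_right _ _)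
        have : Real.exp (φ j a) ≤ g a := by
          rw [← Real.exp_log hpos]; exact Real.exp_le_exp.2 h2
        exact mul_le_mul_of_nonneg_right this h1
      · have h1 : φ j a ≤ 0 := by
          rw [hd]; exact max_le (by linarith) (min_le_of_right_le h0)
        have h2 : Real.log (g a) ≤ φ j a := by
          rw [hd]; exact le_max_of_le_right (le_min (by linarith) le_rfl)
        have : g a ≤ Real.exp (φ j a) := by
          conv_lhs => rw [← Real.exp_log hpos]
          exact Real.exp_le_exp.2 h2
        exact mul_le_mul_of_nonpos_right this h1
    rcases key with key | key
    · have := kl_nonneg (Real.exp (φ j a)) (Real.exp_pos _).le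
      rw [Real.log_exp] at this
      linarith
    · have : φ j a = -(j : ℝ) := by simp [φ, key]
      rw [this, key]
      have := Real.exp_le_one_iff.2 (by linarith : -(j : ℝ) ≤ 0)
      linarith
  have hlim : ∀ a, Tendsto (fun j : ℕ => g a * φ j a - (Real.exp (φ j a) - 1)) atTop
      (𝓝 (g a * Real.log (g a) - g a + 1)) := by
    intro a
    by_cases hz : g a = 0
    · have : (fun j : ℕ => g a * φ j a - (Real.exp (φ j a) - 1))
          = fun j : ℕ => 1 - Real.exp (-(j : ℝ)) := by
        ext j; simp [φ, hz]
      rw [this, hz]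
      have h3 : Tendsto (fun j : ℕ => Real.exp (-(j : ℝ))) atTop (𝓝 0) :=
        Real.tendsto_exp_neg_atTop_nhds_zero.comp tendsto_natCast_atTop_atTop
      simpa using h3.const_sub 1
    · have hpos : 0 < g a := lt_of_le_of_ne (hg0 a) (Ne.symm hz)
      obtain ⟨N, hN⟩ := exists_nat_ge |Real.log (g a)|
      refine tendsto_const_nhds.congr' ?_
      filter_upwards [eventually_ge_atTop N] with j hj
      have hj' : |Real.log (g a)| ≤ j := hN.trans (by exact_mod_cast hj)
      have : φ j a = Real.log (g a) := by
        simp only [φ, hz, if_false]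
        rw [min_eq_right (abs_le.1 hj').2, max_eq_right (abs_le.1 hj').1]
      rw [this, Real.exp_log hpos]; ring
  have hIntg : ∀ j, ∫⁻ a, ENNReal.ofReal (g a * φ j a - (Real.exp (φ j a) - 1)) ∂ν
      ≤ ENNReal.ofReal c := by
    intro j
    have hi : Integrable (fun x => g x * φ j x) ν :=
      (integrable_rnDeriv_smul_iff (μ := μ) (ν := ν) hac (f := φ j)).2
        (integrable_bdd (hφm j) (hφb j))
    have he := integrable_exp_bdd (μ := ν) (hφm j) (hφb j)
    have hs : Integrable (fun x => g x * φ j x - (Real.exp (φ j x) - 1)) ν := hi.sub he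
    rw [← ofReal_integral_eq_lintegral_ofReal hs (Eventually.of_forall (hh0 j))]
    apply ENNReal.ofReal_le_ofReal
    have e1 : ∫ x, φ j x ∂μ = ∫ x, g x * φ j x ∂ν := by
      rw [← integral_rnDeriv_smul hac]; rfl
    have := h (φ j) (hφm j) ⟨_, hφb j⟩
    have e2 := integral_sub hi he
    rw [e2]
    linarith
  calc _ = ∫⁻ a, liminf (fun j : ℕ => ENNReal.ofReal (g a * φ j a - (Real.exp (φ j a) - 1)))
        atTop ∂ν := by
        refine lintegral_congr fun a => ?_
        exact ((ENNReal.continuous_ofReal.tendsto _).comp (hlim a)).liminf_eq.symm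
    _ ≤ liminf (fun j : ℕ => ∫⁻ a, ENNReal.ofReal (g a * φ j a - (Real.exp (φ j a) - 1)) ∂ν)
        atTop := lintegral_liminf_le fun j => by
          have := hφm j
          fun_prop
    _ ≤ _ := by
        refine liminf_le_of_le (by isBoundedDefault) fun b hb => ?_
        obtain ⟨j, hj⟩ := hb.exists
        exact hj.trans (hIntg j)

lemma var_iff {α : Type*} [MeasurableSpace α] {μ ν : Measure α}
    [IsProbabilityMeasure μ] [IsProbabilityMeasure ν] {c : ℝ} :
    relEntropy μ ν ≤ (c : EReal) ↔ VarLe μ ν c := ⟨var_of_relEntropy, relEntropy_of_var⟩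

end LDP

open MeasureTheory ProbabilityTheory Filter Real
open scoped ENNReal

namespace LDP
open Topology

/-- a finitely additive set function controlled by `ν` is a measure -/
lemma exists_measure {α : Type*} [MeasurableSpace α] (ν : Measure α) [IsProbabilityMeasure ν]
    (c : ℝ) (L : Set α → ℝ) (h0 : ∀ E, 0 ≤ L E) (h1 : L Set.univ = 1)
    (hadd : ∀ E F, MeasurableSet E → MeasurableSet F → Disjoint E F → L (E ∪ F) = L E + L F)
    (hb : ∀ E, MeasurableSet E → ∀ l : ℝ, l * L E ≤ c + (Real.exp l - 1) * ν.real E) :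
    ∃ μ : Measure α, IsProbabilityMeasure μ ∧ ∀ E, MeasurableSet E → μ.real E = L E := by
  have hemp : L ∅ = 0 := by
    have := hadd ∅ ∅ MeasurableSet.empty MeasurableSet.empty (by simp)
    simp at this; exact this
  have hc : 0 ≤ c := by simpa using hb ∅ MeasurableSet.empty 0
  have hsum : ∀ E : ℕ → Set α, (∀ i, MeasurableSet (E i)) → Pairwise (Function.onFun Disjoint E) →
      HasSum (fun i => L (E i)) (L (⋃ i, E i)) := by
    intro E hE hd
    have hun : ∀ n, (⋃ i, E (i + n)) = E n ∪ ⋃ i, E (i + (n + 1)) := by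
      intro n
      have := sup_iSup_nat_succ (fun i => E (i + n))
      simp only [zero_add, Set.sup_eq_union, Set.iSup_eq_iUnion] at this
      rw [← this]
      simp only [add_assoc, add_comm 1]
    have hdis : ∀ n, Disjoint (E n) (⋃ i, E (i + (n + 1))) := by
      intro n
      rw [Set.disjoint_iUnion_right]
      intro i
      exact hd (by omega)
    have gen : ∀ K : Set α → ℝ, (∀ E F, MeasurableSet E → MeasurableSet F → Disjoint E F →
        K (E ∪ F) = K E + K F) → ∀ n, K (⋃ i, E i)
          = (∑ i ∈ Finset.range n, K (E i)) + K (⋃ i, E (i + n)) := by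
      intro K hK n
      induction n with
      | zero => simp
      | succ n ih =>
        rw [ih, Finset.sum_range_succ, hun n, hK _ _ (hE n) (.iUnion fun i => hE _) (hdis n)]
        ring
    have hνt : Tendsto (fun n => ν.real (⋃ i, E (i + n))) atTop (𝓝 0) := by
      have hs : HasSum (fun i => ν.real (E i)) (ν.real (⋃ i, E i)) := by
        have e := measure_iUnion (μ := ν) hd hE
        rw [measureReal_def, e]
        have := ENNReal.hasSum_toReal (f := fun i => ν (E i)) (by rw [← e]; exact measure_ne_top _ _)
        rwa [← ENNReal.tsum_toReal_eq (fun i => measure_ne_top _ _)] at this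
      have h2 := hs.tendsto_sum_nat.const_sub (ν.real (⋃ i, E i))
      rw [sub_self] at h2
      refine h2.congr fun n => ?_
      have := gen ν.real (fun A B hA hB hAB => measureReal_union hAB hB) n
      linarith
    rw [hasSum_iff_tendsto_nat_of_nonneg (fun i => h0 _)]
    have hLt : Tendsto (fun n => L (⋃ i, E (i + n))) atTop (𝓝 0) := by
      rw [Metric.tendsto_atTop]
      intro ε hε
      set l : ℝ := 2 * (c + 1) / ε with hl
      have hlpos : 0 < l := by positivity
      have h3 := hνt.const_mul (Real.exp l - 1)
      rw [mul_zero] at h3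
      obtain ⟨N, hN⟩ := eventually_atTop.1 (h3.eventually (gt_mem_nhds (zero_lt_one)))
      refine ⟨N, fun n hn => ?_⟩
      have h4 := hN n hn
      have h5 := hb (⋃ i, E (i + n)) (.iUnion fun i => hE _) l
      rw [Real.dist_eq, sub_zero, abs_of_nonneg (h0 _)]
      have h6 : l * L (⋃ i, E (i + n)) < l * ε := by
        have : l * ε = 2 * (c + 1) := by rw [hl]; field_simp
        linarith
      exact lt_of_mul_lt_mul_left h6 hlpos.le
    have h7 := hLt.const_sub (L (⋃ i, E i))
    rw [sub_zero] at h7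
    refine h7.congr fun n => ?_
    have := gen L hadd n
    linarith
  let μ : Measure α := Measure.ofMeasurable (fun E _ => ENNReal.ofReal (L E)) (by simp [hemp])
    (by
      intro E hE hd
      have := hsum E hE hd
      rw [← this.tsum_eq, ENNReal.ofReal_tsum_of_nonneg (fun i => h0 _) this.summable])
  have hμ : ∀ E, MeasurableSet E → μ E = ENNReal.ofReal (L E) := fun E hE =>
    Measure.ofMeasurable_apply E hE
  refine ⟨μ, ⟨by rw [hμ _ MeasurableSet.univ, h1]; simp⟩, fun E hE => ?_⟩
  rw [measureReal_def, hμ E hE, ENNReal.toReal_ofReal (h0 E)]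

lemma var_of_simple {α : Type*} [MeasurableSpace α] {μ ν : Measure α}
    [IsProbabilityMeasure μ] [IsProbabilityMeasure ν] {c : ℝ}
    (h : ∀ φ : SimpleFunc α ℝ, ∫ x, φ x ∂μ ≤ c + ∫ x, (Real.exp (φ x) - 1) ∂ν) :
    VarLe μ ν c := by
  intro φ hφ ⟨M, hM⟩
  let s : ℕ → SimpleFunc α ℝ := fun n => SimpleFunc.approxOn φ hφ Set.univ 0 trivial n
  have hsb : ∀ n x, |s n x| ≤ M + M := fun n x => by
    have := SimpleFunc.norm_approxOn_zero_le hφ (s := Set.univ) trivial x n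
    simp only [Real.norm_eq_abs] at this
    linarith [hM x]
  have hst : ∀ x, Tendsto (fun n => s n x) atTop (𝓝 (φ x)) := fun x =>
    SimpleFunc.tendsto_approxOn hφ (Set.mem_univ _) (by simp)
  have t1 : Tendsto (fun n => ∫ x, s n x ∂μ) atTop (𝓝 (∫ x, φ x ∂μ)) :=
    tendsto_integral_of_dominated_convergence (fun _ => M + M)
      (fun n => (s n).measurable.aestronglyMeasurable) (integrable_const _)
      (fun n => Eventually.of_forall fun x => by simpa using hsb n x)
      (Eventually.of_forall hst)
  have t2 : Tendsto (fun n => ∫ x, (Real.exp (s n x) - 1) ∂ν) atTop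
      (𝓝 (∫ x, (Real.exp (φ x) - 1) ∂ν)) :=
    tendsto_integral_of_dominated_convergence (fun _ => Real.exp (M + M) + 1)
      (fun n => by
        have := (s n).measurable
        exact Measurable.aestronglyMeasurable (by fun_prop)) (integrable_const _)
      (fun n => Eventually.of_forall fun x => by
        rw [Real.norm_eq_abs]
        refine (abs_sub _ _).trans ?_
        rw [abs_of_pos (Real.exp_pos _), abs_one]
        gcongr
        exact (le_abs_self _).trans (hsb n x))
      (Eventually.of_forall fun x => ((Real.continuous_exp.tendsto _).comp (hst x)).sub_const 1)
  exact le_of_tendsto_of_tendsto' t1 (t2.const_add c) fun n => h (s n)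

lemma compact_limit {α ι : Type*} [MeasurableSpace α] (ν : Measure α) [IsProbabilityMeasure ν]
    (c : ℝ) (μ : ι → Measure α) (hp : ∀ m, IsProbabilityMeasure (μ m))
    (h : ∀ m, VarLe (μ m) ν c) (U : Ultrafilter ι) :
    ∃ μ' : Measure α, IsProbabilityMeasure μ' ∧ VarLe μ' ν c ∧
      ∀ E, MeasurableSet E → Tendsto (fun m => (μ m).real E) U (𝓝 (μ'.real E)) := by
  have hex : ∀ E : Set α, ∃ l : ℝ, 0 ≤ l ∧ Tendsto (fun m => (μ m).real E) U (𝓝 l) := by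
    intro E
    obtain ⟨l, hl, hl2⟩ := (isCompact_Icc (a := (0 : ℝ)) (b := 1)).ultrafilter_le_nhds
      (U.map fun m => (μ m).real E) (by
        rw [le_principal_iff, Ultrafilter.coe_map]
        exact Filter.mem_map.2 <| Filter.univ_mem' fun m => ⟨measureReal_nonneg, measureReal_le_one⟩)
    exact ⟨l, hl.1, hl2⟩
  choose L hL0 hL using hex
  obtain ⟨μ', hμp, hμ⟩ := exists_measure ν c L hL0
    (tendsto_nhds_unique (hL Set.univ) (by simp))
    (fun E F hE hF hEF => tendsto_nhds_unique (hL _) (by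
      simp_rw [fun m => measureReal_union (μ := μ m) hEF hF]
      exact (hL E).add (hL F)))
    (fun E hE l => le_of_tendsto' ((hL E).const_mul l) fun m => (h m).set E hE l)
  refine ⟨μ', hμp, ?_, fun E hE => by rw [hμ E hE]; exact hL E⟩
  refine var_of_simple fun φ => ?_
  have hb : ∃ M, ∀ x, |φ x| ≤ M := by
    obtain ⟨M, hM⟩ := φ.exists_forall_norm_le
    exact ⟨M, hM⟩
  have hi : ∀ (ρ : Measure α) [IsProbabilityMeasure ρ], ∫ x, φ x ∂ρ
      = ∑ y ∈ φ.range, ρ.real (φ ⁻¹' {y}) * y := by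
    intro ρ _
    have := SimpleFunc.integral_eq_sum (μ := ρ) φ (by
      obtain ⟨M, hM⟩ := hb
      exact integrable_bdd φ.measurable hM)
    simpa using this
  have t : Tendsto (fun m => ∫ x, φ x ∂(μ m)) U (𝓝 (∫ x, φ x ∂μ')) := by
    rw [hi μ']
    have := fun m => hi (μ m)
    simp_rw [this]
    refine tendsto_finsetSum _ fun y _ => Tendsto.mul_const _ ?_
    rw [hμ _ (φ.measurableSet_preimage _)]
    exact hL _
  exact le_of_tendsto' t fun m => h m φ φ.measurable hb

end LDP

open MeasureTheory ProbabilityTheory Filter Real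
open scoped ENNReal

namespace LDP
open Topology

lemma measurable_digit (i : ℕ) : Measurable (digit i) := by
  unfold digit
  have h1 : Measurable fun a : ℝ => ⌊a * 2 ^ (i + 1)⌋ :=
    Int.measurable_floor.comp (by fun_prop)
  exact (measurable_from_top (f := fun z : ℤ => z.toNat % 2)).comp h1

/-- the first `k` digits -/
noncomputable def code (k : ℕ) (a : ℝ) : Fin k → Bool := fun j => decide (digit j a = 1)

lemma measurable_code (k : ℕ) : Measurable (code k) := by
  refine measurable_pi_lambda _ fun j => ?_
  exact (measurable_from_top (f := fun z : ℕ => decide (z = 1))).comp (measurable_digit j)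

/-- truncated kernel -/
def ker (k : ℕ) (s t : Fin k → Bool) : ℝ :=
  if ∀ j, ¬ (s j = true ∧ t j = true) then 1 else 0

/-- truncated functional -/
def Fk (k : ℕ) (τ : (Fin k → Bool) → ℝ) : ℝ := ∑ s, ∑ t, ker k s t * τ s * τ t

/-- cylinder probabilities -/
noncomputable def cyl (k : ℕ) (μ : Measure ℝ) (s : Fin k → Bool) : ℝ := μ.real (code k ⁻¹' {s})

/-- full functional -/
noncomputable def FF (μ : Measure ℝ) : ℝ := ∫ a, ∫ b, coprimeKernel a b ∂μ ∂μ

/-- weights of a digit -/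
noncomputable def wt (j : ℕ) (b : Bool) : ℝ :=
  if b then (Nat.nth Nat.Prime j : ℝ)⁻¹ else 1 - (Nat.nth Nat.Prime j : ℝ)⁻¹

/-- weights of a cylinder -/
noncomputable def wk (k : ℕ) (s : Fin k → Bool) : ℝ := ∏ j : Fin k, wt j (s j)

/-- hypothesis on `ν` -/
def CylHyp (ν : Measure ℝ) : Prop := ∀ (k : ℕ) (b : ℕ → Fin 2),
      ν {a | ∀ j < k, digit j a = (b j : ℕ)} =
        ∏ j ∈ Finset.range k,
          (if b j = 1 then ((Nat.nth Nat.Prime j : ℝ≥0∞))⁻¹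
            else 1 - ((Nat.nth Nat.Prime j : ℝ≥0∞))⁻¹)

lemma prime_ge (j : ℕ) : (j : ℝ) + 2 ≤ Nat.nth Nat.Prime j := by
  exact_mod_cast Nat.add_two_le_nth_prime j

lemma wt_pos (j : ℕ) (b : Bool) : 0 < wt j b := by
  have h := prime_ge j
  have hj : (0 : ℝ) ≤ j := Nat.cast_nonneg j
  unfold wt
  split_ifs
  · apply inv_pos.2; linarith
  · have : (Nat.nth Nat.Prime j : ℝ)⁻¹ < 1 := inv_lt_one_of_one_lt₀ (by linarith)
    linarith

lemma wk_pos (k : ℕ) (s : Fin k → Bool) : 0 < wk k s := Finset.prod_pos fun _ _ => wt_pos _ _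

lemma cyl_nu {ν : Measure ℝ} (hν : CylHyp ν) (k : ℕ) (s : Fin k → Bool) :
    cyl k ν s = wk k s := by
  let b : ℕ → Fin 2 := fun j => if h : j < k then (if s ⟨j, h⟩ then 1 else 0) else 0
  have hset : code k ⁻¹' {s} = {a | ∀ j < k, digit j a = (b j : ℕ)} := by
    ext a
    simp only [Set.mem_preimage, Set.mem_singleton_iff, Set.mem_ofPred_eq, funext_iff, code]
    constructor
    · intro h j hj
      have := h ⟨j, hj⟩
      have h2 : digit j a < 2 := Nat.mod_lt _ (by norm_num)
      simp only [b, hj, dif_pos]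
      cases hs : s ⟨j, hj⟩ <;> simp [hs] at this ⊢ <;> omega
    · intro h j
      have := h j j.2
      simp only [b, j.2, dif_pos] at this
      cases hs : s j <;> simp [hs] at this ⊢ <;> omega
  unfold cyl wk
  rw [hset, measureReal_def, hν, ENNReal.toReal_prod, Finset.prod_range]
  refine Finset.prod_congr rfl fun j _ => ?_
  have h := prime_ge j
  have hj : (0 : ℝ) ≤ (j : ℕ) := Nat.cast_nonneg _
  have hp : (1 : ℝ≥0∞) ≤ (Nat.nth Nat.Prime j : ℝ≥0∞) := by
    exact_mod_cast (by have := Nat.add_two_le_nth_prime j; omega : 1 ≤ Nat.nth Nat.Prime j)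
  unfold wt
  cases hs : s j <;> simp [b, hs]
  rw [ENNReal.toReal_sub_of_le (ENNReal.inv_le_one.2 hp) (by simp)]
  simp

lemma integral_code (k : ℕ) (μ : Measure ℝ) [IsProbabilityMeasure μ] (g : (Fin k → Bool) → ℝ) :
    ∫ b, g (code k b) ∂μ = ∑ t, cyl k μ t * g t := by
  have hm := measurable_code k
  have := integral_map (μ := μ) hm.aemeasurable (f := g)
    (measurable_of_finite g).aestronglyMeasurable
  have hpm := Measure.isProbabilityMeasure_map (μ := μ) hm.aemeasurable
  rw [← this, integral_fintype Integrable.of_finite]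
  refine Finset.sum_congr rfl fun t _ => ?_
  rw [map_measureReal_apply hm (measurableSet_singleton t)]
  rfl

lemma wk_sum_mul (k : ℕ) (i : Fin k) : ∑ s, wk k s * (if s i = true then 1 else 0) = wt i true := by
  have e : ∀ s : Fin k → Bool, wk k s * (if s i = true then 1 else 0)
      = ∏ j : Fin k, (wt j (s j) * (if j = i then (if s j = true then 1 else 0) else 1)) := by
    intro s
    rw [Finset.prod_mul_distrib, Finset.prod_ite_eq' Finset.univ i]
    simp [wk]
  simp_rw [e]
  have := Fintype.prod_sum (fun (j : Fin k) (b : Bool) =>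
    wt j b * (if j = i then (if b = true then (1 : ℝ) else 0) else 1))
  rw [← this, Finset.prod_eq_single i]
  · simp
  · intro j _ hj
    simp [hj, wt]
  · simp

lemma wk_sum (k : ℕ) : ∑ s, wk k s = 1 := by
  have := Fintype.prod_sum (fun (j : Fin k) (b : Bool) => wt j b)
  unfold wk
  rw [← this]
  exact Finset.prod_eq_one fun j _ => by simp [wt]

lemma nu_digit {ν : Measure ℝ} [IsProbabilityMeasure ν] (hν : CylHyp ν) (i : ℕ) :
    ν.real {a | digit i a = 1} = (Nat.nth Nat.Prime i : ℝ)⁻¹ := by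
  have h1 := integral_code (i + 1) ν (fun s => if s (Fin.last i) = true then 1 else 0)
  simp_rw [cyl_nu hν] at h1
  rw [wk_sum_mul] at h1
  have h2 : (fun b => if code (i + 1) b (Fin.last i) = true then (1 : ℝ) else 0)
      = ({a | digit i a = 1} : Set ℝ).indicator 1 := by
    ext b
    simp [code, Set.indicator_apply]
  have hmd : MeasurableSet {a | digit i a = 1} := measurable_digit i (measurableSet_singleton 1)
  have h3 := integral_indicator_one (μ := ν) hmd
  rw [h2] at h1
  rw [← h3]
  refine Eq.trans h1 ?_
  simp [wt]

/-- pairs sharing a late digit -/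
def Dset (k : ℕ) : Set (ℝ × ℝ) := {p | ∃ i, k ≤ i ∧ digit i p.1 = 1 ∧ digit i p.2 = 1}

lemma Dset_eq (k : ℕ) : Dset k = ⋃ i, {a | digit (i + k) a = 1} ×ˢ {a | digit (i + k) a = 1} := by
  ext p
  simp only [Dset, Set.mem_ofPred_eq, Set.mem_iUnion, Set.mem_prod]
  constructor
  · rintro ⟨i, hi, h⟩
    exact ⟨i - k, by rwa [Nat.sub_add_cancel hi]⟩
  · rintro ⟨i, h⟩
    exact ⟨i + k, by omega, h⟩

lemma mdig (i : ℕ) : MeasurableSet {a | digit i a = 1} :=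
  measurable_digit i (measurableSet_singleton 1)

lemma measurable_Dset (k : ℕ) : MeasurableSet (Dset k) := by
  rw [Dset_eq]
  exact .iUnion fun i => (mdig _).prod (mdig _)

/-- tail bound -/
noncomputable def rt (k : ℕ) : ℝ := ∑' i : ℕ, (((i + k : ℕ) : ℝ) ^ 2)⁻¹

lemma rt_tendsto : Tendsto rt atTop (𝓝 0) :=
  tendsto_sum_nat_add fun i : ℕ => ((i : ℝ) ^ 2)⁻¹

lemma summ_sq : Summable fun i : ℕ => ((i : ℝ) ^ 2)⁻¹ :=
  Real.summable_nat_pow_inv.2 (by norm_num)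

lemma nu_Dset {ν : Measure ℝ} [IsProbabilityMeasure ν] (hν : CylHyp ν) (k : ℕ) (hk : 0 < k) :
    (ν.prod ν).real (Dset k) ≤ rt k := by
  have hs : Summable fun i : ℕ => (((i + k : ℕ) : ℝ) ^ 2)⁻¹ := (summable_nat_add_iff k).2 summ_sq
  have h0 : 0 ≤ rt k := tsum_nonneg fun i => by positivity
  refine ENNReal.toReal_le_of_le_ofReal h0 ?_
  rw [Dset_eq]
  refine (measure_iUnion_le _).trans ?_
  unfold rt
  rw [ENNReal.ofReal_tsum_of_nonneg (fun i => by positivity) hs]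
  refine ENNReal.tsum_le_tsum fun i => ?_
  rw [Measure.prod_prod]
  have h1 : ν {a | digit (i + k) a = 1} = ENNReal.ofReal ((Nat.nth Nat.Prime (i + k) : ℝ)⁻¹) := by
    rw [← nu_digit hν, ofReal_measureReal]
  rw [h1, ← ENNReal.ofReal_mul (by positivity)]
  apply ENNReal.ofReal_le_ofReal
  rw [← sq, inv_pow]
  have := prime_ge (i + k)
  have h3 : (0 : ℝ) < ((i + k : ℕ) : ℝ) := by exact_mod_cast (by omega)
  gcongr
  exact (Nat.le_add_right _ 2).trans (Nat.add_two_le_nth_prime _)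

lemma approx_bound {μ ν : Measure ℝ} [IsProbabilityMeasure μ] [IsProbabilityMeasure ν]
    (hν : CylHyp ν) (k : ℕ) (hk : 0 < k) {c : ℝ} (h : VarLe μ ν c) (l m : ℝ) (hl : 0 < l)
    (hm : 0 < m) :
    |Fk k (cyl k μ) - FF μ| ≤ (c + (Real.exp l - 1) * ((c + (Real.exp m - 1) * rt k) / m)) / l := by
  have hD := measurable_Dset k
  have hDa : ∀ a, MeasurableSet (Prod.mk a ⁻¹' Dset k) := fun a => measurable_prodMk_left hD
  have hmea : ∀ (ρ : Measure ℝ) [IsProbabilityMeasure ρ],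
      Measurable fun a => ρ.real (Prod.mk a ⁻¹' Dset k) := fun ρ _ =>
    (measurable_measure_prodMk_left hD).ennreal_toReal
  have hprod : ∀ (ρ κ : Measure ℝ) [IsProbabilityMeasure ρ] [IsProbabilityMeasure κ],
      ∫ a, κ.real (Prod.mk a ⁻¹' Dset k) ∂ρ = (ρ.prod κ).real (Dset k) := by
    intro ρ κ _ _
    rw [measureReal_def, Measure.prod_apply hD]
    rw [integral_eq_lintegral_of_nonneg_ae (Eventually.of_forall fun _ => measureReal_nonneg)
      (hmea κ).aestronglyMeasurable]
    congr 1
    exact lintegral_congr fun a => by rw [ofReal_measureReal]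
  have habs : ∀ (ρ : Measure ℝ) [IsProbabilityMeasure ρ] (a : ℝ),
      |ρ.real (Prod.mk a ⁻¹' Dset k)| ≤ 1 := fun ρ _ a => by
    rw [abs_of_nonneg measureReal_nonneg]; exact measureReal_le_one
  -- second Legendre step
  have s2 : m * ∫ a, ν.real (Prod.mk a ⁻¹' Dset k) ∂μ ≤ c + (Real.exp m - 1) * rt k := by
    have h1 := h (fun a => m * ν.real (Prod.mk a ⁻¹' Dset k)) ((hmea ν).const_mul m)
      ⟨m, fun a => by
        rw [abs_mul, abs_of_pos hm]
        nlinarith [habs ν a]⟩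
    rw [integral_const_mul] at h1
    refine h1.trans ?_
    gcongr
    have h2 : ∫ a, (Real.exp m - 1) * ν.real (Prod.mk a ⁻¹' Dset k) ∂ν
        ≤ (Real.exp m - 1) * rt k := by
      rw [integral_const_mul, hprod]
      have : 0 ≤ Real.exp m - 1 := by linarith [Real.add_one_le_exp m]
      gcongr
      exact nu_Dset hν k hk
    refine le_trans ?_ h2
    refine integral_mono (integrable_exp_bdd ((hmea ν).const_mul m) (M := m) fun a => by
        rw [abs_mul, abs_of_pos hm]
        nlinarith [habs ν a])
      ((integrable_bdd (hmea ν) (habs ν)).const_mul _) fun a => ?_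
    have hc := convexOn_exp.2 (Set.mem_univ 0) (Set.mem_univ m)
      (sub_nonneg.2 (measureReal_le_one : ν.real (Prod.mk a ⁻¹' Dset k) ≤ 1)) measureReal_nonneg
      (sub_add_cancel 1 _)
    simp only [smul_eq_mul, mul_zero, zero_add, Real.exp_zero, mul_one] at hc
    simp only
    rw [mul_comm m]
    linarith
  have s1 : l * ∫ a, μ.real (Prod.mk a ⁻¹' Dset k) ∂μ
      ≤ c + (Real.exp l - 1) * ∫ a, ν.real (Prod.mk a ⁻¹' Dset k) ∂μ := by
    rw [← integral_const_mul, ← integral_const_mul]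
    have hi := (integrable_bdd (μ := μ) (hmea ν) (habs ν)).const_mul (Real.exp l - 1)
    calc _ ≤ ∫ a, (c + (Real.exp l - 1) * ν.real (Prod.mk a ⁻¹' Dset k)) ∂μ :=
          integral_mono ((integrable_bdd (hmea μ) (habs μ)).const_mul _)
            ((integrable_const _).add hi) fun a => h.set _ (hDa a) l
      _ = _ := by
          rw [integral_add (integrable_const _) hi]; simp
  -- comparison
  have hK : MeasurableSet {p : ℝ × ℝ | ∀ i : ℕ, ¬(digit i p.1 = 1 ∧ digit i p.2 = 1)} := by
    have : {p : ℝ × ℝ | ∀ i : ℕ, ¬(digit i p.1 = 1 ∧ digit i p.2 = 1)} = (Dset 0)ᶜ := by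
      ext p; simp [Dset]
    rw [this]; exact (measurable_Dset 0).compl
  have hkm : Measurable (Function.uncurry coprimeKernel) := by
    have : Function.uncurry coprimeKernel = Set.indicator
      {p : ℝ × ℝ | ∀ i : ℕ, ¬(digit i p.1 = 1 ∧ digit i p.2 = 1)} (fun _ => (1 : ℝ)) := by
      ext ⟨a, b⟩; rfl
    rw [this]; exact measurable_const.indicator hK
  have hkb : ∀ a b, 0 ≤ coprimeKernel a b ∧ coprimeKernel a b ≤ 1 := by
    intro a b
    unfold coprimeKernel Set.indicator
    split_ifs <;> simp
  have hkerm : Measurable (Function.uncurry fun a b => ker k (code k a) (code k b)) := by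
    have h1 := measurable_code k
    exact (measurable_of_finite (fun q : (Fin k → Bool) × (Fin k → Bool) => ker k q.1 q.2)).comp
      ((h1.comp measurable_fst).prodMk (h1.comp measurable_snd))
  have hkerb : ∀ s t, 0 ≤ ker k s t ∧ ker k s t ≤ 1 := by
    intro s t; unfold ker; split_ifs <;> simp
  have hcmp : ∀ a b, coprimeKernel a b ≤ ker k (code k a) (code k b) ∧
      ker k (code k a) (code k b) - coprimeKernel a b
        ≤ (Prod.mk a ⁻¹' Dset k).indicator (fun _ => (1 : ℝ)) b := by
    intro a b
    unfold coprimeKernel ker Set.indicator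
    by_cases h1 : ∀ i : ℕ, ¬(digit i a = 1 ∧ digit i b = 1)
    · have h2 : ∀ j : Fin k, ¬ (code k a j = true ∧ code k b j = true) := fun j => by
        simpa [code] using h1 j
      simp only [Set.mem_ofPred_eq, h1, h2]
      simp
      split_ifs <;> norm_num
    · by_cases h2 : ∀ j : Fin k, ¬ (code k a j = true ∧ code k b j = true)
      · have h3 : b ∈ Prod.mk a ⁻¹' Dset k := by
          push Not at h1
          obtain ⟨i, hi⟩ := h1
          refine ⟨i, ?_, hi⟩
          by_contra hlt
          push Not at hlt
          exact h2 ⟨i, hlt⟩ (by simpa [code] using hi)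
        rw [if_neg (by simpa using h1), if_pos h2, if_pos h3]
        norm_num
      · rw [if_neg (by simpa using h1), if_neg h2]
        simp
        split_ifs <;> norm_num
  have eF : Fk k (cyl k μ) = ∫ a, ∫ b, ker k (code k a) (code k b) ∂μ ∂μ := by
    have : ∀ a, ∫ b, ker k (code k a) (code k b) ∂μ = ∑ t, cyl k μ t * ker k (code k a) t :=
      fun a => integral_code k μ _
    simp_rw [this]
    rw [integral_code k μ (fun s => ∑ t, cyl k μ t * ker k s t)]
    unfold Fk
    refine Finset.sum_congr rfl fun s _ => ?_
    rw [Finset.mul_sum]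
    refine Finset.sum_congr rfl fun t _ => by ring
  have ib1 : ∀ a, Integrable (fun b => ker k (code k a) (code k b)) μ := fun a =>
    integrable_bdd (hkerm.comp measurable_prodMk_left) (M := 1) fun b => by
      rw [abs_of_nonneg (hkerb _ _).1]; exact (hkerb _ _).2
  have ib2 : ∀ a, Integrable (fun b => coprimeKernel a b) μ := fun a =>
    integrable_bdd (hkm.comp measurable_prodMk_left) (M := 1) fun b => by
      rw [abs_of_nonneg (hkb _ _).1]; exact (hkb _ _).2
  have ia1 : Integrable (fun a => ∫ b, ker k (code k a) (code k b) ∂μ) μ :=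
    integrable_bdd (hkerm.stronglyMeasurable.integral_prod_right).measurable (M := 1) fun a => by
      rw [abs_of_nonneg (integral_nonneg fun b => (hkerb _ _).1)]
      calc _ ≤ ∫ b, (1 : ℝ) ∂μ := integral_mono (ib1 a) (integrable_const _) fun b => (hkerb _ _).2
        _ = 1 := by simp
  have ia2 : Integrable (fun a => ∫ b, coprimeKernel a b ∂μ) μ :=
    integrable_bdd (hkm.stronglyMeasurable.integral_prod_right).measurable (M := 1) fun a => by
      rw [abs_of_nonneg (integral_nonneg fun b => (hkb _ _).1)]
      calc _ ≤ ∫ b, (1 : ℝ) ∂μ := integral_mono (ib2 a) (integrable_const _) fun b => (hkb _ _).2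
        _ = 1 := by simp
  have eD : Fk k (cyl k μ) - FF μ
      = ∫ a, ∫ b, (ker k (code k a) (code k b) - coprimeKernel a b) ∂μ ∂μ := by
    rw [eF, FF, ← integral_sub ia1 ia2]
    exact integral_congr_ae (Eventually.of_forall fun a => (integral_sub (ib1 a) (ib2 a)).symm)
  have hnn : 0 ≤ Fk k (cyl k μ) - FF μ := by
    rw [eD]
    exact integral_nonneg fun a => integral_nonneg fun b => sub_nonneg.2 (hcmp a b).1
  have hup : Fk k (cyl k μ) - FF μ ≤ ∫ a, μ.real (Prod.mk a ⁻¹' Dset k) ∂μ := by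
    rw [eD]
    refine integral_mono ?_ (integrable_bdd (hmea μ) (habs μ)) fun a => ?_
    · have := ia1.sub ia2
      refine this.congr (Eventually.of_forall fun a => (integral_sub (ib1 a) (ib2 a)).symm)
    · calc _ ≤ ∫ b, (Prod.mk a ⁻¹' Dset k).indicator (fun _ => (1 : ℝ)) b ∂μ :=
            integral_mono ((ib1 a).sub (ib2 a)) ((integrable_const _).indicator (hDa a))
              fun b => (hcmp a b).2
        _ = _ := by rw [integral_indicator_const _ (hDa a)]; simp
  rw [abs_of_nonneg hnn]
  refine hup.trans ?_
  rw [le_div_iff₀ hl, mul_comm]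
  refine s1.trans ?_
  have : 0 ≤ Real.exp l - 1 := by linarith [Real.add_one_le_exp l]
  gcongr
  rw [le_div_iff₀ hm, mul_comm]
  exact s2

lemma approx_unif {ν : Measure ℝ} [IsProbabilityMeasure ν]
    (hν : CylHyp ν) (c : ℝ) {ε : ℝ} (hε : 0 < ε) :
    ∃ k0, ∀ k ≥ k0, ∀ μ : Measure ℝ, IsProbabilityMeasure μ → VarLe μ ν c →
      |Fk k (cyl k μ) - FF μ| ≤ ε := by
  set l : ℝ := 2 * (|c| + 1) / ε with hl
  have hlpos : 0 < l := by positivity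
  have hE : 0 < Real.exp l - 1 := by linarith [Real.add_one_le_exp l]
  set m : ℝ := 2 * (Real.exp l - 1) * (|c| + 1) with hm
  have hmpos : 0 < m := by positivity
  have hEm : 0 < Real.exp m - 1 := by linarith [Real.add_one_le_exp m]
  have h3 := rt_tendsto.const_mul (Real.exp m - 1)
  rw [mul_zero] at h3
  obtain ⟨N, hN⟩ := eventually_atTop.1 (h3.eventually (gt_mem_nhds (zero_lt_one)))
  refine ⟨N + 1, fun k hk μ hμ h => ?_⟩
  refine (approx_bound hν k (by omega) h l m hlpos hmpos).trans ?_
  have h4 := hN k (by omega)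
  have h5 : (Real.exp l - 1) * ((c + (Real.exp m - 1) * rt k) / m) ≤ 1 := by
    rw [← mul_div_assoc, div_le_one hmpos, hm]
    have : c + (Real.exp m - 1) * rt k ≤ 2 * (|c| + 1) := by
      linarith [le_abs_self c, abs_nonneg c]
    nlinarith
  rw [div_le_iff₀ hlpos]
  have : ε * l = 2 * (|c| + 1) := by rw [hl]; field_simp
  linarith [le_abs_self c, abs_nonneg c]

lemma closed_K {ν : Measure ℝ} [IsProbabilityMeasure ν] (hν : CylHyp ν) (c : ℝ) :
    IsClosed {x : ℝ | ∃ μ : Measure ℝ, IsProbabilityMeasure μ ∧ VarLe μ ν c ∧ FF μ = x} := by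
  rw [isClosed_iff_ultrafilter]
  intro x U hU hs
  obtain ⟨y0, μ0, hμ0, hv0, -⟩ := U.nonempty_of_mem hs
  have hch : ∀ y : ℝ, ∃ μ : Measure ℝ, IsProbabilityMeasure μ ∧ VarLe μ ν c ∧
      (y ∈ {x : ℝ | ∃ μ : Measure ℝ, IsProbabilityMeasure μ ∧ VarLe μ ν c ∧ FF μ = x} →
        FF μ = y) := by
    intro y
    by_cases hy : y ∈ {x : ℝ | ∃ μ : Measure ℝ, IsProbabilityMeasure μ ∧ VarLe μ ν c ∧ FF μ = x}
    · obtain ⟨μ, h1, h2, h3⟩ := hy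
      exact ⟨μ, h1, h2, fun _ => h3⟩
    · exact ⟨μ0, hμ0, hv0, fun h => absurd h hy⟩
  choose M hMp hMv hMF using hch
  obtain ⟨μ', hp', hv', ht⟩ := compact_limit ν c M hMp hMv U
  refine ⟨μ', hp', hv', ?_⟩
  refine eq_of_forall_dist_le fun ε hε => ?_
  obtain ⟨k, hk⟩ := approx_unif hν c (half_pos hε)
  have hk := hk k le_rfl
  have t1 : Tendsto (fun y => Fk k (cyl k (M y))) U (𝓝 (Fk k (cyl k μ'))) := by
    unfold Fk
    refine tendsto_finsetSum _ fun s _ => tendsto_finsetSum _ fun t _ => ?_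
    have hh : ∀ s, Tendsto (fun y => cyl k (M y) s) U (𝓝 (cyl k μ' s)) := fun s =>
      ht _ (measurable_code k (measurableSet_singleton s))
    exact ((hh s).const_mul _).mul (hh t)
  have t2 : Tendsto (fun y => |Fk k (cyl k (M y)) - y|) U (𝓝 |Fk k (cyl k μ') - x|) :=
    (t1.sub hU).abs
  have t3 : |Fk k (cyl k μ') - x| ≤ ε / 2 := by
    refine le_of_tendsto t2 ?_
    filter_upwards [hs] with y hy
    have := hk (M y) (hMp y) (hMv y)
    rwa [hMF y hy] at this
  have t4 := hk μ' hp' hv'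
  rw [Real.dist_eq]
  rw [abs_le] at *
  constructor <;> linarith [t3.1, t3.2, t4.1, t4.2]

end LDP

open MeasureTheory ProbabilityTheory Filter Real
open scoped ENNReal

namespace LDP
open Topology

/-- finite relative entropy -/
noncomputable def Hk (k : ℕ) (τ : (Fin k → Bool) → ℝ) : ℝ :=
  ∑ s, τ s * Real.log (τ s / wk k s)

lemma lift {ν : Measure ℝ} [IsProbabilityMeasure ν] (hν : CylHyp ν) (k : ℕ)
    (τ : (Fin k → Bool) → ℝ) (h0 : ∀ s, 0 ≤ τ s) (h1 : ∑ s, τ s = 1) :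
    ∃ μ : Measure ℝ, IsProbabilityMeasure μ ∧ VarLe μ ν (Hk k τ) ∧ cyl k μ = τ := by
  let g : ℝ → ℝ := fun x => τ (code k x) / wk k (code k x)
  have hgm : Measurable g :=
    (measurable_of_finite fun s : Fin k → Bool => τ s / wk k s).comp (measurable_code k)
  have hg0 : ∀ x, 0 ≤ g x := fun x => div_nonneg (h0 _) (wk_pos _ _).le
  obtain ⟨M, hM⟩ : ∃ M, ∀ x, |g x| ≤ M := by
    refine ⟨∑ s, |τ s / wk k s|, fun x => ?_⟩
    exact Finset.single_le_sum (f := fun s => |τ s / wk k s|) (fun _ _ => abs_nonneg _)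
      (Finset.mem_univ (code k x))
  have hgi : ∫ x, g x ∂ν = 1 := by
    have := integral_code k ν (fun s => τ s / wk k s)
    simp_rw [cyl_nu hν] at this
    rw [show (∫ x, g x ∂ν) = _ from this, ← h1]
    refine Finset.sum_congr rfl fun s _ => ?_
    field_simp [(wk_pos k s).ne']
  let μ := ν.withDensity fun x => ENNReal.ofReal (g x)
  have hIntg : ∀ φ : ℝ → ℝ, ∫ x, φ x ∂μ = ∫ x, g x * φ x ∂ν := by
    intro φ
    have := integral_withDensity_eq_integral_toReal_smul (μ := ν) (f := fun x => ENNReal.ofReal (g x))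
      (hgm.ennreal_ofReal) (Eventually.of_forall fun x => ENNReal.ofReal_lt_top) φ
    rw [this]
    refine integral_congr_ae (Eventually.of_forall fun x => ?_)
    simp [ENNReal.toReal_ofReal (hg0 x)]
  have hμp : IsProbabilityMeasure μ := by
    constructor
    rw [withDensity_apply _ MeasurableSet.univ, Measure.restrict_univ,
      ← ofReal_integral_eq_lintegral_ofReal (integrable_bdd hgm hM) (Eventually.of_forall hg0), hgi]
    simp
  refine ⟨μ, hμp, ?_, ?_⟩
  · intro φ hφ ⟨B, hB⟩
    rw [hIntg]
    have hkl : ∫ x, (g x * Real.log (g x) - g x + 1) ∂ν = Hk k τ := by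
      have := integral_code k ν (fun s => τ s / wk k s * Real.log (τ s / wk k s)
        - τ s / wk k s + 1)
      rw [show (∫ x, (g x * Real.log (g x) - g x + 1) ∂ν) = _ from this]
      simp_rw [cyl_nu hν]
      have e : ∀ s, wk k s * (τ s / wk k s * Real.log (τ s / wk k s) - τ s / wk k s + 1)
          = τ s * Real.log (τ s / wk k s) - τ s + wk k s := by
        intro s
        have := (wk_pos k s).ne'
        rw [mul_add, mul_sub, ← mul_assoc, mul_div_cancel₀ _ this, mul_one]
      simp_rw [e]
      rw [Finset.sum_add_distrib, Finset.sum_sub_distrib, h1, wk_sum]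
      simp [Hk]
    have hki : Integrable (fun x => g x * Real.log (g x) - g x + 1) ν := by
      let q : (Fin k → Bool) → ℝ := fun s => τ s / wk k s * Real.log (τ s / wk k s)
        - τ s / wk k s + 1
      refine integrable_bdd (M := ∑ s, |q s|) (by fun_prop) fun x => ?_
      exact Finset.single_le_sum (f := fun s => |q s|) (fun _ _ => abs_nonneg _)
        (Finset.mem_univ (code k x))
    have hei := integrable_exp_bdd (μ := ν) hφ hB
    rw [← hkl, ← integral_add hki hei]
    refine integral_mono ?_ (hki.add hei) fun x => young _ _ (hg0 x)
    refine integrable_bdd (M := M * B) (by fun_prop) fun x => ?_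
    rw [abs_mul]
    exact mul_le_mul (hM x) (hB x) (abs_nonneg _) ((abs_nonneg _).trans (hM x))
  · ext s
    have hms : MeasurableSet (code k ⁻¹' {s}) := measurable_code k (measurableSet_singleton s)
    unfold cyl
    rw [measureReal_def, withDensity_apply _ hms,
      setLIntegral_congr_fun (g := fun _ => ENNReal.ofReal (τ s / wk k s)) hms
        (fun x hx => by
          have : code k x = s := hx
          simp [g, this]), setLIntegral_const, ENNReal.toReal_mul,
      ENNReal.toReal_ofReal (div_nonneg (h0 _) (wk_pos _ _).le)]
    have := cyl_nu hν k s
    unfold cyl at this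
    rw [← measureReal_def, this, div_mul_cancel₀ _ (wk_pos k s).ne']

lemma cyl_nonneg (k : ℕ) (μ : Measure ℝ) (s : Fin k → Bool) : 0 ≤ cyl k μ s := measureReal_nonneg

lemma cyl_sum (k : ℕ) (μ : Measure ℝ) [IsProbabilityMeasure μ] : ∑ s, cyl k μ s = 1 := by
  have := integral_code k μ fun _ => 1
  simpa using this.symm

lemma data_processing {μ ν : Measure ℝ} [IsProbabilityMeasure μ] [IsProbabilityMeasure ν]
    (hν : CylHyp ν) (k : ℕ) {c : ℝ} (h : VarLe μ ν c) : Hk k (cyl k μ) ≤ c := by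
  have key : ∀ j : ℕ, Hk k (cyl k μ) ≤ c + Real.exp (-(j : ℝ)) := by
    intro j
    let q : (Fin k → Bool) → ℝ := fun s =>
      if cyl k μ s = 0 then -(j : ℝ) else Real.log (cyl k μ s / wk k s)
    have h1 := h (fun x => q (code k x)) ((measurable_of_finite q).comp (measurable_code k))
      ⟨∑ s, |q s|, fun x => Finset.single_le_sum (f := fun s => |q s|) (fun _ _ => abs_nonneg _)
        (Finset.mem_univ (code k x))⟩
    rw [integral_code, integral_code k ν (fun s => Real.exp (q s) - 1)] at h1
    simp_rw [cyl_nu hν] at h1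
    have e1 : ∑ t, cyl k μ t * q t = Hk k (cyl k μ) := by
      refine Finset.sum_congr rfl fun s _ => ?_
      by_cases hz : cyl k μ s = 0 <;> simp [q, hz]
    rw [e1] at h1
    refine h1.trans ?_
    gcongr
    calc ∑ t, wk k t * (Real.exp (q t) - 1)
        ≤ ∑ t, (cyl k μ t - wk k t + wk k t * Real.exp (-(j : ℝ))) := by
          refine Finset.sum_le_sum fun s _ => ?_
          have hw := wk_pos k s
          by_cases hz : cyl k μ s = 0
          · simp only [q, hz, if_true]; linarith
          · have hpos : 0 < cyl k μ s := lt_of_le_of_ne (cyl_nonneg _ _ _) (Ne.symm hz)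
            simp only [q, hz, if_false]
            rw [Real.exp_log (by positivity), mul_sub, mul_div_cancel₀ _ hw.ne']
            have : 0 ≤ wk k s * Real.exp (-(j : ℝ)) := by positivity
            linarith
      _ = Real.exp (-(j : ℝ)) := by
          rw [Finset.sum_add_distrib, Finset.sum_sub_distrib, cyl_sum, wk_sum, ← Finset.sum_mul,
            wk_sum]; ring
  have h3 : Tendsto (fun j : ℕ => c + Real.exp (-(j : ℝ))) atTop (𝓝 (c + 0)) :=
    (Real.tendsto_exp_neg_atTop_nhds_zero.comp tendsto_natCast_atTop_atTop).const_add c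
  have := ge_of_tendsto' h3 key
  simpa using this

end LDP

open MeasureTheory ProbabilityTheory Filter Real
open scoped ENNReal

namespace LDP
open Topology

/-- divisibility by the first `k` primes -/
noncomputable def pcode (k : ℕ) (x : ℕ) : Fin k → Bool := fun j => decide (Nat.nth Nat.Prime j ∣ x)

/-- empirical frequency of a divisibility pattern in `{1,…,n}` -/
noncomputable def rho (k n : ℕ) (s : Fin k → Bool) : ℝ :=
  ((Finset.Ioc 0 n).filter fun x => pcode k x = s).card / n

lemma nthp (j : ℕ) : (Nat.nth Nat.Prime j).Prime := Nat.prime_nth_prime j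

lemma density (k : ℕ) (s : ℕ → Bool) : ∀ d : ℕ, 0 < d →
    (∀ j < k, Nat.Coprime (Nat.nth Nat.Prime j) d) →
    Tendsto (fun n : ℕ => (((Finset.Ioc 0 n).filter fun x => d ∣ x ∧
      ∀ j < k, decide (Nat.nth Nat.Prime j ∣ x) = s j).card : ℝ) / n) atTop
      (𝓝 ((d : ℝ)⁻¹ * ∏ j ∈ Finset.range k, wt j (s j))) := by
  induction k with
  | zero =>
    intro d hd _
    have h1 := (tendsto_nat_floor_mul_div_atTop (R := ℝ) (a := (d : ℝ)⁻¹) (by positivity)).comp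
      tendsto_natCast_atTop_atTop
    simp only [Finset.range_zero, Finset.prod_empty, mul_one, not_lt_zero, IsEmpty.forall_iff,
      implies_true, and_true]
    refine h1.congr fun n => ?_
    rw [Nat.Ioc_filter_dvd_card_eq_div, Function.comp]
    rw [inv_mul_eq_div, Nat.floor_div_eq_div]
  | succ k ih =>
    intro d hd hc
    set p := Nat.nth Nat.Prime k with hp
    have hpp : p.Prime := nthp k
    have hpd : Nat.Coprime p d := hc k (by omega)
    have h1 := ih d hd fun j hj => hc j (by omega)
    have h2 := ih (d * p) (Nat.mul_pos hd hpp.pos) fun j hj => by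
      refine Nat.Coprime.mul_right (hc j (by omega)) ?_
      rw [Nat.coprime_primes (nthp j) hpp]
      exact (Nat.nth_strictMono Nat.infinite_setOfPred_prime hj).ne
    have hpr : (p : ℝ) ≠ 0 := by exact_mod_cast hpp.ne_zero
    have hdr : (d : ℝ) ≠ 0 := by exact_mod_cast hd.ne'
    have hdvd : ∀ x, d * p ∣ x ↔ d ∣ x ∧ p ∣ x := fun x =>
      ⟨fun h => ⟨(dvd_mul_right _ _).trans h, (dvd_mul_left _ _).trans h⟩,
        fun h => hpd.symm.mul_dvd_of_dvd_of_dvd h.1 h.2⟩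
    rw [Finset.prod_range_succ]
    cases hs : s k with
    | true =>
      have e : (d : ℝ)⁻¹ * ((∏ j ∈ Finset.range k, wt j (s j)) * wt k true)
          = ((d * p : ℕ) : ℝ)⁻¹ * ∏ j ∈ Finset.range k, wt j (s j) := by
        simp only [wt, if_true, ← hp]
        push_cast
        field_simp
      rw [e]
      refine h2.congr fun n => ?_
      congr 3
      refine Finset.filter_congr fun x _ => ?_
      rw [hdvd, Nat.forall_lt_succ_right, ← hp, hs]
      simp only [decide_eq_true_eq]
      tauto
    | false =>
      have e : (d : ℝ)⁻¹ * ((∏ j ∈ Finset.range k, wt j (s j)) * wt k false)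
          = (d : ℝ)⁻¹ * (∏ j ∈ Finset.range k, wt j (s j)) -
           ((d * p : ℕ) : ℝ)⁻¹ * ∏ j ∈ Finset.range k, wt j (s j) := by
        simp only [wt, ← hp]
        push_cast
        field_simp
      rw [e]
      refine (h1.sub h2).congr fun n => ?_
      rw [← sub_div]
      congr 1
      rw [sub_eq_iff_eq_add, ← Nat.cast_add]
      congr 1
      rw [← Finset.card_filter_add_card_filter_not (fun x => ¬ p ∣ x)
        (s := (Finset.Ioc 0 n).filter fun x => d ∣ x ∧
          ∀ j < k, decide (Nat.nth Nat.Prime j ∣ x) = s j), Finset.filter_filter,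
          Finset.filter_filter]
      congr 2
      · refine Finset.filter_congr fun x _ => ?_
        rw [Nat.forall_lt_succ_right, ← hp, hs]
        simp only [decide_eq_false_iff_not]
        tauto
      · refine Finset.filter_congr fun x _ => ?_
        rw [hdvd]
        tauto

lemma rho_tendsto (k : ℕ) (s : Fin k → Bool) :
    Tendsto (fun n => rho k n s) atTop (𝓝 (wk k s)) := by
  let s' : ℕ → Bool := fun j => if h : j < k then s ⟨j, h⟩ else false
  have h := density k s' 1 one_pos fun j _ => Nat.coprime_one_right _
  have e : ((1 : ℕ) : ℝ)⁻¹ * ∏ j ∈ Finset.range k, wt j (s' j) = wk k s := by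
    rw [Finset.prod_range]; simp [s', wk]
  rw [e] at h
  refine h.congr fun n => ?_
  unfold rho
  congr 3
  refine Finset.filter_congr fun x _ => ?_
  simp only [one_dvd, true_and, funext_iff, pcode]
  constructor
  · intro h j
    have := h j j.2
    simpa [s'] using this
  · intro h j hj
    have := h ⟨j, hj⟩
    simpa [s', hj] using this

/-- sample space -/
def Om (n : ℕ) : Finset (Fin n → ℕ) := Fintype.piFinset fun _ => Finset.Ioc 0 n

open Classical in
/-- probability -/
noncomputable def pr (n : ℕ) (E : Set (Fin n → ℕ)) : ℝ :=
  ((Om n).filter fun ω => ω ∈ E).card / (n : ℝ) ^ n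

lemma unifVec_eq (n : ℕ) (hn : 0 < n) (E : Set (Fin n → ℕ)) :
    unifVec n E = ENNReal.ofReal (pr n E) := by
  classical
  have hset : (Set.Icc 1 n : Set ℕ) = (Finset.Ioc 0 n : Finset ℕ) := by
    ext x; simp; omega
  have hfin : (Set.Icc 1 n : Set ℕ).Finite := Set.finite_Icc 1 n
  have hne : (Set.Icc 1 n : Set ℕ).Nonempty := ⟨1, by simp; omega⟩
  have hprob : IsProbabilityMeasure (uniformOn (Set.Icc 1 n : Set ℕ)) :=
    isProbabilityMeasure_uniformOn hfin hne
  have hsing : ∀ x ∈ Finset.Ioc 0 n, uniformOn (Set.Icc 1 n) {x} = (n : ℝ≥0∞)⁻¹ := by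
    intro x hx
    rw [uniformOn, cond_apply (measurableSet_Icc)]
    have h1 : (Set.Icc 1 n ∩ {x} : Set ℕ) = {x} := by
      rw [Set.inter_eq_right, Set.singleton_subset_iff, hset]; exact hx
    rw [h1, hset, Measure.count_apply_finset, Measure.count_singleton]
    simp
  have hfull : unifVec n (Om n : Set (Fin n → ℕ))ᶜ = 0 := by
    have : IsProbabilityMeasure (unifVec n) := by unfold unifVec; infer_instance
    rw [prob_compl_eq_zero_iff (Finset.measurableSet _)]
    have e : (Om n : Set (Fin n → ℕ)) = Set.univ.pi fun _ => Set.Icc 1 n := by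
      rw [hset]; simp [Om]
    rw [e, unifVec, Measure.pi_pi]
    refine Finset.prod_eq_one fun i _ => ?_
    exact uniformOn_self hfin hne
  have h2 : unifVec n E = unifVec n (((Om n).filter fun ω => ω ∈ E : Finset _) : Set _) := by
    have : ((((Om n).filter fun ω => ω ∈ E) : Finset _) : Set (Fin n → ℕ)) = E ∩ (Om n) := by
      ext ω; simp [and_comm]
    rw [this]
    exact (measure_inter_conull hfull).symm
  rw [h2, ← sum_measure_singleton]
  have h3 : ∀ ω ∈ (Om n).filter fun ω => ω ∈ E, unifVec n {ω} = ((n : ℝ≥0∞)⁻¹) ^ n := by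
    intro ω hω
    rw [unifVec, Measure.pi_singleton]
    have hω' := (Finset.mem_filter.1 hω).1
    rw [Om, Fintype.mem_piFinset] at hω'
    rw [Finset.prod_congr rfl fun i _ => hsing _ (hω' i)]
    simp
  rw [Finset.sum_congr rfl h3, Finset.sum_const, pr, ENNReal.ofReal_div_of_pos (by positivity)]
  rw [ENNReal.ofReal_pow (by positivity), ENNReal.ofReal_natCast, ENNReal.ofReal_natCast,
    nsmul_eq_mul, ← ENNReal.inv_pow, div_eq_mul_inv]

lemma pr_nonneg (n : ℕ) (E : Set (Fin n → ℕ)) : 0 ≤ pr n E := by unfold pr; positivity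

lemma pr_mono (n : ℕ) {E F : Set (Fin n → ℕ)} (h : ∀ ω ∈ Om n, ω ∈ E → ω ∈ F) :
    pr n E ≤ pr n F := by
  classical
  unfold pr
  refine div_le_div_of_nonneg_right ?_ (by positivity)
  rw [Nat.cast_le]
  refine Finset.card_le_card fun ω hω => ?_
  rw [Finset.mem_filter] at *
  exact ⟨hω.1, h ω hω.1 hω.2⟩

lemma pr_union (n : ℕ) (E F : Set (Fin n → ℕ)) : pr n (E ∪ F) ≤ pr n E + pr n F := by
  classical
  unfold pr
  rw [← add_div]
  gcongr
  simp only [Set.mem_union]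
  rw [Finset.filter_or]
  exact_mod_cast Finset.card_union_le _ _

/-- Markov-type bound -/
lemma pr_le_of_weight (n : ℕ) (hn : 0 < n) (E : Set (Fin n → ℕ)) (G : (Fin n → ℕ) → ℝ)
    (hG0 : ∀ ω ∈ Om n, 0 ≤ G ω) (hG : ∀ ω ∈ Om n, ω ∈ E → 1 ≤ G ω) :
    pr n E ≤ (∑ ω ∈ Om n, G ω) / (n : ℝ) ^ n := by
  classical
  unfold pr
  gcongr
  rw [Finset.card_eq_sum_ones, Nat.cast_sum, Nat.cast_one, Finset.sum_filter]
  refine Finset.sum_le_sum fun ω hω => ?_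
  split_ifs with h
  · exact hG ω hω h
  · exact hG0 ω hω

lemma avg (n : ℕ) (i : Fin n) (F : (Fin n → ℕ) → ℝ) :
    ∑ ω ∈ Om n, ∑ a ∈ Finset.Ioc 0 n, F (Function.update ω i a) = n * ∑ ω ∈ Om n, F ω := by
  have h1 : ∑ ω ∈ Om n, ∑ _a ∈ Finset.Ioc 0 n, F ω = n * ∑ ω ∈ Om n, F ω := by
    simp [Finset.mul_sum]
  rw [← h1, ← Finset.sum_product', ← Finset.sum_product']
  have hmem : ∀ q ∈ Om n ×ˢ Finset.Ioc 0 n, (Function.update q.1 i q.2, q.1 i) ∈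
      Om n ×ˢ Finset.Ioc 0 n := by
    rintro ⟨ω, a⟩ h
    rw [Finset.mem_product] at *
    simp only [Om, Fintype.mem_piFinset] at *
    refine ⟨fun j => ?_, h.1 i⟩
    by_cases hj : j = i
    · subst hj; simpa using h.2
    · simpa [hj] using h.1 j
  refine Finset.sum_nbij' (fun q => (Function.update q.1 i q.2, q.1 i))
    (fun q => (Function.update q.1 i q.2, q.1 i)) hmem hmem ?_ ?_ ?_
  · rintro ⟨ω, a⟩ _; simp
  · rintro ⟨ω, a⟩ _; simp
  · rintro ⟨ω, a⟩ _; simp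

lemma matching (n : ℕ) (hn : 0 < n) (h : ℕ → ℕ → ℝ) (h0 : ∀ a b, 0 ≤ h a b) (q : ℝ) (hq : 0 ≤ q)
    (hh : ∑ a ∈ Finset.Ioc 0 n, ∑ b ∈ Finset.Ioc 0 n, h a b ≤ q * (n : ℝ) ^ 2)
    (σ : Fin n → Fin n) (hσ : ∀ i, σ (σ i) = i) (M : Finset (Fin n)) (hM : ∀ i ∈ M, i < σ i) :
    ∑ ω ∈ Om n, ∏ i ∈ M, h (ω i) (ω (σ i)) ≤ (n : ℝ) ^ n * q ^ M.card := by
  induction M using Finset.induction_on with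
  | empty => simp [Om]
  | insert i M hi ih =>
    have ih' := ih fun j hj => hM j (Finset.mem_insert_of_mem hj)
    have hlt := hM i (Finset.mem_insert_self _ _)
    set j := σ i with hj
    set G : (Fin n → ℕ) → ℝ := fun ω => ∏ l ∈ M, h (ω l) (ω (σ l)) with hG
    have hG0 : ∀ ω, 0 ≤ G ω := fun ω => Finset.prod_nonneg fun _ _ => h0 _ _
    have hne : ∀ l ∈ M, l ≠ i ∧ l ≠ j ∧ σ l ≠ i ∧ σ l ≠ j := by
      intro l hl
      have hl2 := hM l (Finset.mem_insert_of_mem hl)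
      refine ⟨fun e => hi (e ▸ hl), fun e => ?_, fun e => ?_, fun e => ?_⟩
      · rw [e, hj, hσ] at hl2
        exact absurd hl2 (not_lt.2 hlt.le)
      · have : l = j := by rw [hj, ← e, hσ]
        rw [this, hj, hσ] at hl2
        exact absurd hl2 (not_lt.2 hlt.le)
      · have : l = i := by rw [← hσ l, e, hj, hσ]
        exact hi (this ▸ hl)
    have hGi : ∀ ω a, G (Function.update ω i a) = G ω := fun ω a =>
      Finset.prod_congr rfl fun l hl => by
        rw [Function.update_of_ne (hne l hl).1, Function.update_of_ne (hne l hl).2.2.1]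
    have hGj : ∀ ω a, G (Function.update ω j a) = G ω := fun ω a =>
      Finset.prod_congr rfl fun l hl => by
        rw [Function.update_of_ne (hne l hl).2.1, Function.update_of_ne (hne l hl).2.2.2]
    have hnr : (0 : ℝ) < n := by exact_mod_cast hn
    have e1 := avg n j fun ω => h (ω i) (ω j) * G ω
    have e2 := avg n i fun ω => ∑ b ∈ Finset.Ioc 0 n, h (ω i) b * G ω
    simp only [hGi, hGj, Function.update_self, Function.update_of_ne hlt.ne] at e1 e2
    rw [e1] at e2
    have e3 : ∑ ω ∈ Om n, ∑ a ∈ Finset.Ioc 0 n, ∑ b ∈ Finset.Ioc 0 n, h a b * G ω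
        = (∑ a ∈ Finset.Ioc 0 n, ∑ b ∈ Finset.Ioc 0 n, h a b) * ∑ ω ∈ Om n, G ω := by
      rw [Finset.mul_sum]
      refine Finset.sum_congr rfl fun ω _ => ?_
      simp_rw [Finset.sum_mul]
    rw [e3] at e2
    have e4 : ∑ ω ∈ Om n, ∏ l ∈ insert i M, h (ω l) (ω (σ l))
        = ∑ ω ∈ Om n, h (ω i) (ω j) * G ω :=
      Finset.sum_congr rfl fun ω _ => Finset.prod_insert hi
    rw [e4, Finset.card_insert_of_notMem hi, pow_succ]
    have hS : 0 ≤ ∑ ω ∈ Om n, G ω := Finset.sum_nonneg fun _ _ => hG0 _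
    have h5 : (n : ℝ) ^ 2 * ∑ ω ∈ Om n, h (ω i) (ω j) * G ω
        ≤ (n : ℝ) ^ 2 * ((n : ℝ) ^ n * (q ^ M.card * q)) := by
      calc _ = (∑ a ∈ Finset.Ioc 0 n, ∑ b ∈ Finset.Ioc 0 n, h a b) * ∑ ω ∈ Om n, G ω := by
            rw [e2]; ring
        _ ≤ (q * (n : ℝ) ^ 2) * ((n : ℝ) ^ n * q ^ M.card) := by
            gcongr
        _ = _ := by ring
    exact le_of_mul_le_mul_left h5 (by positivity)

end LDP

open MeasureTheory ProbabilityTheory Filter Real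
open scoped ENNReal

namespace LDP
open Topology

/-- the statistic -/
noncomputable def Wn (n : ℕ) (ω : Fin n → ℕ) : ℝ := (1 / (n : ℝ) ^ 2) *
  (∑ i : Fin n, ∑ j : Fin n, if Nat.gcd (ω i) (ω j) = 1 then (1 : ℝ) else 0)

/-- counts -/
noncomputable def cnt (k : ℕ) {n : ℕ} (ω : Fin n → ℕ) (s : Fin k → Bool) : ℕ :=
  (Finset.univ.filter fun i => pcode k (ω i) = s).card

/-- empirical frequencies -/
noncomputable def Lk (k : ℕ) {n : ℕ} (ω : Fin n → ℕ) (s : Fin k → Bool) : ℝ := cnt k ω s / n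

lemma Lk_sum (k : ℕ) {n : ℕ} (ω : Fin n → ℕ) (g : (Fin k → Bool) → ℝ) :
    ∑ s, Lk k ω s * g s = (1 / n : ℝ) * ∑ i, g (pcode k (ω i)) := by
  have h := Finset.sum_fiberwise' (Finset.univ : Finset (Fin n)) (fun i => pcode k (ω i)) g
  rw [← h, Finset.mul_sum]
  refine Finset.sum_congr rfl fun s _ => ?_
  rw [Finset.sum_const, Lk, cnt, nsmul_eq_mul]
  ring

lemma Fk_Lk (k : ℕ) {n : ℕ} (ω : Fin n → ℕ) : Fk k (Lk k ω) =
    (1 / (n : ℝ) ^ 2) * ∑ i, ∑ j, ker k (pcode k (ω i)) (pcode k (ω j)) := by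
  have h1 : Fk k (Lk k ω) = ∑ s, Lk k ω s * ∑ t, Lk k ω t * ker k s t := by
    unfold Fk
    refine Finset.sum_congr rfl fun s _ => ?_
    rw [Finset.mul_sum]
    exact Finset.sum_congr rfl fun t _ => by ring
  rw [h1]
  simp_rw [fun s => Lk_sum k ω (ker k s)]
  rw [Lk_sum k ω (fun s => (1 / n : ℝ) * ∑ j, ker k s (pcode k (ω j))), ← Finset.mul_sum]
  ring

/-- pairs sharing a prime, but none of the first `k` -/
def bad (k a b : ℕ) : Prop :=
  ¬ Nat.gcd a b = 1 ∧ ∀ j : Fin k, ¬ (pcode k a j = true ∧ pcode k b j = true)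

open Classical in
lemma ker_sub (k a b : ℕ) : ker k (pcode k a) (pcode k b) - (if Nat.gcd a b = 1 then (1 : ℝ) else 0)
    = if bad k a b then 1 else 0 := by
  by_cases h1 : Nat.gcd a b = 1
  · have h2 : ∀ j : Fin k, ¬ (pcode k a j = true ∧ pcode k b j = true) := by
      intro j ⟨ha, hb⟩
      simp only [pcode, decide_eq_true_eq] at ha hb
      have := Nat.dvd_gcd ha hb
      rw [h1, Nat.dvd_one] at this
      exact (nthp j).one_lt.ne' this
    unfold ker bad
    rw [if_pos h2, if_pos h1, if_neg (by tauto)]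
    norm_num
  · unfold ker bad
    rw [if_neg h1, sub_zero]
    congr 1
    simp [h1]

open Classical in
lemma diff_eq (k : ℕ) {n : ℕ} (ω : Fin n → ℕ) : Fk k (Lk k ω) - Wn n ω =
    (1 / (n : ℝ) ^ 2) * ((Finset.univ : Finset (Fin n × Fin n)).filter
      fun p => bad k (ω p.1) (ω p.2)).card := by
  rw [Fk_Lk, Wn, ← mul_sub]
  congr 1
  rw [← Finset.sum_sub_distrib, Finset.card_eq_sum_ones, Nat.cast_sum, Finset.sum_filter,
    ← Finset.univ_product_univ, Finset.sum_product]
  refine Finset.sum_congr rfl fun i _ => ?_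
  rw [← Finset.sum_sub_distrib]
  refine Finset.sum_congr rfl fun j _ => ?_
  rw [ker_sub]; simp

lemma bad_symm {k a b : ℕ} (h : bad k a b) : bad k b a :=
  ⟨by rw [Nat.gcd_comm]; exact h.1, fun j hj => h.2 j ⟨hj.2, hj.1⟩⟩

open Classical in
lemma bad_count (k n : ℕ) (hk : 0 < k) (hn : 0 < n) :
    ∑ a ∈ Finset.Ioc 0 n, ∑ b ∈ Finset.Ioc 0 n, (if bad k a b then (1 : ℝ) else 0)
      ≤ rt k * (n : ℝ) ^ 2 := by
  have hs : Summable fun i : ℕ => (((i + k : ℕ) : ℝ) ^ 2)⁻¹ := (summable_nat_add_iff k).2 summ_sq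
  have hle : ∀ a ∈ Finset.Ioc 0 n, ∀ b ∈ Finset.Ioc 0 n, (if bad k a b then (1 : ℝ) else 0)
      ≤ ∑ m ∈ Finset.range (n + 1), (if (m + k) ∣ a then (1 : ℝ) else 0) *
        (if (m + k) ∣ b then (1 : ℝ) else 0) := by
    intro a ha b hb
    have hnn : ∀ m ∈ Finset.range (n + 1), 0 ≤ (if (m + k) ∣ a then (1 : ℝ) else 0) *
        (if (m + k) ∣ b then (1 : ℝ) else 0) := fun m _ => by split_ifs <;> simp
    split_ifs with h
    swap
    · exact Finset.sum_nonneg hnn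
    obtain ⟨p, hp, hpd⟩ := Nat.exists_prime_and_dvd h.1
    have hpa := hpd.trans (Nat.gcd_dvd_left a b)
    have hpb := hpd.trans (Nat.gcd_dvd_right a b)
    have hj := Nat.nth_count hp
    set j := Nat.count Nat.Prime p
    have hjk : k ≤ j := by
      by_contra hlt
      push Not at hlt
      exact h.2 ⟨j, hlt⟩ (by simp [pcode, hj, hpa, hpb])
    have hpk : k ≤ p := by
      have := Nat.add_two_le_nth_prime j
      omega
    have hpn : p ≤ n := by
      rw [Finset.mem_Ioc] at ha
      exact (Nat.le_of_dvd ha.1 hpa).trans ha.2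
    have h3 := Finset.single_le_sum hnn (Finset.mem_range.2 (by omega : p - k < n + 1))
    rw [Nat.sub_add_cancel hpk, if_pos hpa, if_pos hpb, one_mul] at h3
    exact h3
  calc _ ≤ ∑ a ∈ Finset.Ioc 0 n, ∑ b ∈ Finset.Ioc 0 n, ∑ m ∈ Finset.range (n + 1),
        (if (m + k) ∣ a then (1 : ℝ) else 0) * (if (m + k) ∣ b then (1 : ℝ) else 0) :=
        Finset.sum_le_sum fun a ha => Finset.sum_le_sum fun b hb => hle a ha b hb
    _ = ∑ m ∈ Finset.range (n + 1), (∑ a ∈ Finset.Ioc 0 n, if (m + k) ∣ a then (1 : ℝ) else 0) *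
        ∑ b ∈ Finset.Ioc 0 n, if (m + k) ∣ b then (1 : ℝ) else 0 := by
        simp_rw [Finset.sum_mul_sum]
        rw [Finset.sum_comm]
        simp_rw [Finset.sum_comm (s := Finset.range (n + 1))]
        rw [Finset.sum_comm]
    _ ≤ ∑ m ∈ Finset.range (n + 1), (((m + k : ℕ) : ℝ) ^ 2)⁻¹ * (n : ℝ) ^ 2 := by
        refine Finset.sum_le_sum fun m _ => ?_
        have e : (∑ a ∈ Finset.Ioc 0 n, if (m + k) ∣ a then (1 : ℝ) else 0) = ((n / (m + k) : ℕ) : ℝ) := by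
          rw [← Nat.Ioc_filter_dvd_card_eq_div, Finset.card_eq_sum_ones, Nat.cast_sum,
            Finset.sum_filter]
          simp
        rw [e]
        have h1 : ((n / (m + k) : ℕ) : ℝ) ≤ n / ((m + k : ℕ) : ℝ) := Nat.cast_div_le
        calc _ ≤ ((n : ℝ) / ((m + k : ℕ) : ℝ)) * ((n : ℝ) / ((m + k : ℕ) : ℝ)) := by gcongr
          _ = _ := by rw [div_mul_div_comm, ← sq, ← sq, div_eq_mul_inv, mul_comm]
    _ = (∑ m ∈ Finset.range (n + 1), (((m + k : ℕ) : ℝ) ^ 2)⁻¹) * (n : ℝ) ^ 2 := by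
        rw [Finset.sum_mul]
    _ ≤ _ := by
        gcongr
        exact hs.sum_le_tsum _ fun i _ => by positivity

lemma matching_ne (n k : ℕ) [NeZero n] (ω : Fin n → ℕ) (K : ℝ)
    (h : K * n ^ 2 + (n : ℝ) / 2 ≤ (1 / 2 : ℝ) * (n : ℝ) ^ 2 * (Fk k (Lk k ω) - Wn n ω)) :
    ∃ r : Fin n, ∃ M : Finset (Fin n), (∀ i ∈ M, i < r - i) ∧ K * n ≤ M.card ∧
      ∀ i ∈ M, bad k (ω i) (ω (r - i)) := by
  classical
  have hn : (0 : ℝ) < n := by exact_mod_cast Nat.pos_of_ne_zero (NeZero.ne n)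
  set B := (Finset.univ : Finset (Fin n × Fin n)).filter fun p => bad k (ω p.1) (ω p.2) with hB
  set B1 := B.filter fun p => p.1 < p.2 with hB1
  have hcard : (B.card : ℝ) ≤ 2 * B1.card + n := by
    have hsub : B ⊆ (B1 ∪ B1.image Prod.swap) ∪ (Finset.univ : Finset (Fin n)).image fun i => (i, i) := by
      rintro ⟨i, j⟩ hp
      have hbad : bad k (ω i) (ω j) := (Finset.mem_filter.1 hp).2
      rcases lt_trichotomy i j with hlt | heq | hgt
      · apply Finset.mem_union_left; apply Finset.mem_union_left
        rw [hB1, Finset.mem_filter]; exact ⟨hp, hlt⟩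
      · apply Finset.mem_union_right
        subst heq
        exact Finset.mem_image.2 ⟨i, Finset.mem_univ _, rfl⟩
      · apply Finset.mem_union_left; apply Finset.mem_union_right
        refine Finset.mem_image.2 ⟨(j, i), ?_, rfl⟩
        rw [hB1, hB, Finset.mem_filter, Finset.mem_filter]
        exact ⟨⟨Finset.mem_univ _, bad_symm hbad⟩, hgt⟩
    have h1 := Finset.card_le_card hsub
    have h2 := Finset.card_union_le (B1 ∪ B1.image Prod.swap)
      ((Finset.univ : Finset (Fin n)).image fun i => (i, i))
    have h3 := Finset.card_union_le B1 (B1.image Prod.swap)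
    have h4 := Finset.card_image_le (s := B1) (f := Prod.swap)
    have h5 := Finset.card_image_le (s := (Finset.univ : Finset (Fin n))) (f := fun i => (i, i))
    rw [Finset.card_fin] at h5
    have : B.card ≤ 2 * B1.card + n := by omega
    exact_mod_cast this
  have hd := diff_eq k ω
  rw [hd] at h
  have e : (1 / 2 : ℝ) * (n : ℝ) ^ 2 * ((1 / (n : ℝ) ^ 2) * (B.card : ℝ)) = B.card / 2 := by
    field_simp
  rw [e] at h
  have hB1c : K * n ^ 2 ≤ B1.card := by linarith
  -- pigeonhole
  have hpig : ∃ r : Fin n, K * n ≤ ((B1.filter fun p => p.1 + p.2 = r).card : ℝ) := by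
    by_contra hcon
    push Not at hcon
    have hs : (B1.card : ℝ) = ∑ r : Fin n, ((B1.filter fun p => p.1 + p.2 = r).card : ℝ) := by
      rw [Finset.card_eq_sum_card_fiberwise (f := fun p => p.1 + p.2) (t := Finset.univ)
        (fun _ _ => by simp)]
      push_cast; rfl
    have : (B1.card : ℝ) < ∑ _r : Fin n, K * n := by
      rw [hs]
      exact Finset.sum_lt_sum_of_nonempty Finset.univ_nonempty fun r _ => hcon r
    rw [Finset.sum_const, Finset.card_fin, nsmul_eq_mul] at this
    nlinarith
  obtain ⟨r, hr⟩ := hpig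
  refine ⟨r, (B1.filter fun p => p.1 + p.2 = r).image Prod.fst, ?_, ?_, ?_⟩
  · intro i hi
    obtain ⟨⟨a, b⟩, hp, rfl⟩ := Finset.mem_image.1 hi
    rw [Finset.mem_filter, hB1, Finset.mem_filter] at hp
    have : r - a = b := by rw [← hp.2]; simp
    simp only [this]
    exact hp.1.2
  · rw [Finset.card_image_of_injOn]
    · exact hr
    · rintro ⟨a, b⟩ h1 ⟨c, d⟩ h2 hac
      have h1 := (Finset.mem_filter.1 h1).2
      have h2 := (Finset.mem_filter.1 h2).2
      simp only at hac h1 h2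
      subst hac
      rw [← h2] at h1
      simpa using h1
  · intro i hi
    obtain ⟨⟨a, b⟩, hp, rfl⟩ := Finset.mem_image.1 hi
    rw [Finset.mem_filter, hB1, Finset.mem_filter, hB, Finset.mem_filter] at hp
    have : r - a = b := by rw [← hp.2]; simp
    simp only [this]
    exact hp.1.1.2

lemma diff_nonneg (k : ℕ) {n : ℕ} (ω : Fin n → ℕ) : 0 ≤ Fk k (Lk k ω) - Wn n ω := by
  classical
  rw [diff_eq]; positivity

lemma tail (C : ℝ) {ε : ℝ} (hε : 0 < ε) : ∃ k0, ∀ k ≥ k0, ∃ N : ℕ, ∀ n ≥ N,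
    pr n {ω | ε ≤ |Fk k (Lk k ω) - Wn n ω|} ≤ Real.exp (-(C * n)) := by
  classical
  set D : ℝ := 4 * (|C| + 2) / ε with hD
  obtain ⟨k1, hk1⟩ := eventually_atTop.1 (rt_tendsto.eventually (gt_mem_nhds (Real.exp_pos (-D))))
  refine ⟨k1 + 1, fun k hk => ?_⟩
  have hrt : rt k ≤ Real.exp (-D) := (hk1 k (by omega)).le
  obtain ⟨N, hN⟩ := exists_nat_ge (2 / ε)
  refine ⟨N + 1, fun n hn => ?_⟩
  have hn0 : 0 < n := by omega
  haveI : NeZero n := ⟨hn0.ne'⟩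
  have hnr : (0 : ℝ) < n := by exact_mod_cast hn0
  have hnN : 2 / ε ≤ n := hN.trans (by exact_mod_cast (by omega : N ≤ n))
  have hnε : 2 ≤ ε * n := by rw [div_le_iff₀ hε] at hnN; linarith
  set good : Finset (Fin n × Finset (Fin n)) := Finset.univ.filter fun q =>
    (∀ i ∈ q.2, i < q.1 - i) ∧ ε / 4 * n ≤ q.2.card with hgood
  let h : ℕ → ℕ → ℝ := fun a b => if bad k a b then 1 else 0
  have h0 : ∀ a b, 0 ≤ h a b := fun a b => by simp only [h]; split_ifs <;> simp
  let G : (Fin n → ℕ) → ℝ := fun ω => ∑ q ∈ good, ∏ i ∈ q.2, h (ω i) (ω (q.1 - i))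
  have hP0 : ∀ ω : Fin n → ℕ, ∀ q : Fin n × Finset (Fin n), 0 ≤ ∏ i ∈ q.2, h (ω i) (ω (q.1 - i)) := fun ω q =>
    Finset.prod_nonneg fun _ _ => h0 _ _
  have step1 := pr_le_of_weight n hn0 {ω | ε ≤ |Fk k (Lk k ω) - Wn n ω|} G
    (fun ω _ => Finset.sum_nonneg fun q _ => hP0 ω q) (by
      intro ω _ hω
      have hω : ε ≤ |Fk k (Lk k ω) - Wn n ω| := hω
      rw [abs_of_nonneg (diff_nonneg k ω)] at hω
      obtain ⟨r, M, h1, h2, h3⟩ := matching_ne n k ω (ε / 4) (by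
        have : (1 / 2 : ℝ) * (n : ℝ) ^ 2 * ε ≤ (1 / 2 : ℝ) * (n : ℝ) ^ 2 * (Fk k (Lk k ω) - Wn n ω) := by
          gcongr
        nlinarith)
      have hm : (r, M) ∈ good := by
        rw [hgood, Finset.mem_filter]
        exact ⟨Finset.mem_univ _, h1, h2⟩
      have := Finset.single_le_sum (fun q _ => hP0 ω q) hm
      refine le_trans ?_ this
      refine le_of_eq (Finset.prod_eq_one fun i hi => ?_).symm
      simp [h, h3 i hi])
  refine step1.trans ?_
  rw [div_le_iff₀ (by positivity)]
  have step2 : ∀ q ∈ good, ∑ ω ∈ Om n, ∏ i ∈ q.2, h (ω i) (ω (q.1 - i))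
      ≤ (n : ℝ) ^ n * Real.exp (-((|C| + 2) * n)) := by
    intro q hq
    rw [hgood, Finset.mem_filter] at hq
    have hm := matching n hn0 h h0 (Real.exp (-D)) (Real.exp_pos _).le
      ((bad_count k n (by omega) hn0).trans (by gcongr)) (fun i => q.1 - i) (fun i => by simp)
      q.2 hq.2.1
    refine hm.trans ?_
    gcongr
    rw [← Real.exp_nat_mul]
    apply Real.exp_le_exp.2
    have h3 := hq.2.2
    have hDp : 0 < D := by positivity
    have : (|C| + 2) * n = D * (ε / 4 * n) := by rw [hD]; field_simp
    rw [this]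
    nlinarith
  have hgc : (good.card : ℝ) ≤ Real.exp n * Real.exp n := by
    have h1 : good.card ≤ n * 2 ^ n := by
      refine (Finset.card_le_univ _).trans ?_
      simp
    have h2 : (n : ℝ) ≤ Real.exp n := by linarith [Real.add_one_le_exp (n : ℝ)]
    have h3 : (2 : ℝ) ^ n ≤ Real.exp n := by
      rw [← Real.exp_one_pow]
      gcongr
      linarith [Real.add_one_le_exp (1 : ℝ)]
    calc (good.card : ℝ) ≤ (n : ℝ) * 2 ^ n := by exact_mod_cast h1
      _ ≤ _ := by gcongr
  calc ∑ ω ∈ Om n, G ω = ∑ q ∈ good, ∑ ω ∈ Om n, ∏ i ∈ q.2, h (ω i) (ω (q.1 - i)) :=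
        Finset.sum_comm
    _ ≤ ∑ _q ∈ good, (n : ℝ) ^ n * Real.exp (-((|C| + 2) * n)) := Finset.sum_le_sum step2
    _ = good.card * ((n : ℝ) ^ n * Real.exp (-((|C| + 2) * n))) := by
        rw [Finset.sum_const, nsmul_eq_mul]
    _ ≤ (Real.exp n * Real.exp n) * ((n : ℝ) ^ n * Real.exp (-((|C| + 2) * n))) := by gcongr
    _ = Real.exp (-(|C| * n)) * (n : ℝ) ^ n := by
        rw [← Real.exp_add, mul_comm ((n : ℝ) ^ n), ← mul_assoc, ← Real.exp_add]
        ring_nf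
    _ ≤ _ := by
        gcongr
        exact le_abs_self C

end LDP

open MeasureTheory ProbabilityTheory Filter Real
open scoped ENNReal

namespace LDP
open Topology

lemma sum_prod_code (k n : ℕ) (hn : 0 < n) (u : (Fin k → Bool) → ℝ) :
    ∑ ω ∈ Om n, ∏ i, u (pcode k (ω i)) = (n : ℝ) ^ n * (∑ s, rho k n s * u s) ^ n := by
  have hnr : (n : ℝ) ≠ 0 := by exact_mod_cast hn.ne'
  rw [Om, ← Finset.prod_univ_sum (fun _ => Finset.Ioc 0 n) (fun _ x => u (pcode k x)),
    Finset.prod_const, Finset.card_fin, ← mul_pow]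
  congr 1
  rw [← Finset.sum_fiberwise' (Finset.Ioc 0 n) (fun x => pcode k x) u, Finset.mul_sum]
  refine Finset.sum_congr rfl fun s _ => ?_
  rw [Finset.sum_const, nsmul_eq_mul, rho]
  field_simp

lemma prod_code (k : ℕ) {n : ℕ} (ω : Fin n → ℕ) (u : (Fin k → Bool) → ℝ) :
    ∏ i, u (pcode k (ω i)) = ∏ s, u s ^ cnt k ω s := by
  rw [← Finset.prod_fiberwise' Finset.univ (fun i => pcode k (ω i)) u]
  refine Finset.prod_congr rfl fun s _ => ?_
  rw [Finset.prod_const, cnt]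

lemma Lk_nonneg (k : ℕ) {n : ℕ} (ω : Fin n → ℕ) (s) : 0 ≤ Lk k ω s := by
  unfold Lk; positivity

lemma Lk_one (k : ℕ) {n : ℕ} (hn : 0 < n) (ω : Fin n → ℕ) : ∑ s, Lk k ω s = 1 := by
  have := Lk_sum k ω (fun _ => 1)
  simp only [mul_one, Finset.sum_const, Finset.card_fin, nsmul_eq_mul] at this
  rw [this]
  have : (n : ℝ) ≠ 0 := by exact_mod_cast hn.ne'
  field_simp

lemma prod_eq_exp (k : ℕ) {n : ℕ} (hn : 0 < n) (ω : Fin n → ℕ) :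
    ∏ i, (Lk k ω (pcode k (ω i)) / wk k (pcode k (ω i))) = Real.exp (n * Hk k (Lk k ω)) := by
  have hnr : (n : ℝ) ≠ 0 := by exact_mod_cast hn.ne'
  rw [prod_code k ω (fun s => Lk k ω s / wk k s), Hk, Finset.mul_sum, Real.exp_sum]
  refine Finset.prod_congr rfl fun s _ => ?_
  rcases Nat.eq_zero_or_pos (cnt k ω s) with h | h
  · simp [Lk, h]
  · have hL : 0 < Lk k ω s := by unfold Lk; positivity
    have : (n : ℝ) * (Lk k ω s * Real.log (Lk k ω s / wk k s)) =
      (cnt k ω s : ℝ) * Real.log (Lk k ω s / wk k s) := by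
      rw [← mul_assoc]; congr 1; unfold Lk; field_simp
    rw [this, Real.exp_nat_mul, Real.exp_log (div_pos hL (wk_pos k s))]

lemma cnt_lt (k : ℕ) {n : ℕ} (ω : Fin n → ℕ) (s) : cnt k ω s < n + 1 := by
  unfold cnt
  have := Finset.card_le_univ (Finset.univ.filter fun i => pcode k (ω i) = s)
  rw [Fintype.card_fin] at this
  omega

lemma sanov_upper (k : ℕ) (c : ℝ) {δ : ℝ} (hδ : 0 < δ) :
    ∀ᶠ n : ℕ in atTop, pr n {ω | c ≤ Hk k (Lk k ω)} ≤ Real.exp (-((c - δ) * n)) := by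
  classical
  have hρ : ∀ᶠ n : ℕ in atTop, ∀ s, rho k n s ≤ Real.exp (δ / 2) * wk k s := by
    rw [eventually_all]
    intro s
    suffices h : wk k s < Real.exp (δ / 2) * wk k s from
      ((rho_tendsto k s).eventually_lt_const h).mono fun n h => h.le
    have := wk_pos k s
    have h1 : 1 < Real.exp (δ / 2) := Real.one_lt_exp_iff.2 (by positivity)
    nlinarith
  have hpoly : ∀ᶠ n : ℕ in atTop, ((n : ℝ) + 1) ^ (Fintype.card (Fin k → Bool)) ≤ Real.exp (δ / 2 * n) := by
    set d := Fintype.card (Fin k → Bool)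
    have h1 := Real.tendsto_pow_mul_exp_neg_atTop_nhds_zero d
    have h2 : Tendsto (fun n : ℕ => δ / 2 * ((n : ℝ) + 1)) atTop atTop :=
      (tendsto_atTop_add_const_right _ _ tendsto_natCast_atTop_atTop).const_mul_atTop (by positivity)
    have h3 := (h1.comp h2).eventually_lt_const
      (show 0 < (δ/2) ^ d * Real.exp (-(δ/2)) by positivity)
    filter_upwards [h3] with n hn
    simp only [Function.comp] at hn
    rw [mul_pow, mul_assoc] at hn
    have h4 := lt_of_mul_lt_mul_left hn (by positivity)
    have h5 : Real.exp (-(δ / 2 * ((n : ℝ) + 1))) = Real.exp (-(δ/2)) * (Real.exp (δ / 2 * n))⁻¹ := by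
      rw [← Real.exp_neg, ← Real.exp_add]; ring_nf
    rw [h5, mul_comm, mul_assoc] at h4
    have h6 := lt_of_mul_lt_mul_left (h4.trans_eq (mul_one _).symm) (by positivity)
    rw [inv_mul_lt_iff₀ (by positivity), mul_one] at h6
    exact h6.le
  filter_upwards [hρ, hpoly, eventually_gt_atTop 0] with n hρ hpoly hn
  have hnr : (0 : ℝ) < n := by exact_mod_cast hn
  let u : ((Fin k → Bool) → Fin (n + 1)) → (Fin k → Bool) → ℝ := fun N s => ((N s : ℕ) : ℝ) / n / wk k s
  have hu0 : ∀ N s, 0 ≤ u N s := fun N s => by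
    have := wk_pos k s
    simp only [u]; positivity
  let T : Finset ((Fin k → Bool) → Fin (n + 1)) := Finset.univ.filter fun N => ∑ s, ((N s : ℕ) : ℝ) / n = 1
  let G : (Fin n → ℕ) → ℝ := fun ω => ∑ N ∈ T, Real.exp (-(n * c)) * ∏ i, u N (pcode k (ω i))
  have hG0 : ∀ ω : Fin n → ℕ, ∀ N ∈ T, 0 ≤ Real.exp (-(n * c)) * ∏ i, u N (pcode k (ω i)) := fun ω N _ =>
    mul_nonneg (Real.exp_pos _).le (Finset.prod_nonneg fun _ _ => hu0 _ _)
  refine (pr_le_of_weight n hn _ G (fun ω _ => Finset.sum_nonneg (hG0 ω)) ?_).trans ?_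
  · intro ω _ hω
    have hω : c ≤ Hk k (Lk k ω) := hω
    let N : (Fin k → Bool) → Fin (n + 1) := fun s => ⟨cnt k ω s, cnt_lt k ω s⟩
    have hN : N ∈ T := Finset.mem_filter.2 ⟨Finset.mem_univ _, Lk_one k hn ω⟩
    refine le_trans ?_ (Finset.single_le_sum (hG0 ω) hN)
    have e : ∏ i, u N (pcode k (ω i)) = Real.exp (n * Hk k (Lk k ω)) := prod_eq_exp k hn ω
    rw [e, ← Real.exp_add]
    apply Real.one_le_exp
    nlinarith
  · rw [div_le_iff₀ (by positivity)]
    calc ∑ ω ∈ Om n, G ω = ∑ N ∈ T, Real.exp (-(n * c)) * ∑ ω ∈ Om n, ∏ i, u N (pcode k (ω i)) := by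
          simp only [G]
          rw [Finset.sum_comm]
          simp_rw [Finset.mul_sum]
      _ ≤ ∑ N ∈ T, Real.exp (-(n * c)) * ((n : ℝ) ^ n * Real.exp (δ / 2 * n)) := by
          refine Finset.sum_le_sum fun N hN => ?_
          rw [sum_prod_code k n hn]
          have hb : ∑ s, rho k n s * u N s ≤ Real.exp (δ / 2) := by
            calc ∑ s, rho k n s * u N s ≤ ∑ s, Real.exp (δ / 2) * (((N s : ℕ) : ℝ) / n) := by
                  refine Finset.sum_le_sum fun s _ => ?_
                  have hw := wk_pos k s
                  calc rho k n s * u N s ≤ Real.exp (δ / 2) * wk k s * u N s :=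
                        mul_le_mul_of_nonneg_right (hρ s) (hu0 N s)
                    _ = _ := by simp only [u]; field_simp
              _ = _ := by rw [← Finset.mul_sum, (Finset.mem_filter.1 hN).2, mul_one]
          have h0 : 0 ≤ ∑ s, rho k n s * u N s := Finset.sum_nonneg fun s _ =>
            mul_nonneg (by unfold rho; positivity) (hu0 N s)
          gcongr
          calc _ ≤ Real.exp (δ / 2) ^ n := pow_le_pow_left₀ h0 hb n
            _ = _ := by rw [← Real.exp_nat_mul]; ring_nf
      _ = T.card * (Real.exp (-(n * c)) * ((n : ℝ) ^ n * Real.exp (δ / 2 * n))) := by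
          rw [Finset.sum_const, nsmul_eq_mul]
      _ ≤ Real.exp (δ / 2 * n) * (Real.exp (-(n * c)) * ((n : ℝ) ^ n * Real.exp (δ / 2 * n))) := by
          gcongr
          refine le_trans ?_ hpoly
          have : T.card ≤ (n + 1) ^ (Fintype.card (Fin k → Bool)) := by
            refine (Finset.card_le_univ _).trans ?_
            rw [Fintype.card_fun, Fintype.card_fin]
          exact_mod_cast this
      _ = _ := by
          have : Real.exp (-((c - δ) * n)) = Real.exp (δ / 2 * n) * (Real.exp (-(n * c)) * Real.exp (δ / 2 * n)) := by
            rw [← Real.exp_add, ← Real.exp_add]; ring_nf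
          rw [this]; ring

lemma chernoff (k n : ℕ) (hn : 0 < n) (τ r : (Fin k → Bool) → ℝ) (hr : ∀ s, rho k n s = r s)
    (hr0 : ∀ s, 0 < r s) (h0 : ∀ s, 0 ≤ τ s) (h1 : ∑ s, τ s = 1) (s0 : Fin k → Bool)
    {η lam : ℝ} (hη0 : 0 < η) (hη : η ≤ 1) (hl : |lam| = η / 2) :
    ∑ ω ∈ Om n, (∏ i, (τ (pcode k (ω i)) / r (pcode k (ω i)))) *
      Real.exp (lam * n * (Lk k ω s0 - τ s0)) ≤ (n : ℝ) ^ n * Real.exp (n * lam ^ 2) := by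
  have hnr : (n : ℝ) ≠ 0 := by exact_mod_cast hn.ne'
  let a : (Fin k → Bool) → ℝ := fun s => (if s = s0 then 1 else 0) - τ s0
  let u : (Fin k → Bool) → ℝ := fun s => τ s / r s * Real.exp (lam * a s)
  have e : ∀ ω : Fin n → ℕ, (∏ i, (τ (pcode k (ω i)) / r (pcode k (ω i)))) *
      Real.exp (lam * n * (Lk k ω s0 - τ s0)) = ∏ i, u (pcode k (ω i)) := by
    intro ω
    simp only [u]
    rw [Finset.prod_mul_distrib, ← Real.exp_sum, ← Finset.mul_sum]
    congr 2
    rw [mul_assoc]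
    congr 1
    have h := Lk_sum k ω a
    have h2 : ∑ s, Lk k ω s * a s = Lk k ω s0 - τ s0 := by
      simp only [a, mul_sub, Finset.sum_sub_distrib, ← Finset.sum_mul, Lk_one k hn ω]
      simp
    rw [← h2, h]
    field_simp
  simp_rw [e]
  rw [sum_prod_code k n hn]
  have hτ1 : ∀ s, τ s ≤ 1 := fun s => by
    rw [← h1]; exact Finset.single_le_sum (fun s _ => h0 s) (Finset.mem_univ s)
  have hle : ∑ s, rho k n s * u s ≤ Real.exp (lam ^ 2) := by
    calc ∑ s, rho k n s * u s = ∑ s, τ s * Real.exp (lam * a s) := by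
          refine Finset.sum_congr rfl fun s _ => ?_
          have := (hr0 s).ne'
          rw [hr]; simp only [u]; field_simp
      _ ≤ ∑ s, τ s * (1 + lam * a s + lam ^ 2) := by
          refine Finset.sum_le_sum fun s _ => mul_le_mul_of_nonneg_left ?_ (h0 s)
          have ha : |a s| ≤ 1 := by
            have h3 := h0 s0
            have h4 := hτ1 s0
            simp only [a]
            rw [abs_le]
            split_ifs <;> constructor <;> linarith
          have hla : |lam * a s| ≤ 1 := by
            rw [abs_mul, hl]
            nlinarith [abs_nonneg (a s)]
          have h5 := (abs_le.1 (Real.abs_exp_sub_one_sub_id_le hla)).2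
          have h6 : (lam * a s) ^ 2 ≤ lam ^ 2 := by
            rw [mul_pow]
            have : (a s) ^ 2 ≤ 1 := by rw [sq_le_one_iff_abs_le_one]; exact ha
            nlinarith [sq_nonneg lam]
          linarith
      _ = 1 + lam ^ 2 := by
          have h7 : ∑ s, τ s * a s = 0 := by
            simp only [a, mul_sub, Finset.sum_sub_distrib, ← Finset.sum_mul, h1]
            simp
          have h8 : ∀ s, τ s * (1 + lam * a s + lam ^ 2) = τ s * (1 + lam ^ 2) + lam * (τ s * a s) := fun s => by ring
          simp_rw [h8]
          rw [Finset.sum_add_distrib, ← Finset.sum_mul, ← Finset.mul_sum, h7, h1]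
          ring
      _ ≤ _ := by linarith [Real.add_one_le_exp (lam ^ 2)]
  rw [Real.exp_nat_mul]
  gcongr
  refine Finset.sum_nonneg fun s _ => ?_
  rw [hr]
  have := hr0 s
  have := h0 s
  simp only [u]; positivity

lemma sanov_lower0 (k : ℕ) (τ : (Fin k → Bool) → ℝ) (h0 : ∀ s, 0 ≤ τ s) (h1 : ∑ s, τ s = 1)
    {η δ : ℝ} (hη0 : 0 < η) (hη : η ≤ 1) (hδ : 0 < δ)
    (hηδ : η * ∑ s, |Real.log (τ s / wk k s)| < δ / 2) :
    ∀ᶠ n : ℕ in atTop, Real.exp (-((Hk k τ + δ) * n)) ≤ pr n {ω | ∀ s, |Lk k ω s - τ s| < η} := by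
  classical
  have hlim : Tendsto (fun n => ∑ s, (τ s * Real.log (τ s / rho k n s) + η * |Real.log (τ s / rho k n s)|)) atTop
      (𝓝 (∑ s, (τ s * Real.log (τ s / wk k s) + η * |Real.log (τ s / wk k s)|))) := by
    refine tendsto_finsetSum _ fun s _ => ?_
    have hl : Tendsto (fun n => Real.log (τ s / rho k n s)) atTop (𝓝 (Real.log (τ s / wk k s))) := by
      rcases (h0 s).eq_or_lt with h | h
      · simp [← h]
      · exact ((tendsto_const_nhds.div (rho_tendsto k s) (wk_pos k s).ne').log
          (div_pos h (wk_pos k s)).ne')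
    exact (hl.const_mul _).add (hl.abs.const_mul _)
  have hb : ∑ s, (τ s * Real.log (τ s / wk k s) + η * |Real.log (τ s / wk k s)|) < Hk k τ + δ / 2 := by
    rw [Finset.sum_add_distrib, ← Finset.mul_sum, Hk]; linarith
  have hpos : ∀ᶠ n : ℕ in atTop, ∀ s, 0 < rho k n s := by
    rw [eventually_all]
    exact fun s => (rho_tendsto k s).eventually (lt_mem_nhds (wk_pos k s))
  set d : ℝ := (Fintype.card (Fin k → Bool) : ℝ) with hd
  have hexp : ∀ c : ℝ, 0 < c → Tendsto (fun n : ℕ => Real.exp (-(c * n))) atTop (𝓝 0) := fun c hc =>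
    Real.tendsto_exp_neg_atTop_nhds_zero.comp (tendsto_natCast_atTop_atTop.const_mul_atTop hc)
  have hsm : ∀ᶠ n : ℕ in atTop, 2 * d * Real.exp (-(η ^ 2 / 4 * n)) < 1 / 2 := by
    have := (hexp (η ^ 2 / 4) (by positivity)).const_mul (2 * d)
    rw [mul_zero] at this
    exact this.eventually (gt_mem_nhds (by norm_num))
  have hsm2 : ∀ᶠ n : ℕ in atTop, Real.exp (-(δ / 2 * n)) < 1 / 2 :=
    (hexp (δ / 2) (by positivity)).eventually (gt_mem_nhds (by norm_num))
  filter_upwards [hlim.eventually (gt_mem_nhds hb), hpos, hsm, hsm2, eventually_gt_atTop 0] with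
    n hB hr0 hsm hsm2 hn
  have hnr : (0 : ℝ) < n := by exact_mod_cast hn
  set r := rho k n
  set B := ∑ s, (τ s * Real.log (τ s / r s) + η * |Real.log (τ s / r s)|)
  let P : (Fin n → ℕ) → ℝ := fun ω => ∏ i, (τ (pcode k (ω i)) / r (pcode k (ω i)))
  have hP0 : ∀ ω, 0 ≤ P ω := fun ω => Finset.prod_nonneg fun i _ => div_nonneg (h0 _) (hr0 _).le
  have htot : ∑ ω ∈ Om n, P ω = (n : ℝ) ^ n := by
    simp only [P]
    rw [sum_prod_code k n hn (fun s => τ s / r s)]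
    have : ∑ s, rho k n s * (τ s / r s) = 1 := by
      rw [← h1]
      refine Finset.sum_congr rfl fun s _ => ?_
      exact mul_div_cancel₀ _ (hr0 s).ne'
    rw [this, one_pow, mul_one]
  -- good bound
  have hgood : ∀ ω : Fin n → ℕ, (∀ s, |Lk k ω s - τ s| < η) → P ω ≤ Real.exp (n * B) := by
    intro ω hω
    simp only [P]
    rw [prod_code k ω (fun s => τ s / r s), Finset.mul_sum, Real.exp_sum]
    refine Finset.prod_le_prod (fun s _ => pow_nonneg (div_nonneg (h0 _) (hr0 _).le) _) fun s _ => ?_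
    rcases (h0 s).eq_or_lt with h | h
    · rw [← h]
      simp only [zero_div, Real.log_zero, mul_zero, abs_zero, add_zero, Real.exp_zero]
      exact pow_le_one₀ le_rfl zero_le_one
    · rw [← Real.exp_log (div_pos h (hr0 s)), ← Real.exp_nat_mul, Real.log_exp]
      apply Real.exp_le_exp.2
      set l := Real.log (τ s / r s)
      have e : (cnt k ω s : ℝ) = n * Lk k ω s := by unfold Lk; field_simp
      rw [e, mul_assoc]
      apply mul_le_mul_of_nonneg_left _ hnr.le
      have h2 : (Lk k ω s - τ s) * l ≤ η * |l| := by
        calc _ ≤ |(Lk k ω s - τ s) * l| := le_abs_self _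
          _ = |Lk k ω s - τ s| * |l| := abs_mul _ _
          _ ≤ _ := by gcongr; exact (hω s).le
      linarith
  have hch : ∀ ω : Fin n → ℕ, P ω ≤ (if (∀ s, |Lk k ω s - τ s| < η) then Real.exp (n * B) else 0) +
      ∑ s, (Real.exp (-(η ^ 2 / 2 * n)) * (P ω * Real.exp (η / 2 * n * (Lk k ω s - τ s))) +
        Real.exp (-(η ^ 2 / 2 * n)) * (P ω * Real.exp (-(η / 2) * n * (Lk k ω s - τ s)))) := by
    intro ω
    have hnn : ∀ s ∈ Finset.univ, 0 ≤ (Real.exp (-(η ^ 2 / 2 * n)) * (P ω * Real.exp (η / 2 * n * (Lk k ω s - τ s))) +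
        Real.exp (-(η ^ 2 / 2 * n)) * (P ω * Real.exp (-(η / 2) * n * (Lk k ω s - τ s)))) := fun s _ => by
      have := hP0 ω
      positivity
    split_ifs with h
    · exact (hgood ω h).trans (le_add_of_nonneg_right (Finset.sum_nonneg hnn))
    · push Not at h
      obtain ⟨s, hs⟩ := h
      rw [zero_add]
      refine le_trans ?_ (Finset.single_le_sum hnn (Finset.mem_univ s))
      have key : ∀ x : ℝ, η ^ 2 / 2 * n ≤ x → P ω ≤ Real.exp (-(η ^ 2 / 2 * n)) * (P ω * Real.exp x) := by
        intro x hx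
        have : 1 ≤ Real.exp (-(η ^ 2 / 2 * n)) * Real.exp x := by
          rw [← Real.exp_add]; apply Real.one_le_exp; linarith
        nlinarith [hP0 ω]
      have hz : ∀ x, 0 ≤ Real.exp (-(η ^ 2 / 2 * n)) * (P ω * Real.exp x) := fun x => by
        have := hP0 ω
        positivity
      rcases le_abs.1 hs with h | h
      · refine (key _ ?_).trans (le_add_of_nonneg_right (hz _))
        have : η / 2 * n * η ≤ η / 2 * n * (Lk k ω s - τ s) := by gcongr
        linarith
      · refine (key _ ?_).trans (le_add_of_nonneg_left (hz _))
        have : η / 2 * n * η ≤ η / 2 * n * (-(Lk k ω s - τ s)) := by gcongr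
        linarith
  have hsum := Finset.sum_le_sum fun ω (_ : ω ∈ Om n) => hch ω
  rw [htot, Finset.sum_add_distrib, Finset.sum_comm] at hsum
  have hbad : ∀ s ∈ Finset.univ, ∑ ω ∈ Om n, (Real.exp (-(η ^ 2 / 2 * n)) * (P ω * Real.exp (η / 2 * n * (Lk k ω s - τ s))) +
        Real.exp (-(η ^ 2 / 2 * n)) * (P ω * Real.exp (-(η / 2) * n * (Lk k ω s - τ s)))) ≤
        (n : ℝ) ^ n * (2 * Real.exp (-(η ^ 2 / 4 * n))) := by
    intro s _
    rw [Finset.sum_add_distrib, ← Finset.mul_sum, ← Finset.mul_sum]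
    have c1 := chernoff k n hn τ r (fun _ => rfl) hr0 h0 h1 s hη0 hη (lam := η / 2)
      (abs_of_pos (by positivity))
    have c2 := chernoff k n hn τ r (fun _ => rfl) hr0 h0 h1 s hη0 hη (lam := -(η / 2))
      (by rw [abs_neg]; exact abs_of_pos (by positivity))
    rw [neg_sq] at c2
    have d1 := mul_le_mul_of_nonneg_left c1 (Real.exp_pos (-(η ^ 2 / 2 * n))).le
    have d2 := mul_le_mul_of_nonneg_left c2 (Real.exp_pos (-(η ^ 2 / 2 * n))).le
    have e : Real.exp (-(η ^ 2 / 4 * n)) = Real.exp (-(η ^ 2 / 2 * n)) * Real.exp (n * (η / 2) ^ 2) := by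
      rw [← Real.exp_add]; ring_nf
    rw [e]
    refine (add_le_add d1 d2).trans (le_of_eq ?_)
    ring
  have hbad2 := Finset.sum_le_sum hbad
  rw [Finset.sum_const, Finset.card_univ, nsmul_eq_mul] at hbad2
  have hg : ∑ ω ∈ Om n, (if (∀ s, |Lk k ω s - τ s| < η) then Real.exp (n * B) else 0) =
      (n : ℝ) ^ n * pr n {ω | ∀ s, |Lk k ω s - τ s| < η} * Real.exp (n * B) := by
    rw [← Finset.sum_filter, Finset.sum_const, nsmul_eq_mul, pr]
    congr 1
    rw [mul_div_cancel₀ _ (by positivity)]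
    simp only [Set.mem_ofPred_eq]
  rw [hg] at hsum
  have hnn : (0 : ℝ) < (n : ℝ) ^ n := by positivity
  have hfin : (n : ℝ) ^ n * (1 / 2) ≤ (n : ℝ) ^ n * (pr n {ω | ∀ s, |Lk k ω s - τ s| < η} * Real.exp (n * B)) := by
    have : (n : ℝ) ^ n * (2 * d * Real.exp (-(η ^ 2 / 4 * n))) ≤ (n : ℝ) ^ n * (1 / 2) := by gcongr
    have e2 : (Fintype.card (Fin k → Bool) : ℝ) * ((n : ℝ) ^ n * (2 * Real.exp (-(η ^ 2 / 4 * n)))) =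
      (n : ℝ) ^ n * (2 * d * Real.exp (-(η ^ 2 / 4 * n))) := by rw [hd]; ring
    rw [e2] at hbad2
    linarith
  have hfin2 := le_of_mul_le_mul_left hfin hnn
  have hq := pr_nonneg n {ω | ∀ s, |Lk k ω s - τ s| < η}
  set q := pr n {ω | ∀ s, |Lk k ω s - τ s| < η}
  have e3 : Real.exp (-((Hk k τ + δ) * n)) = Real.exp (-(δ / 2 * n)) * Real.exp (-((Hk k τ + δ / 2) * n)) := by
    rw [← Real.exp_add]; ring_nf
  rw [e3]
  have h9 : Real.exp (-((Hk k τ + δ / 2) * n)) ≤ Real.exp (-(n * B)) := by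
    apply Real.exp_le_exp.2
    nlinarith
  calc _ ≤ (q * Real.exp (n * B)) * Real.exp (-(n * B)) := by
        gcongr
        linarith
    _ = q := by rw [mul_assoc, ← Real.exp_add]; simp

lemma sanov_lower (k : ℕ) (τ : (Fin k → Bool) → ℝ) (h0 : ∀ s, 0 ≤ τ s) (h1 : ∑ s, τ s = 1)
    {ε δ : ℝ} (hε : 0 < ε) (hδ : 0 < δ) :
    ∀ᶠ n : ℕ in atTop, Real.exp (-((Hk k τ + δ) * n)) ≤ pr n {ω | |Fk k (Lk k ω) - Fk k τ| < ε} := by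
  have hc : Continuous (Fk k) := by unfold Fk; fun_prop
  obtain ⟨η1, hη1, hF⟩ := Metric.continuousAt_iff.1 (hc.continuousAt (x := τ)) ε hε
  set M := ∑ s, |Real.log (τ s / wk k s)|
  have hM : 0 ≤ M := Finset.sum_nonneg fun s _ => abs_nonneg _
  set η := min (min η1 1) (δ / (4 * (M + 1)))
  have hη0 : 0 < η := by positivity
  have hηδ : η * M < δ / 2 := by
    have h2 : η ≤ δ / (4 * (M + 1)) := min_le_right _ _
    rw [le_div_iff₀ (by positivity)] at h2
    nlinarith
  filter_upwards [sanov_lower0 k τ h0 h1 hη0 ((min_le_left _ _).trans (min_le_right _ _)) hδ hηδ] with n hn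
  refine hn.trans (pr_mono n fun ω _ hω => ?_)
  have hω : ∀ s, |Lk k ω s - τ s| < η := hω
  refine hF ?_
  rw [dist_pi_lt_iff hη1]
  intro s
  exact (hω s).trans_le ((min_le_left _ _).trans (min_le_left _ _))

end LDP

open MeasureTheory ProbabilityTheory Filter Real
open scoped ENNReal

namespace LDP
open Topology

lemma VarLe.mono {α : Type*} [MeasurableSpace α] {μ ν : Measure α} {c d : ℝ} (h : VarLe μ ν c)
    (hcd : c ≤ d) : VarLe μ ν d := by
  intro φ
  intros
  refine (h φ ?_ ?_).trans ?_ <;> first | assumption | linarith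

lemma two_le_exp {δ : ℝ} (hδ : 0 < δ) : ∀ᶠ n : ℕ in atTop, 2 ≤ Real.exp (δ * n) :=
  (Real.tendsto_exp_atTop.comp (tendsto_natCast_atTop_atTop.const_mul_atTop hδ)).eventually_ge_atTop 2

lemma upper_core {ν : Measure ℝ} [IsProbabilityMeasure ν] (hsupp : ν (Set.Icc 0 1) = 1)
    (hν : CylHyp ν) (A : Set ℝ) (hA1 : A ⊆ Set.Icc 0 1) (c : ℝ)
    (hc : (c : EReal) < ⨅ x ∈ closure A, coprimeRate ν x) {δ : ℝ} (hδ : 0 < δ) :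
    ∀ᶠ n : ℕ in atTop, pr n {ω | Wn n ω ∈ A} ≤ Real.exp (-((c - δ) * n)) := by
  set K := {x | ∃ μ : Measure ℝ, IsProbabilityMeasure μ ∧ VarLe μ ν c ∧ FF μ = x} with hK
  have hKc : IsClosed K := closed_K hν c
  have hcomp : IsCompact (closure A) :=
    isCompact_Icc.of_isClosed_subset isClosed_closure (closure_minimal hA1 isClosed_Icc)
  have hdisj : closure A ⊆ Kᶜ := by
    rintro x hx ⟨μ, hμ, hv, hF⟩
    have hsm : μ (Set.Icc 0 1) = 1 := by
      rw [← prob_compl_eq_zero_iff measurableSet_Icc]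
      apply hv.ac
      rw [prob_compl_eq_zero_iff measurableSet_Icc]; exact hsupp
    have h1 : coprimeRate ν x ≤ relEntropy μ ν := iInf₂_le μ ⟨hμ, hsm, hF⟩
    have h2 : relEntropy μ ν ≤ c := var_iff.2 hv
    have h3 : (⨅ x ∈ closure A, coprimeRate ν x) ≤ coprimeRate ν x := iInf₂_le x hx
    exact absurd hc (not_lt.2 (h3.trans (h1.trans h2)))
  obtain ⟨e, he, hsub⟩ := hcomp.exists_cthickening_subset_open hKc.isOpen_compl hdisj
  obtain ⟨k1, hk1⟩ := approx_unif hν c (half_pos he)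
  obtain ⟨k2, hk2⟩ := tail c (half_pos he)
  set k := max k1 k2
  obtain ⟨N, hN⟩ := hk2 k (le_max_right _ _)
  filter_upwards [sanov_upper k c (half_pos hδ), eventually_ge_atTop N, two_le_exp (half_pos hδ),
    eventually_gt_atTop 0] with n h1 h2 h3 hn
  have h4 := hN n h2
  have hn0 : (0 : ℝ) ≤ n := n.cast_nonneg
  have hincl : pr n {ω | Wn n ω ∈ A} ≤
      pr n ({ω | e / 2 ≤ |Fk k (Lk k ω) - Wn n ω|} ∪ {ω | c ≤ Hk k (Lk k ω)}) := by
    refine pr_mono n fun ω _ hω => ?_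
    by_contra hcon
    simp only [Set.mem_union, Set.mem_ofPred_eq, not_or, not_le] at hcon hω
    obtain ⟨μ, hμ, hv, hcy⟩ := lift hν k (Lk k ω) (Lk_nonneg k ω) (Lk_one k hn ω)
    have hv' := hv.mono hcon.2.le
    have h5 := hk1 k (le_max_left _ _) μ hμ hv'
    rw [hcy] at h5
    have hmem : FF μ ∈ Metric.cthickening e (closure A) := by
      refine Metric.mem_cthickening_of_dist_le (FF μ) (Wn n ω) e _ (subset_closure hω) ?_
      rw [Real.dist_eq]
      have h6 := hcon.1
      rw [abs_lt] at h6
      rw [abs_le] at h5 ⊢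
      constructor <;> linarith
    exact hsub hmem ⟨μ, hμ, hv', rfl⟩
  refine hincl.trans ((pr_union n _ _).trans ((add_le_add h4 h1).trans ?_))
  have h7 : Real.exp (-(c * n)) ≤ Real.exp (-((c - δ / 2) * n)) := by
    apply Real.exp_le_exp.2
    nlinarith
  have h8 : Real.exp (-((c - δ) * n)) = Real.exp (δ / 2 * n) * Real.exp (-((c - δ / 2) * n)) := by
    rw [← Real.exp_add]; ring_nf
  rw [h8]
  nlinarith [Real.exp_pos (-((c - δ / 2) * n))]

lemma lower_core {ν : Measure ℝ} [IsProbabilityMeasure ν] (hν : CylHyp ν) (A : Set ℝ)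
    {μ : Measure ℝ} [IsProbabilityMeasure μ] (hx : FF μ ∈ interior A) (H : ℝ)
    (hH : relEntropy μ ν ≤ H) {δ : ℝ} (hδ : 0 < δ) :
    ∀ᶠ n : ℕ in atTop, Real.exp (-((H + δ) * n)) ≤ pr n {ω | Wn n ω ∈ A} := by
  have hv : VarLe μ ν H := var_iff.1 hH
  obtain ⟨e, he, hsub⟩ := Metric.mem_nhds_iff.1 (mem_interior_iff_mem_nhds.1 hx)
  have he3 : 0 < e / 3 := by positivity
  obtain ⟨k1, hk1⟩ := approx_unif hν H he3
  obtain ⟨k2, hk2⟩ := tail (H + δ) he3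
  set k := max k1 k2
  obtain ⟨N, hN⟩ := hk2 k (le_max_right _ _)
  have ha := hk1 k (le_max_left _ _) μ inferInstance hv
  have hd := data_processing hν k hv
  filter_upwards [sanov_lower k (cyl k μ) (cyl_nonneg k μ) (cyl_sum k μ) he3 (half_pos hδ),
    eventually_ge_atTop N, two_le_exp (half_pos hδ)] with n h1 h2 h3
  have h4 := hN n h2
  have hn0 : (0 : ℝ) ≤ n := n.cast_nonneg
  have hincl : pr n {ω | |Fk k (Lk k ω) - Fk k (cyl k μ)| < e / 3} ≤
      pr n ({ω | Wn n ω ∈ A} ∪ {ω | e / 3 ≤ |Fk k (Lk k ω) - Wn n ω|}) := by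
    refine pr_mono n fun ω _ hω => ?_
    by_contra hcon
    simp only [Set.mem_union, Set.mem_ofPred_eq, not_or, not_le] at hcon hω
    refine hcon.1 (hsub ?_)
    rw [Metric.mem_ball, Real.dist_eq]
    have h6 := hcon.2
    rw [abs_lt] at h6 hω ⊢
    rw [abs_le] at ha
    constructor <;> linarith
  have h5 := hincl.trans (pr_union n _ _)
  have h7 : Real.exp (-((H + δ / 2) * n)) ≤ Real.exp (-((Hk k (cyl k μ) + δ / 2) * n)) := by
    apply Real.exp_le_exp.2
    nlinarith
  have h8 : Real.exp (-((H + δ / 2) * n)) = Real.exp (δ / 2 * n) * Real.exp (-((H + δ) * n)) := by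
    rw [← Real.exp_add]; ring_nf
  nlinarith [Real.exp_pos (-((H + δ) * n))]

lemma scale_exp (n : ℕ) (hn : 0 < n) (c : ℝ) :
    (((n : ℝ)⁻¹ : ℝ) : EReal) * ENNReal.log (ENNReal.ofReal (Real.exp (-(c * n)))) = ((-c : ℝ) : EReal) := by
  have hnr : (n : ℝ) ≠ 0 := by exact_mod_cast hn.ne'
  rw [ENNReal.log_ofReal_of_pos (Real.exp_pos _), Real.log_exp, ← EReal.coe_mul]
  congr 1
  field_simp

lemma scale_mono (n : ℕ) {p q : ℝ} (h : p ≤ q) :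
    (((n : ℝ)⁻¹ : ℝ) : EReal) * ENNReal.log (ENNReal.ofReal p) ≤
    (((n : ℝ)⁻¹ : ℝ) : EReal) * ENNReal.log (ENNReal.ofReal q) := by
  refine mul_le_mul_of_nonneg_left (ENNReal.log_monotone (ENNReal.ofReal_le_ofReal h)) ?_
  exact_mod_cast (by positivity : (0 : ℝ) ≤ (n : ℝ)⁻¹)

end LDP

/-- Let `ν` be the law on `[0,1]` of `∑_i B_i 2^{-i}` where the
`B_i` are independent Bernoulli`(1/p_i)` digits, `p_i` the `i`-th prime (here `ν`
is pinned down by its cylinder probabilities).  The empirical coprimality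
densities `W_n = n⁻² ∑_{1≤i,j≤n} 1_{gcd(X_i,X_j)=1}` satisfy a large deviation
principle with speed `n` and rate function `I₁ = coprimeRate ν`: for every
Borel `A ⊆ [0,1]`,
`−inf_{x∈A°} I₁(x) ≤ liminf_n (1/n) log P(W_n ∈ A)` and
`limsup_n (1/n) log P(W_n ∈ A) ≤ −inf_{x∈closure A} I₁(x)`
(with `(1/n) log P = −∞` when the probability vanishes). -/
theorem ldp_coprime_pairs (ν : Measure ℝ) (hprob : IsProbabilityMeasure ν)
    (hsupp : ν (Set.Icc 0 1) = 1)
    (hν : ∀ (k : ℕ) (b : ℕ → Fin 2),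
      ν {a | ∀ j < k, digit j a = (b j : ℕ)} =
        ∏ j ∈ Finset.range k,
          (if b j = 1 then ((Nat.nth Nat.Prime j : ℝ≥0∞))⁻¹
            else 1 - ((Nat.nth Nat.Prime j : ℝ≥0∞))⁻¹))
    (A : Set ℝ) (hA : MeasurableSet A) (hA1 : A ⊆ Set.Icc 0 1) :
    -(⨅ x ∈ interior A, coprimeRate ν x) ≤
        Filter.liminf
          (fun n : ℕ =>
            (((n : ℝ)⁻¹ : ℝ) : EReal) *
              ENNReal.log
                ((unifVec n) {ω | (1 / (n : ℝ) ^ 2) *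
                  (∑ i : Fin n, ∑ j : Fin n,
                    if Nat.gcd (ω i) (ω j) = 1 then (1 : ℝ) else 0) ∈ A}))
          atTop ∧
      Filter.limsup
          (fun n : ℕ =>
            (((n : ℝ)⁻¹ : ℝ) : EReal) *
              ENNReal.log
                ((unifVec n) {ω | (1 / (n : ℝ) ^ 2) *
                  (∑ i : Fin n, ∑ j : Fin n,
                    if Nat.gcd (ω i) (ω j) = 1 then (1 : ℝ) else 0) ∈ A}))
          atTop
        ≤ -(⨅ x ∈ closure A, coprimeRate ν x) := by
  have hcyl : LDP.CylHyp ν := hν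
  constructor
  · rw [EReal.neg_le]
    refine le_iInf₂ fun x hx => le_iInf₂ fun μ hμ => ?_
    obtain ⟨hμp, -, hF⟩ := hμ
    refine EReal.le_of_forall_lt_iff_le.1 fun z hz => ?_
    obtain ⟨H, hH1, hH2⟩ := EReal.lt_iff_exists_real_btwn.1 hz
    have hHz : H < z := EReal.coe_lt_coe_iff.1 hH2
    have hx' : LDP.FF μ ∈ interior A := by rw [← hF] at hx; exact hx
    rw [EReal.neg_le, ← EReal.coe_neg]
    refine le_liminf_of_le (by isBoundedDefault) ?_
    filter_upwards [LDP.lower_core hcyl A hx' H hH1.le (sub_pos.2 hHz), eventually_gt_atTop 0]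
      with n h1 hn
    rw [LDP.unifVec_eq n hn, ← LDP.scale_exp n hn z]
    refine LDP.scale_mono n ?_
    rw [add_sub_cancel] at h1
    exact h1
  · rw [EReal.le_neg]
    refine EReal.ge_of_forall_gt_iff_ge.1 fun z hz => ?_
    obtain ⟨c, hc1, hc2⟩ := EReal.lt_iff_exists_real_btwn.1 hz
    have hcz : z < c := EReal.coe_lt_coe_iff.1 hc1
    rw [EReal.le_neg, ← EReal.coe_neg]
    refine limsup_le_of_le (by isBoundedDefault) ?_
    filter_upwards [LDP.upper_core hsupp hcyl A hA1 c hc2 (sub_pos.2 hcz), eventually_gt_atTop 0]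
      with n h1 hn
    rw [LDP.unifVec_eq n hn, ← LDP.scale_exp n hn z]
    refine LDP.scale_mono n ?_
    rw [sub_sub_cancel] at h1
    exact h1
end

section
/- As n → ∞, the density of triples whose first coordinate is coprime to each of the other two converges to an Euler product: (1/n³)·#{(a,b,c) ∈ {1,…,n}³ : gcd(a,b) = 1 and gcd(a,c) = 1} → ∏_{p prime} (1 − 2/p² + 1/p³). -/
open Filter Real

/-- no prime of `S` divides both `a,b` or both `a,c` -/
def SGood (S : Finset Nat.Primes) (t : ℕ × ℕ × ℕ) : Prop :=
  ∀ p ∈ S, ¬ ((p : ℕ) ∣ t.1 ∧ (p : ℕ) ∣ t.2.1) ∧ ¬ ((p : ℕ) ∣ t.1 ∧ (p : ℕ) ∣ t.2.2)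

/-- the box -/
def box (n : ℕ) : Finset (ℕ × ℕ × ℕ) :=
  (Finset.Icc 1 n) ×ˢ (Finset.Icc 1 n) ×ˢ (Finset.Icc 1 n)

open Classical in
/-- counting function -/
noncomputable def CC (S : Finset Nat.Primes) (d e f n : ℕ) : ℝ :=
  ∑ t ∈ box n, if (d ∣ t.1 ∧ e ∣ t.2.1 ∧ f ∣ t.2.2) ∧ SGood S t then (1 : ℝ) else 0

lemma card_mult (d n : ℕ) : ((Finset.Icc 1 n).filter (fun a => d ∣ a)).card = n / d := by
  have := Nat.Ioc_filter_dvd_card_eq_div n d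
  rw [← this]
  rfl

lemma CC_empty (d e f n : ℕ) :
    CC ∅ d e f n = ((n / d : ℕ) : ℝ) * ((n / e : ℕ) : ℝ) * ((n / f : ℕ) : ℝ) := by
  classical
  unfold CC box
  rw [← card_mult d n, ← card_mult e n, ← card_mult f n, Finset.sum_boole, mul_assoc]
  rw [← Nat.cast_mul, ← Nat.cast_mul, ← Finset.card_product, ← Finset.card_product]
  congr 2
  ext ⟨a, b, c⟩
  simp [SGood]
  tauto

lemma tendsto_div (d : ℕ) (hd : 0 < d) :
    Tendsto (fun n : ℕ => ((n / d : ℕ) : ℝ) / n) atTop (nhds (1 / (d : ℝ))) := by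
  have h := (tendsto_nat_floor_mul_div_atTop (R := ℝ) (a := 1 / (d : ℝ))
    (by positivity)).comp tendsto_natCast_atTop_atTop
  refine h.congr fun n => ?_
  simp only [Function.comp]
  rw [← Nat.floor_div_eq_div (K := ℝ) n d]
  congr 3
  ring

lemma CC_insert (S : Finset Nat.Primes) (p : Nat.Primes) (d e f n : ℕ)
    (hd : Nat.Coprime p d) (he : Nat.Coprime p e) (hf : Nat.Coprime p f) :
    CC (insert p S) d e f n = CC S d e f n - CC S (p * d) (p * e) f n
      - CC S (p * d) e (p * f) n + CC S (p * d) (p * e) (p * f) n := by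
  classical
  unfold CC
  rw [← Finset.sum_sub_distrib, ← Finset.sum_sub_distrib, ← Finset.sum_add_distrib]
  refine Finset.sum_congr rfl fun t _ => ?_
  have key : ∀ x k : ℕ, Nat.Coprime p x → ((p : ℕ) * x ∣ k ↔ (p : ℕ) ∣ k ∧ x ∣ k) := fun x k h =>
    ⟨fun H => ⟨dvd_of_mul_right_dvd H, dvd_of_mul_left_dvd H⟩,
      fun H => h.mul_dvd_of_dvd_of_dvd H.1 H.2⟩
  have hg : SGood (insert p S) t ↔ (¬ ((p : ℕ) ∣ t.1 ∧ (p : ℕ) ∣ t.2.1) ∧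
      ¬ ((p : ℕ) ∣ t.1 ∧ (p : ℕ) ∣ t.2.2)) ∧ SGood S t := by
    unfold SGood
    rw [Finset.forall_mem_insert]
  simp only [hg, key _ _ hd, key _ _ he, key _ _ hf]
  by_cases h1 : d ∣ t.1 ∧ e ∣ t.2.1 ∧ f ∣ t.2.2
  · by_cases h2 : SGood S t
    · by_cases h3 : (p : ℕ) ∣ t.1 <;> by_cases h4 : (p : ℕ) ∣ t.2.1 <;>
        by_cases h5 : (p : ℕ) ∣ t.2.2 <;> simp [h1, h2, h3, h4, h5]
    · simp [h2]
  · rw [if_neg, if_neg, if_neg, if_neg, if_neg] <;> first | tauto | norm_num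

lemma CC_tendsto (S : Finset Nat.Primes) : ∀ d e f : ℕ, 0 < d → 0 < e → 0 < f →
    (∀ p ∈ S, Nat.Coprime p d ∧ Nat.Coprime p e ∧ Nat.Coprime p f) →
    Tendsto (fun n : ℕ => CC S d e f n / (n : ℝ) ^ 3) atTop
      (nhds (1 / ((d : ℝ) * e * f) * ∏ p ∈ S, (1 - 2 / (p : ℝ) ^ 2 + 1 / (p : ℝ) ^ 3))) := by
  classical
  induction S using Finset.induction_on with
  | empty =>
    intro d e f hd he hf _
    have h := ((tendsto_div d hd).mul (tendsto_div e he)).mul (tendsto_div f hf)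
    have e1 : 1 / ((d : ℝ) * e * f) * ∏ p ∈ (∅ : Finset Nat.Primes),
        (1 - 2 / (p : ℝ) ^ 2 + 1 / (p : ℝ) ^ 3) = 1 / (d : ℝ) * (1 / (e : ℝ)) * (1 / (f : ℝ)) := by
      simp; ring
    rw [e1]
    refine h.congr fun n => ?_
    rw [CC_empty]
    simp only [div_eq_mul_inv]
    ring
  | insert p S hp ih =>
    intro d e f hd he hf h
    have hpp : 0 < (p : ℕ) := p.2.pos
    obtain ⟨h1, h2, h3⟩ := h p (Finset.mem_insert_self _ _)
    have hS : ∀ q ∈ S, Nat.Coprime q d ∧ Nat.Coprime q e ∧ Nat.Coprime q f := fun q hq =>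
      h q (Finset.mem_insert_of_mem hq)
    have hq : ∀ q ∈ S, Nat.Coprime (q : ℕ) p := fun q hq => by
      rw [Nat.coprime_primes q.2 p.2]
      intro hh
      exact hp ((Subtype.ext hh : q = p) ▸ hq)
    have t1 := ih d e f hd he hf hS
    have t2 := ih (p * d) (p * e) f (by positivity) (by positivity) hf (fun q h => 
      ⟨(hq q h).mul_right (hS q h).1, (hq q h).mul_right (hS q h).2.1, (hS q h).2.2⟩)
    have t3 := ih (p * d) e (p * f) (by positivity) he (by positivity) (fun q h => 
      ⟨(hq q h).mul_right (hS q h).1, (hS q h).2.1, (hq q h).mul_right (hS q h).2.2⟩)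
    have t4 := ih (p * d) (p * e) (p * f) (by positivity) (by positivity) (by positivity)
      (fun q h => ⟨(hq q h).mul_right (hS q h).1, (hq q h).mul_right (hS q h).2.1,
        (hq q h).mul_right (hS q h).2.2⟩)
    have t := ((t1.sub t2).sub t3).add t4
    rw [Finset.prod_insert hp]
    convert t using 2 with n
    · rw [CC_insert S p d e f n h1 h2 h3]
      ring
    · have : (p : ℝ) ≠ 0 := by exact_mod_cast hpp.ne'
      have : (d : ℝ) ≠ 0 := by exact_mod_cast hd.ne'
      have : (e : ℝ) ≠ 0 := by exact_mod_cast he.ne'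
      have : (f : ℝ) ≠ 0 := by exact_mod_cast hf.ne'
      generalize (∏ p ∈ S, (1 - 2 / (p : ℝ) ^ 2 + 1 / (p : ℝ) ^ 3)) = P
      push_cast
      field_simp
      ring

lemma summ_primes : Summable (fun p : Nat.Primes => 1 / (p : ℝ) ^ 2) := by
  have h : Summable (fun n : ℕ => 1 / (n : ℝ) ^ 2) := Real.summable_one_div_nat_pow.2 (by norm_num)
  exact h.comp_injective Subtype.val_injective

lemma summ_f : Summable (fun p : Nat.Primes => -2 / (p : ℝ) ^ 2 + 1 / (p : ℝ) ^ 3) := by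
  have h : Summable (fun n : ℕ => 1 / (n : ℝ) ^ 3) := Real.summable_one_div_nat_pow.2 (by norm_num)
  have h3 : Summable (fun p : Nat.Primes => 1 / (p : ℝ) ^ 3) :=
    h.comp_injective Subtype.val_injective
  refine ((summ_primes.mul_left (-2)).add h3).congr fun p => ?_
  ring

lemma prod_tendsto : Tendsto (fun S : Finset Nat.Primes =>
    ∏ p ∈ S, (1 - 2 / (p : ℝ) ^ 2 + 1 / (p : ℝ) ^ 3)) atTop
    (nhds (∏' p : Nat.Primes, (1 - 2 / (p : ℝ) ^ 2 + 1 / (p : ℝ) ^ 3))) := by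
  have h := (Real.multipliable_one_add_of_summable summ_f)
  have e : (fun p : Nat.Primes => (1 + (-2 / (p : ℝ) ^ 2 + 1 / (p : ℝ) ^ 3))) =
    fun p : Nat.Primes => (1 - 2 / (p : ℝ) ^ 2 + 1 / (p : ℝ) ^ 3) := by
    funext p; ring
  rw [e] at h
  exact h.hasProd

/-- the count in the theorem -/
noncomputable def NN (n : ℕ) : ℝ :=
  (((box n).filter (fun t : ℕ × ℕ × ℕ =>
    Nat.gcd t.1 t.2.1 = 1 ∧ Nat.gcd t.1 t.2.2 = 1)).card : ℝ)

lemma NN_le (S : Finset Nat.Primes) (n : ℕ) : NN n ≤ CC S 1 1 1 n := by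
  classical
  unfold NN CC
  rw [Finset.sum_boole]
  norm_cast
  refine Finset.card_le_card fun t ht => ?_
  rw [Finset.mem_filter] at ht ⊢
  refine ⟨ht.1, by simp, fun p _ => ⟨fun h => ?_, fun h => ?_⟩⟩
  · exact Nat.not_coprime_of_dvd_of_dvd p.2.one_lt h.1 h.2 ht.2.1
  · exact Nat.not_coprime_of_dvd_of_dvd p.2.one_lt h.1 h.2 ht.2.2

lemma CC_bound (d n : ℕ) : CC ∅ d d 1 n ≤ (n : ℝ) ^ 3 * (1 / (d : ℝ) ^ 2) ∧
    CC ∅ d 1 d n ≤ (n : ℝ) ^ 3 * (1 / (d : ℝ) ^ 2) := by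
  have h : ((n / d : ℕ) : ℝ) ≤ n / d := Nat.cast_div_le
  have h2 : ((n / d : ℕ) : ℝ) * ((n / d : ℕ) : ℝ) * n ≤ (n / d : ℝ) * (n / d) * n := by gcongr
  have h3 : (n / d : ℝ) * (n / d) * n = (n : ℝ) ^ 3 * (1 / (d : ℝ) ^ 2) := by
    simp only [div_eq_mul_inv]; ring
  rw [CC_empty, CC_empty, Nat.div_one, ← h3]
  exact ⟨h2, by linarith⟩

lemma le_NN (S : Finset Nat.Primes) (n : ℕ) : CC S 1 1 1 n ≤
    NN n + (n : ℝ) ^ 3 * (2 * ∑' p : {p // p ∉ S}, 1 / ((p : Nat.Primes) : ℝ) ^ 2) := by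
  classical
  let T0 : Finset Nat.Primes := (Finset.range (n + 1)).subtype Nat.Prime
  let T : Finset {p // p ∉ S} := T0.subtype (fun p => p ∉ S)
  have hT : ∑ p ∈ T, 1 / ((p : Nat.Primes) : ℝ) ^ 2 ≤
      ∑' p : {p // p ∉ S}, 1 / ((p : Nat.Primes) : ℝ) ^ 2 :=
    (summ_primes.comp_injective Subtype.val_injective).sum_le_tsum T
      (fun p _ => by positivity)
  have h1 : CC S 1 1 1 n ≤ NN n +
      ∑ p ∈ T, (CC ∅ (p : Nat.Primes) (p : Nat.Primes) 1 n
        + CC ∅ (p : Nat.Primes) 1 (p : Nat.Primes) n) := by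
    unfold NN CC
    rw [← Finset.sum_boole]
    simp_rw [← Finset.sum_add_distrib]
    rw [Finset.sum_comm, ← Finset.sum_add_distrib]
    refine Finset.sum_le_sum fun t ht => ?_
    have hnn : ∀ p ∈ T, (0 : ℝ) ≤
        (if ((((p : Nat.Primes) : ℕ) ∣ t.1 ∧ ((p : Nat.Primes) : ℕ) ∣ t.2.1 ∧ 1 ∣ t.2.2) ∧ SGood ∅ t)
          then (1 : ℝ) else 0) +
        (if ((((p : Nat.Primes) : ℕ) ∣ t.1 ∧ 1 ∣ t.2.1 ∧ ((p : Nat.Primes) : ℕ) ∣ t.2.2) ∧ SGood ∅ t)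
          then (1 : ℝ) else 0) := fun p _ => by
      split_ifs <;> norm_num
    have hs := Finset.sum_nonneg hnn
    by_cases hg : SGood S t
    swap
    · rw [if_neg (by tauto)]
      exact add_nonneg (by split_ifs <;> norm_num) hs
    by_cases hc : Nat.gcd t.1 t.2.1 = 1 ∧ Nat.gcd t.1 t.2.2 = 1
    · rw [if_pos (by simpa using hg), if_pos hc]
      linarith
    rw [if_pos (by simpa using hg), if_neg hc, zero_add]
    have hbox : 1 ≤ t.1 ∧ t.1 ≤ n := by
      simp only [box, Finset.mem_product, Finset.mem_Icc] at ht
      exact ht.1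
    have hmem : ∀ p : ℕ, (hp : p.Prime) → (hd : p ∣ t.1) → (hn : (⟨p, hp⟩ : Nat.Primes) ∉ S) →
        (⟨⟨p, hp⟩, hn⟩ : {p // p ∉ S}) ∈ T := by
      intro p hp hd hn
      have := Nat.le_of_dvd hbox.1 hd
      refine Finset.mem_subtype.2 ?_
      refine (Finset.mem_subtype (p := Nat.Prime) (a := ⟨p, hp⟩)).2 ?_
      rw [Finset.mem_range]
      exact Nat.lt_succ_of_le (this.trans hbox.2)
    have e0 : SGood ∅ t := by simp [SGood]
    rw [not_and_or] at hc
    rcases hc with hc | hc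
    · obtain ⟨p, hp, hd⟩ := Nat.exists_prime_and_dvd hc
      have ha := hd.trans (Nat.gcd_dvd_left _ _)
      have hb := hd.trans (Nat.gcd_dvd_right _ _)
      have hn : (⟨p, hp⟩ : Nat.Primes) ∉ S := fun h => (hg _ h).1 ⟨ha, hb⟩
      refine le_trans ?_ (Finset.single_le_sum hnn (hmem p hp ha hn))
      rw [if_pos ⟨⟨ha, hb, one_dvd _⟩, e0⟩]
      split_ifs <;> norm_num
    · obtain ⟨p, hp, hd⟩ := Nat.exists_prime_and_dvd hc
      have ha := hd.trans (Nat.gcd_dvd_left _ _)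
      have hb := hd.trans (Nat.gcd_dvd_right _ _)
      have hn : (⟨p, hp⟩ : Nat.Primes) ∉ S := fun h => (hg _ h).2 ⟨ha, hb⟩
      refine le_trans ?_ (Finset.single_le_sum hnn (hmem p hp ha hn))
      rw [add_comm, if_pos ⟨⟨ha, one_dvd _, hb⟩, e0⟩]
      split_ifs <;> norm_num
  have h2 : ∑ p ∈ T, (CC ∅ (p : Nat.Primes) (p : Nat.Primes) 1 n
        + CC ∅ (p : Nat.Primes) 1 (p : Nat.Primes) n) ≤
      ∑ p ∈ T, (n : ℝ) ^ 3 * (2 * (1 / ((p : Nat.Primes) : ℝ) ^ 2)) := by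
    refine Finset.sum_le_sum fun p _ => ?_
    have := CC_bound (p : Nat.Primes) n
    linarith [this.1, this.2]
  rw [← Finset.mul_sum, ← Finset.mul_sum] at h2
  have h3 : (n : ℝ) ^ 3 * (2 * ∑ p ∈ T, 1 / ((p : Nat.Primes) : ℝ) ^ 2) ≤
    (n : ℝ) ^ 3 * (2 * ∑' p : {p // p ∉ S}, 1 / ((p : Nat.Primes) : ℝ) ^ 2) := by gcongr
  linarith

lemma main_aux : Tendsto (fun n : ℕ => NN n / (n : ℝ) ^ 3) atTop
    (nhds (∏' p : Nat.Primes, (1 - 2 / (p : ℝ) ^ 2 + 1 / (p : ℝ) ^ 3))) := by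
  rw [Metric.tendsto_atTop']
  intro ε hε
  have htail := tendsto_tsum_compl_atTop_zero (fun p : Nat.Primes => 1 / (p : ℝ) ^ 2)
  have a1 := (Metric.tendsto_nhds.1 htail) (ε / 8) (by positivity)
  have a2 := (Metric.tendsto_nhds.1 prod_tendsto) (ε / 4) (by positivity)
  obtain ⟨S, hS1, hS2⟩ := (a1.and a2).exists
  have hC := CC_tendsto S 1 1 1 one_pos one_pos one_pos (by simp)
  obtain ⟨N, hN⟩ := (Metric.tendsto_atTop.1 hC) (ε / 4) (by positivity)
  refine ⟨N, fun n hn => ?_⟩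
  have hn' := hN n hn.le
  have hpos : (0 : ℝ) < (n : ℝ) ^ 3 := by
    have : 0 < n := by omega
    positivity
  have b1 : NN n / (n : ℝ) ^ 3 ≤ CC S 1 1 1 n / (n : ℝ) ^ 3 := by
    gcongr; exact NN_le S n
  have b2 : CC S 1 1 1 n / (n : ℝ) ^ 3 ≤ NN n / (n : ℝ) ^ 3 +
      2 * ∑' p : {p // p ∉ S}, 1 / ((p : Nat.Primes) : ℝ) ^ 2 := by
    rw [div_le_iff₀ hpos, add_mul, div_mul_cancel₀ _ hpos.ne']
    linarith [le_NN S n]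
  rw [Real.dist_eq, abs_lt] at *
  simp only [Nat.cast_one, mul_one, div_one, one_mul, sub_zero] at hn' hS1
  constructor <;> linarith [hS1.1, hS1.2, hS2.1, hS2.2, hn'.1, hn'.2]

/-- The density of triples `(a,b,c) ∈ {1,…,n}³` with
`gcd(a,b) = 1` and `gcd(a,c) = 1` converges to `∏_p (1 − 2/p² + 1/p³)`. -/
theorem density_pairwise_coprime_triples :
    Tendsto
      (fun n : ℕ =>
        ((((Finset.Icc 1 n) ×ˢ (Finset.Icc 1 n) ×ˢ (Finset.Icc 1 n)).filter
            (fun t : ℕ × ℕ × ℕ =>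
              Nat.gcd t.1 t.2.1 = 1 ∧ Nat.gcd t.1 t.2.2 = 1)).card : ℝ) / (n : ℝ) ^ 3)
      atTop
      (nhds (∏' p : Nat.Primes, (1 - 2 / (p : ℝ) ^ 2 + 1 / (p : ℝ) ^ 3))) := by
  exact main_aux
end

section
/- As n → ∞, n^{-3}·Var( ∑_{1≤i<j≤n} 1_{gcd(X_i,X_j)=1} ) → ∏_{p prime} (1 − 2/p² + 1/p³) − 36/π⁴. -/
open MeasureTheory ProbabilityTheory Filter Real

section NT
open ArithmeticFunction Finset
open scoped ArithmeticFunction.Moebius ArithmeticFunction.zeta ArithmeticFunction.sigma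

lemma aux_card_divisors (x : ℕ) : (x.divisors.card : ℝ) ≤ 2 * Real.sqrt x := by
  have h1 : x.divisors.card ≤ 2 * Nat.sqrt x := by
    have hsub : x.divisors ⊆ (Finset.Icc 1 (Nat.sqrt x)) ∪ ((Finset.Icc 1 (Nat.sqrt x)).image (fun d => x / d)) := by
      intro d hd
      have hd' := Nat.mem_divisors.1 hd
      obtain ⟨⟨e, he⟩, hx⟩ := hd'
      have hd0 : 0 < d := Nat.pos_of_mem_divisors hd
      have he0 : 0 < e := Nat.pos_of_ne_zero (by rintro rfl; simp at he; exact hx he)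
      rw [Finset.mem_union]
      by_cases h : d ≤ Nat.sqrt x
      · left; exact Finset.mem_Icc.2 ⟨hd0, h⟩
      · right
        refine Finset.mem_image.2 ⟨e, Finset.mem_Icc.2 ⟨he0, ?_⟩, ?_⟩
        · by_contra h2
          push Not at h h2
          have := Nat.lt_succ_sqrt x
          have h3 : (Nat.sqrt x + 1) * (Nat.sqrt x + 1) ≤ d * e := Nat.mul_le_mul h h2
          simp only [Nat.succ_eq_add_one] at this
          omega
        · rw [he]; exact Nat.mul_div_cancel _ he0
    calc _ ≤ _ := Finset.card_le_card hsub
      _ ≤ _ := Finset.card_union_le _ _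
      _ ≤ Nat.sqrt x + Nat.sqrt x := by
        gcongr
        · simp
        · exact Finset.card_image_le.trans (by simp)
      _ = _ := by ring
  have h2 : (Nat.sqrt x : ℝ) ≤ Real.sqrt x := Real.nat_sqrt_le_real_sqrt
  have h3 : (x.divisors.card : ℝ) ≤ 2 * (Nat.sqrt x : ℝ) := by exact_mod_cast h1
  linarith

lemma aux_floor (m : ℕ) : Tendsto (fun n : ℕ => ((n / m : ℕ) : ℝ) / n) atTop (nhds (1 / (m:ℝ))) := by
  have h := (tendsto_nat_floor_mul_div_atTop (R := ℝ) (a := 1 / (m:ℝ)) (by positivity)).comp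
    tendsto_natCast_atTop_atTop (α := ℕ)
  refine h.congr fun n => ?_
  simp only [Function.comp]
  rw [one_div_mul_eq_div, Nat.floor_div_eq_div]

lemma aux_mean (k : ArithmeticFunction ℝ) (hs : Summable fun m : ℕ => |k m| / m) :
    Tendsto (fun n : ℕ => (∑ x ∈ Ioc 0 n, (k * (ζ : ArithmeticFunction ℝ)) x) / n) atTop
      (nhds (∑' m : ℕ, k m / m)) := by
  have h := tendsto_tsum_of_dominated_convergence (𝓕 := atTop)
    (f := fun (n m : ℕ) => k m * (((n / m : ℕ) : ℝ) / n)) (g := fun m : ℕ => k m / m) hs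
    (fun m => by
      have := (aux_floor m).const_mul (k m)
      rw [mul_one_div] at this
      exact this)
    (Eventually.of_forall fun n m => by
      rw [norm_mul, Real.norm_eq_abs, div_eq_mul_inv |k m|]
      gcongr
      rw [Real.norm_of_nonneg (by positivity)]
      rcases Nat.eq_zero_or_pos n with rfl | hn
      · simp
      · have : (0:ℝ) < n := by exact_mod_cast hn
        rw [div_le_iff₀ this, inv_mul_eq_div]
        exact Nat.cast_div_le)
  refine h.congr fun n => ?_
  rw [sum_Ioc_mul_zeta_eq_sum, Finset.sum_div, tsum_eq_sum (s := Ioc 0 n)]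
  · refine Finset.sum_congr rfl fun m _ => by ring
  · intro m hm
    rcases Nat.eq_zero_or_pos m with rfl | hm0
    · simp
    · have : n < m := by
        by_contra h
        exact hm (Finset.mem_Ioc.2 ⟨hm0, not_lt.1 h⟩)
      simp [Nat.div_eq_of_lt this]

noncomputable def muD : ArithmeticFunction ℝ := ⟨fun d => (μ d : ℝ) / d, by simp⟩

lemma muD_apply (d : ℕ) : muD d = (μ d : ℝ) / d := rfl

lemma muD_mult : muD.IsMultiplicative := by
  refine ⟨by simp [muD_apply], fun {m n} h => ?_⟩
  rw [muD_apply, muD_apply, muD_apply, isMultiplicative_moebius.map_mul_of_coprime h]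
  push_cast
  ring

noncomputable def rho : ArithmeticFunction ℝ := muD * (ζ : ArithmeticFunction ℝ)

lemma rho_mult : rho.IsMultiplicative := muD_mult.mul isMultiplicative_zeta.natCast

lemma mul_zeta_prime_pow (f : ArithmeticFunction ℝ) {p : ℕ} (hp : p.Prime) (j : ℕ) :
    (f * (ζ : ArithmeticFunction ℝ)) (p ^ j) = ∑ i ∈ range (j+1), f (p ^ i) := by
  rw [coe_mul_zeta_apply, Nat.sum_divisors_prime_pow hp]

lemma rho_prime_pow {p : ℕ} (hp : p.Prime) (j : ℕ) : rho (p ^ (j+1)) = 1 - 1 / p := by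
  rw [rho, mul_zeta_prime_pow _ hp, Finset.sum_range_succ', Finset.sum_range_succ']
  rw [Finset.sum_eq_zero]
  · simp [muD_apply, moebius_apply_prime hp]; ring
  · intro i _
    rw [muD_apply, moebius_apply_prime_pow hp (by omega)]
    simp

lemma rho_bound (x : ℕ) : 0 ≤ rho x ∧ rho x ≤ 1 := by
  induction x using Nat.recOnPosPrimePosCoprime with
  | zero => simp
  | one => simp [rho_mult.1]
  | prime_pow p n hp hn =>
    obtain ⟨j, rfl⟩ : ∃ j, n = j + 1 := ⟨n - 1, by omega⟩
    rw [rho_prime_pow hp]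
    have : (1:ℝ) ≤ p := by exact_mod_cast hp.one_lt.le
    have h2 : 1 / (p:ℝ) ≤ 1 := by rw [div_le_one (by linarith)]; exact this
    have h3 : 0 ≤ 1 / (p:ℝ) := by positivity
    constructor <;> linarith
  | coprime a b ha hb hab iha ihb =>
    rw [rho_mult.map_mul_of_coprime hab]
    exact ⟨mul_nonneg iha.1 ihb.1, mul_le_one₀ iha.2 ihb.1 ihb.2⟩

noncomputable def kk : ArithmeticFunction ℝ := (μ : ArithmeticFunction ℝ) * rho.pmul rho

lemma kk_mult : kk.IsMultiplicative :=
  isMultiplicative_moebius.intCast.mul (rho_mult.pmul rho_mult)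

lemma kk_zeta : kk * (ζ : ArithmeticFunction ℝ) = rho.pmul rho := by
  rw [kk, mul_comm, ← mul_assoc, coe_zeta_mul_coe_moebius, one_mul]

lemma kk_succ {p : ℕ} (hp : p.Prime) (j : ℕ) :
    kk (p ^ (j+1)) = rho (p ^ (j+1)) ^ 2 - rho (p ^ j) ^ 2 := by
  have h1 := mul_zeta_prime_pow kk hp (j+1)
  have h2 := mul_zeta_prime_pow kk hp j
  rw [Finset.sum_range_succ, ← h2, kk_zeta, pmul_apply, pmul_apply] at h1
  linarith

lemma kk_prime {p : ℕ} (hp : p.Prime) : kk p = - 2 / p + 1 / p ^ 2 := by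
  have h := kk_succ hp 0
  rw [rho_prime_pow hp] at h
  simp only [zero_add, pow_one, pow_zero, rho_mult.1] at h
  rw [h]; ring

lemma kk_prime_pow {p : ℕ} (hp : p.Prime) (j : ℕ) : kk (p ^ (j+2)) = 0 := by
  rw [kk_succ hp, rho_prime_pow hp, rho_prime_pow hp]; ring

lemma kk_bound (x : ℕ) : |kk x| ≤ x.divisors.card / x := by
  induction x using Nat.recOnPosPrimePosCoprime with
  | zero => simp
  | one => simp [kk_mult.1]
  | prime_pow p n hp hn =>
    rcases n with _ | _ | j
    · omega
    · simp only [zero_add, pow_one]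
      rw [kk_prime hp, hp.divisors, Finset.card_pair hp.one_lt.ne]
      have hp1 : (1:ℝ) ≤ p := by exact_mod_cast hp.one_lt.le
      have h3 : 1 / (p:ℝ)^2 ≤ 1 / p := by
        apply one_div_le_one_div_of_le (by linarith); nlinarith
      have h4 : 0 ≤ 1 / (p:ℝ)^2 := by positivity
      have e1 : -2 / (p:ℝ) = -2 * (1 / p) := by ring
      have e2 : ((2:ℕ):ℝ) / (p:ℝ) = 2 * (1 / p) := by push_cast; ring
      have h5 : 0 ≤ 1 / (p:ℝ) := by positivity
      rw [e1, e2, abs_le]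
      constructor <;> linarith
    · rw [kk_prime_pow hp]; simp; positivity
  | coprime a b ha hb hab iha ihb =>
    rw [kk_mult.map_mul_of_coprime hab, abs_mul, Nat.Coprime.card_divisors_mul hab]
    push_cast
    rw [mul_div_mul_comm]
    gcongr

lemma kk_summable : Summable fun m : ℕ => |kk m| / m := by
  have h : Summable fun m : ℕ => 2 * (1 / (m:ℝ) ^ (3/2:ℝ)) :=
    (Real.summable_one_div_nat_rpow.2 (by norm_num)).mul_left 2
  refine Summable.of_nonneg_of_le (fun m => by positivity) (fun m => ?_) h
  rcases Nat.eq_zero_or_pos m with rfl | hm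
  · simp
  have hm' : (0:ℝ) < m := by exact_mod_cast hm
  calc |kk m| / m ≤ (2 * Real.sqrt m / m) / m := by
        gcongr
        exact (kk_bound m).trans (by gcongr; exact aux_card_divisors m)
    _ = _ := by
      have : (m:ℝ) ^ (3/2:ℝ) = m * Real.sqrt m := by
        rw [Real.sqrt_eq_rpow, ← Real.rpow_one_add' hm'.le (by norm_num)]; norm_num
      rw [this]
      have hs : Real.sqrt m ≠ 0 := (Real.sqrt_pos.2 hm').ne'
      field_simp
      rw [Real.sq_sqrt hm'.le]

lemma kk_tsum : ∑' m : ℕ, kk m / m = ∏' p : Nat.Primes, (1 - 2 / (p : ℝ) ^ 2 + 1 / (p : ℝ) ^ 3) := by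
  have h := EulerProduct.eulerProduct_hasProd (f := fun m : ℕ => kk m / m)
    (by simp [kk_mult.1]) (fun {m n} hmn => by
      rw [kk_mult.map_mul_of_coprime hmn]; push_cast; rw [mul_div_mul_comm])
    (by refine kk_summable.congr fun m => by simp)
    (by simp)
  rw [← h.tprod_eq]
  congr 1
  ext p
  have hp := p.2
  have hp0 : (p:ℝ) ≠ 0 := by exact_mod_cast hp.ne_zero
  rw [tsum_eq_sum (s := range 2)]
  · simp [Finset.sum_range_succ, kk_mult.1, kk_prime hp]
    field_simp
    ring
  · intro j hj
    obtain ⟨i, rfl⟩ : ∃ i, j = i + 2 := ⟨j - 2, by simp at hj; omega⟩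
    rw [kk_prime_pow hp]; simp

lemma muD_summable : Summable fun m : ℕ => |muD m| / m := by
  have h : Summable fun m : ℕ => (1 / (m:ℝ) ^ 2) := Real.summable_one_div_nat_pow.2 (by norm_num)
  refine Summable.of_nonneg_of_le (fun m => by positivity) (fun m => ?_) h
  have h1 : |(μ m : ℝ)| ≤ 1 := by exact_mod_cast abs_moebius_le_one (n := m)
  rw [muD_apply, abs_div, Nat.abs_cast, div_div, ← sq]
  gcongr

lemma muD_tsum : ∑' m : ℕ, muD m / m = 6 / π ^ 2 := by
  have h := LSeries_zeta_mul_Lseries_moebius (s := 2) (by norm_num)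
  rw [LSeries_zeta_eq_riemannZeta (by norm_num), riemannZeta_two] at h
  have h2 : LSeries (fun n => ((μ n : ℤ) : ℂ)) 2 = ((∑' m : ℕ, muD m / m : ℝ) : ℂ) := by
    rw [LSeries, Complex.ofReal_tsum]
    congr 1
    ext m
    rcases Nat.eq_zero_or_pos m with rfl | hm
    · simp
    rw [LSeries.term_of_ne_zero hm.ne', muD_apply]
    push_cast
    rw [div_div, ← sq]
    norm_cast
  rw [h2] at h
  have h3 : (π ^ 2 / 6) * (∑' m : ℕ, muD m / m) = 1 := by exact_mod_cast h
  have : π ≠ 0 := Real.pi_ne_zero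
  field_simp at h3 ⊢
  linarith

noncomputable def cop (x y : ℕ) : ℝ := if Nat.gcd x y = 1 then 1 else 0

lemma cop_nonneg (x y : ℕ) : 0 ≤ cop x y := by unfold cop; split_ifs <;> norm_num
lemma cop_le_one (x y : ℕ) : cop x y ≤ 1 := by unfold cop; split_ifs <;> norm_num
lemma cop_comm (x y : ℕ) : cop x y = cop y x := by simp only [cop, Nat.gcd_comm x y]
lemma cop_sq (x y : ℕ) : cop x y * cop x y = cop x y := by unfold cop; split_ifs <;> norm_num

noncomputable def phi (n x : ℕ) : ℝ := (∑ y ∈ Ioc 0 n, cop x y) / n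
noncomputable def aa (n : ℕ) : ℝ := (∑ x ∈ Ioc 0 n, phi n x) / n
noncomputable def bb (n : ℕ) : ℝ := (∑ x ∈ Ioc 0 n, phi n x ^ 2) / n

lemma phi_bound (n x : ℕ) : 0 ≤ phi n x ∧ phi n x ≤ 1 := by
  refine ⟨div_nonneg (Finset.sum_nonneg fun y _ => cop_nonneg x y) (by positivity), ?_⟩
  refine div_le_one_of_le₀ ?_ (by positivity)
  calc _ ≤ ∑ y ∈ Ioc 0 n, (1:ℝ) := Finset.sum_le_sum fun y _ => cop_le_one x y
    _ = n := by simp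

lemma cop_eq (x y : ℕ) (hx : 0 < x) :
    cop x y = ∑ d ∈ x.divisors, if d ∣ y then (μ d : ℝ) else 0 := by
  have h : (∑ d ∈ (Nat.gcd x y).divisors, (μ d : ℝ)) = cop x y := by
    have h1 : ((μ : ArithmeticFunction ℝ) * (ζ : ArithmeticFunction ℝ)) (Nat.gcd x y) = cop x y := by
      rw [coe_moebius_mul_coe_zeta, one_apply]; rfl
    rw [coe_mul_zeta_apply] at h1
    simpa using h1
  rw [← h, ← Finset.sum_filter]
  refine Finset.sum_congr ?_ fun _ _ => rfl
  ext d
  simp only [Nat.mem_divisors, Finset.mem_filter, Nat.dvd_gcd_iff]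
  have : Nat.gcd x y ≠ 0 := (Nat.gcd_pos_of_pos_left y hx).ne'
  have : x ≠ 0 := hx.ne'
  tauto

lemma phi_eq (n x : ℕ) (hx : 0 < x) :
    phi n x = ∑ d ∈ x.divisors, (μ d : ℝ) * (((n / d : ℕ) : ℝ) / n) := by
  unfold phi
  rw [Finset.sum_congr rfl fun y _ => cop_eq x y hx, Finset.sum_comm, Finset.sum_div]
  refine Finset.sum_congr rfl fun d _ => ?_
  rw [← Finset.sum_filter, Finset.sum_const, Nat.Ioc_filter_dvd_card_eq_div, nsmul_eq_mul]
  ring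

lemma phi_sub_rho (n x : ℕ) (hn : 0 < n) (hx : x ∈ Ioc 0 n) :
    |phi n x - rho x| ≤ 2 / Real.sqrt n := by
  obtain ⟨hx0, hxn⟩ := Finset.mem_Ioc.1 hx
  have hn' : (0:ℝ) < n := by exact_mod_cast hn
  have h1 : |phi n x - rho x| ≤ ∑ d ∈ x.divisors, 1 / (n:ℝ) := by
    rw [phi_eq n x hx0, rho, coe_mul_zeta_apply, ← Finset.sum_sub_distrib]
    refine (Finset.abs_sum_le_sum_abs _ _).trans (Finset.sum_le_sum fun d hd => ?_)
    have hd0 : 0 < d := Nat.pos_of_mem_divisors hd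
    have hd' : (0:ℝ) < d := by exact_mod_cast hd0
    have e : (μ d : ℝ) * (((n / d : ℕ) : ℝ) / n) - muD d
        = (μ d : ℝ) * ((((n / d : ℕ) : ℝ) - n / d) / n) := by
      rw [muD_apply]; field_simp
    have hm : |(μ d : ℝ)| ≤ 1 := by exact_mod_cast abs_moebius_le_one (n := d)
    rw [e, abs_mul, abs_div, abs_of_pos hn']
    have h2 : |((n / d : ℕ) : ℝ) - n / d| ≤ 1 := by
      have u : ((n / d : ℕ) : ℝ) ≤ n / d := Nat.cast_div_le
      have l : (n:ℝ) / d < ((n / d : ℕ) : ℝ) + 1 := by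
        rw [div_lt_iff₀ hd']
        have := Nat.lt_mul_div_succ n hd0
        rw [mul_comm] at this
        exact_mod_cast this
      rw [abs_le]; constructor <;> linarith
    calc _ ≤ 1 * (1 / (n:ℝ)) := by gcongr
      _ = _ := one_mul _
  refine h1.trans ?_
  rw [Finset.sum_const, nsmul_eq_mul]
  have h3 : (x.divisors.card : ℝ) ≤ 2 * Real.sqrt n :=
    (aux_card_divisors x).trans (by gcongr)
  calc _ ≤ 2 * Real.sqrt n * (1 / n) := by gcongr
    _ = _ := by
      have hs : Real.sqrt n ≠ 0 := (Real.sqrt_pos.2 hn').ne'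
      field_simp
      rw [Real.sq_sqrt hn'.le]

lemma aux_zero : Tendsto (fun n : ℕ => 4 / Real.sqrt n) atTop (nhds 0) :=
  Tendsto.div_atTop tendsto_const_nhds (Real.tendsto_sqrt_atTop.comp tendsto_natCast_atTop_atTop)

lemma aux_mean_diff (f : ℕ → ℕ → ℝ) (g : ℕ → ℝ) (L : ℝ)
    (hg : Tendsto (fun n : ℕ => (∑ x ∈ Ioc 0 n, g x) / n) atTop (nhds L))
    (h : ∀ n, 0 < n → ∀ x ∈ Ioc 0 n, |f n x - g x| ≤ 4 / Real.sqrt n) :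
    Tendsto (fun n : ℕ => (∑ x ∈ Ioc 0 n, f n x) / n) atTop (nhds L) := by
  have h2 : Tendsto (fun n : ℕ => (∑ x ∈ Ioc 0 n, f n x) / n - (∑ x ∈ Ioc 0 n, g x) / n)
      atTop (nhds 0) := by
    refine squeeze_zero_norm' ?_ aux_zero
    filter_upwards [eventually_gt_atTop 0] with n hn
    have hn' : (0:ℝ) < n := by exact_mod_cast hn
    rw [← sub_div, ← Finset.sum_sub_distrib, Real.norm_eq_abs, abs_div, abs_of_pos hn',
      div_le_iff₀ hn']
    calc _ ≤ ∑ x ∈ Ioc 0 n, |f n x - g x| := Finset.abs_sum_le_sum_abs _ _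
      _ ≤ ∑ x ∈ Ioc 0 n, 4 / Real.sqrt n := Finset.sum_le_sum (h n hn)
      _ = _ := by simp; ring
  simpa using h2.add hg

lemma aa_tendsto : Tendsto aa atTop (nhds (6 / π ^ 2)) := by
  refine aux_mean_diff phi rho _ ?_ ?_
  · rw [← muD_tsum]; exact aux_mean muD muD_summable
  · intro n hn x hx
    refine (phi_sub_rho n x hn hx).trans ?_
    gcongr; norm_num

lemma bb_tendsto : Tendsto bb atTop
    (nhds (∏' p : Nat.Primes, (1 - 2 / (p : ℝ) ^ 2 + 1 / (p : ℝ) ^ 3))) := by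
  refine aux_mean_diff (fun n x => phi n x ^ 2) (fun x => rho x ^ 2) _ ?_ ?_
  · rw [← kk_tsum]
    refine (aux_mean kk kk_summable).congr fun n => ?_
    rw [kk_zeta]
    simp only [pmul_apply, sq]
  · intro n hn x hx
    have h1 := phi_sub_rho n x hn hx
    have h2 := phi_bound n x
    have h3 := rho_bound x
    rw [sq_sub_sq, abs_mul, abs_of_nonneg (by linarith : 0 ≤ phi n x + rho x)]
    calc _ ≤ 2 * (2 / Real.sqrt n) := by gcongr; linarith
      _ = _ := by ring

end NT

section Prob

lemma unif_prob (n : ℕ) (hn : 0 < n) : IsProbabilityMeasure (uniformOn (Set.Icc 1 n)) :=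
  isProbabilityMeasure_uniformOn (Set.finite_Icc 1 n) ⟨1, by simp; omega⟩

lemma unifVec_prob (n : ℕ) (hn : 0 < n) : IsProbabilityMeasure (unifVec n) := by
  have := unif_prob n hn
  unfold unifVec
  infer_instance

lemma integral_unif (n : ℕ) (f : ℕ → ℝ) :
    ∫ x, f x ∂(uniformOn (Set.Icc 1 n)) = (∑ x ∈ Finset.Ioc 0 n, f x) / n := by
  have hs : (Set.Icc 1 n) = ((Finset.Ioc 0 n : Finset ℕ) : Set ℕ) := by
    ext x; simp; omega
  rw [hs, uniformOn, ProbabilityTheory.cond, integral_smul_measure, setIntegral_finset]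
  · rw [Measure.count_apply_finset]
    simp [Measure.real, div_eq_inv_mul]
  · rw [← Finset.biUnion_singleton_eq_self (s := (Finset.Ioc 0 n : Finset ℕ)), Finset.coe_biUnion]
    simp only [Finset.mem_coe, Finset.coe_singleton]
    rw [integrableOn_finset_iUnion]
    intro x _
    exact integrableOn_singleton (by finiteness) (by simp)

variable {n : ℕ}

lemma coord_indep (hn : 0 < n) : iIndepFun (fun (i : Fin n) (ω : Fin n → ℕ) => ω i) (unifVec n) := by
  have := unif_prob n hn
  exact iIndepFun_pi (μ := fun _ : Fin n => uniformOn (Set.Icc 1 n)) (X := fun _ x => x)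
    (fun i => aemeasurable_id)

lemma coord_map (hn : 0 < n) (i : Fin n) :
    (unifVec n).map (fun ω => ω i) = uniformOn (Set.Icc 1 n) := by
  have := unif_prob n hn
  exact (measurePreserving_eval (fun _ : Fin n => uniformOn (Set.Icc 1 n)) i).map_eq

lemma pair_map (hn : 0 < n) {i j : Fin n} (hij : i ≠ j) :
    (unifVec n).map (fun ω => (ω i, ω j)) =
      (uniformOn (Set.Icc 1 n)).prod (uniformOn (Set.Icc 1 n)) := by
  have := unifVec_prob n hn
  have h := ((coord_indep hn).indepFun hij).map_prod_eq_prod_map_map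
    (measurable_pi_apply i).aemeasurable (measurable_pi_apply j).aemeasurable
  rw [coord_map hn, coord_map hn] at h
  exact h

lemma triple_map (hn : 0 < n) {i j k : Fin n} (hij : i ≠ j) (hik : i ≠ k) (hjk : j ≠ k) :
    (unifVec n).map (fun ω => ((ω j, ω k), ω i)) =
      ((uniformOn (Set.Icc 1 n)).prod (uniformOn (Set.Icc 1 n))).prod (uniformOn (Set.Icc 1 n)) := by
  have := unifVec_prob n hn
  have h := ((coord_indep hn).indepFun_prodMk (fun i => measurable_pi_apply i) j k i
    hij.symm hik.symm).map_prod_eq_prod_map_map (by fun_prop)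
    (measurable_pi_apply i).aemeasurable
  rw [coord_map hn, pair_map hn hjk] at h
  exact h

lemma E_pair (hn : 0 < n) {i j : Fin n} (hij : i ≠ j) :
    ∫ ω, cop (ω i) (ω j) ∂(unifVec n) = aa n := by
  have := unif_prob n hn
  have h := integral_map (μ := unifVec n) (φ := fun ω => (ω i, ω j)) (by fun_prop)
    (f := fun z : ℕ × ℕ => cop z.1 z.2) (Measurable.of_discrete.aestronglyMeasurable)
  rw [← h, pair_map hn hij, integral_prod, integral_unif, aa]
  · simp only [integral_unif]; rfl
  · refine Integrable.of_bound (Measurable.of_discrete.aestronglyMeasurable) 1 (ae_of_all _ fun z => ?_)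
    rw [Real.norm_of_nonneg (cop_nonneg _ _)]
    exact cop_le_one _ _

lemma E_triple (hn : 0 < n) {i j k : Fin n} (hij : i ≠ j) (hik : i ≠ k) (hjk : j ≠ k) :
    ∫ ω, cop (ω i) (ω j) * cop (ω i) (ω k) ∂(unifVec n) = bb n := by
  have := unif_prob n hn
  have h := integral_map (μ := unifVec n) (φ := fun ω => ((ω j, ω k), ω i)) (by fun_prop)
    (f := fun z : (ℕ × ℕ) × ℕ => cop z.2 z.1.1 * cop z.2 z.1.2)
    (Measurable.of_discrete.aestronglyMeasurable)
  rw [← h, triple_map hn hij hik hjk, integral_prod_symm, integral_unif, bb]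
  · congr 1
    refine Finset.sum_congr rfl fun x _ => ?_
    have h2 := integral_prod_mul (μ := uniformOn (Set.Icc 1 n)) (ν := uniformOn (Set.Icc 1 n))
      (fun y => cop x y) (fun y => cop x y)
    simp only at h2 ⊢
    rw [h2, integral_unif, sq]; rfl
  · refine Integrable.of_bound (Measurable.of_discrete.aestronglyMeasurable) 1 (ae_of_all _ fun z => ?_)
    rw [Real.norm_of_nonneg (mul_nonneg (cop_nonneg _ _) (cop_nonneg _ _))]
    exact mul_le_one₀ (cop_le_one _ _) (cop_nonneg _ _) (cop_le_one _ _)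

lemma cop_memLp (hn : 0 < n) (i j : Fin n) :
    MemLp (fun ω : Fin n → ℕ => cop (ω i) (ω j)) 2 (unifVec n) := by
  have := unifVec_prob n hn
  refine MemLp.of_bound (Measurable.aestronglyMeasurable ?_) 1 (ae_of_all _ fun z => ?_)
  · exact (Measurable.of_discrete (f := fun z : ℕ × ℕ => cop z.1 z.2)).comp
      (g := fun z : ℕ × ℕ => cop z.1 z.2) (f := fun ω : Fin n → ℕ => (ω i, ω j)) (by fun_prop)
  · rw [Real.norm_of_nonneg (cop_nonneg _ _)]
    exact cop_le_one _ _

lemma cov_shared (hn : 0 < n) {i j k : Fin n} (hij : i ≠ j) (hik : i ≠ k) (hjk : j ≠ k) :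
    covariance (fun ω => cop (ω i) (ω j)) (fun ω => cop (ω i) (ω k)) (unifVec n)
      = bb n - aa n ^ 2 := by
  have := unifVec_prob n hn
  rw [covariance_eq_sub (cop_memLp hn _ _) (cop_memLp hn _ _), E_pair hn hij, E_pair hn hik, sq]
  congr 1
  exact E_triple hn hij hik hjk

lemma cov_same (hn : 0 < n) {i j : Fin n} (hij : i ≠ j) :
    covariance (fun ω => cop (ω i) (ω j)) (fun ω => cop (ω i) (ω j)) (unifVec n)
      = aa n - aa n ^ 2 := by
  have := unifVec_prob n hn
  rw [covariance_eq_sub (cop_memLp hn _ _) (cop_memLp hn _ _), E_pair hn hij, sq]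
  congr 1
  rw [← E_pair hn hij]
  congr 1
  ext ω
  exact cop_sq _ _

lemma cov_disj (hn : 0 < n) {i j k l : Fin n} (hik : i ≠ k) (hil : i ≠ l) (hjk : j ≠ k)
    (hjl : j ≠ l) :
    covariance (fun ω => cop (ω i) (ω j)) (fun ω => cop (ω k) (ω l)) (unifVec n) = 0 := by
  have := unifVec_prob n hn
  have h := (coord_indep hn).indepFun_prodMk_prodMk (fun i => measurable_pi_apply i) i j k l
    hik hil hjk hjl
  have h2 := h.comp (φ := fun z : ℕ × ℕ => cop z.1 z.2) (ψ := fun z : ℕ × ℕ => cop z.1 z.2)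
    Measurable.of_discrete Measurable.of_discrete
  exact h2.covariance_eq_zero (cop_memLp hn _ _) (cop_memLp hn _ _)

lemma cov_all (hn : 0 < n) {i j k l : Fin n} (hij : i < j) (hkl : k < l) :
    covariance (fun ω => cop (ω i) (ω j)) (fun ω => cop (ω k) (ω l)) (unifVec n) =
      (bb n - aa n ^ 2) * ((if i = k then 1 else 0) + (if i = l then 1 else 0)
        + (if j = k then 1 else 0) + (if j = l then 1 else 0))
      + (aa n + aa n ^ 2 - 2 * bb n) * (if i = k ∧ j = l then 1 else 0) := by
  have sw : ∀ a b : Fin n, (fun ω : Fin n → ℕ => cop (ω a) (ω b)) = fun ω => cop (ω b) (ω a) :=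
    fun a b => by ext ω; exact cop_comm _ _
  by_cases h1 : i = k
  · subst h1
    by_cases h2 : j = l
    · subst h2
      rw [cov_same hn hij.ne]
      simp [hij.ne, hij.ne']; ring
    · rw [cov_shared hn hij.ne hkl.ne h2]
      simp [h2, hij.ne, hij.ne', hkl.ne, hkl.ne']
  · by_cases h2 : j = l
    · subst h2
      rw [sw i j, sw k j, cov_shared hn hij.ne' hkl.ne' h1]
      simp [h1, hij.ne, hkl.ne']
    · by_cases h3 : i = l
      · subst h3
        rw [sw k i, cov_shared hn hij.ne hkl.ne' (hkl.trans hij).ne']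
        simp [h1, h2, (hkl.trans hij).ne']
      · by_cases h4 : j = k
        · subst h4
          rw [sw i j, cov_shared hn hij.ne' hkl.ne (hij.trans hkl).ne]
          simp [h1, h2, h3]
        · rw [cov_disj hn h1 h3 h4 h2]
          simp [h1, h2, h3, h4]

lemma count_deg (m : Fin n) :
    ∑ p ∈ (Finset.univ : Finset (Fin n × Fin n)).filter (fun p => p.1 < p.2),
      ((if p.1 = m then (1:ℝ) else 0) + (if p.2 = m then 1 else 0)) = n - 1 := by
  rw [Finset.sum_filter, Fintype.sum_prod_type]
  have : ∀ x y : Fin n, (if x < y then ((if x = m then (1:ℝ) else 0) + (if y = m then 1 else 0)) else 0)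
      = (if x = m then (if m < y then 1 else 0) else 0) + (if y = m then (if x < m then 1 else 0) else 0) := by
    intro x y
    split_ifs <;> simp_all
  simp only [this, Finset.sum_add_distrib]
  simp only [Finset.sum_ite_eq', Finset.mem_univ, if_true]
  rw [Finset.sum_comm]
  simp only [Finset.sum_ite_eq', Finset.mem_univ, if_true]
  rw [← Finset.sum_add_distrib]
  have h2 : ∀ x : Fin n, ((if m < x then (1:ℝ) else 0) + (if x < m then 1 else 0)) = 1 - if x = m then 1 else 0 := by
    intro x
    rcases lt_trichotomy m x with h | h | h
    · simp [h, h.ne', h.le]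
    · simp [h]
    · simp [h, h.ne, h.le]
  simp [h2]

lemma count_pairs :
    (((Finset.univ : Finset (Fin n × Fin n)).filter (fun p => p.1 < p.2)).card : ℝ) * 2
      = n * (n - 1) := by
  have h := Finset.sum_congr (rfl : (Finset.univ : Finset (Fin n)) = Finset.univ)
    (fun m _ => count_deg m)
  rw [Finset.sum_comm] at h
  simp [Finset.sum_add_distrib] at h
  linarith

lemma var_eq (hn : 0 < n) :
    variance (fun ω : Fin n → ℕ => ∑ i : Fin n, ∑ j : Fin n,
        if i < j ∧ Nat.gcd (ω i) (ω j) = 1 then (1 : ℝ) else 0) (unifVec n) =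
      (bb n - aa n ^ 2) * (n * (n - 1) ^ 2)
        + (aa n + aa n ^ 2 - 2 * bb n) * (n * (n - 1) / 2) := by
  have := unifVec_prob n hn
  set S := (Finset.univ : Finset (Fin n × Fin n)).filter (fun p => p.1 < p.2) with hS
  have e : (fun ω : Fin n → ℕ => ∑ i : Fin n, ∑ j : Fin n,
        if i < j ∧ Nat.gcd (ω i) (ω j) = 1 then (1 : ℝ) else 0)
      = fun ω => ∑ p ∈ S, cop (ω p.1) (ω p.2) := by
    ext ω
    rw [hS, Finset.sum_filter, Fintype.sum_prod_type]
    refine Finset.sum_congr rfl fun i _ => Finset.sum_congr rfl fun j _ => ?_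
    unfold cop
    by_cases h1 : i < j <;> simp [h1]
  rw [e, variance_fun_sum' (fun p _ => cop_memLp hn p.1 p.2)]
  have h1 : ∀ p ∈ S, ∀ q ∈ S, covariance (fun ω => cop (ω p.1) (ω p.2))
      (fun ω => cop (ω q.1) (ω q.2)) (unifVec n) =
      (bb n - aa n ^ 2) * (∑ m, ((if p.1 = m then (1:ℝ) else 0) + (if p.2 = m then 1 else 0)) *
          ((if q.1 = m then (1:ℝ) else 0) + (if q.2 = m then 1 else 0)))
        + (aa n + aa n ^ 2 - 2 * bb n) * (if p = q then 1 else 0) := by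
    intro p hp q hq
    rw [cov_all hn (Finset.mem_filter.1 hp).2 (Finset.mem_filter.1 hq).2]
    congr 2
    · simp only [add_mul, mul_add, Finset.sum_add_distrib, ite_mul, one_mul, zero_mul,
        Finset.sum_ite_eq, Finset.mem_univ, if_true]
      simp only [eq_comm (a := q.1), eq_comm (a := q.2)]
      ring
    · simp only [Prod.ext_iff]
  rw [Finset.sum_congr rfl fun p hp => Finset.sum_congr rfl fun q hq => h1 p hp q hq]
  simp only [Finset.sum_add_distrib, ← Finset.mul_sum]
  congr 2
  · have h2 : ∀ p : Fin n × Fin n, ∑ q ∈ S, ∑ m, ((if p.1 = m then (1:ℝ) else 0) + (if p.2 = m then 1 else 0)) *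
          ((if q.1 = m then (1:ℝ) else 0) + (if q.2 = m then 1 else 0))
        = ∑ m, ((if p.1 = m then (1:ℝ) else 0) + (if p.2 = m then 1 else 0)) * (n - 1) := by
      intro p
      rw [Finset.sum_comm]
      refine Finset.sum_congr rfl fun m _ => ?_
      rw [← Finset.mul_sum, count_deg]
    rw [Finset.sum_congr rfl fun p _ => h2 p, Finset.sum_comm]
    simp only [← Finset.sum_mul, hS]
    rw [Finset.sum_congr rfl fun m _ => count_deg m]
    simp; ring
  · have := count_pairs (n := n)
    simp
    linarith

end Prob

/-- `n⁻³·Var(∑_{1≤i<j≤n} 1_{gcd(X_i,X_j)=1})` converges to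
`∏_p (1 − 2/p² + 1/p³) − 36/π⁴` as `n → ∞`. -/
theorem variance_coprime_pairs_asymptotics :
    Tendsto
      (fun n : ℕ =>
        variance
          (fun ω : Fin n → ℕ =>
            ∑ i : Fin n, ∑ j : Fin n,
              if i < j ∧ Nat.gcd (ω i) (ω j) = 1 then (1 : ℝ) else 0)
          (unifVec n) / (n : ℝ) ^ 3)
      atTop
      (nhds (∏' p : Nat.Primes, (1 - 2 / (p : ℝ) ^ 2 + 1 / (p : ℝ) ^ 3) - 36 / π ^ 4)) := by
  have hi : Tendsto (fun n : ℕ => ((n:ℝ))⁻¹) atTop (nhds 0) := tendsto_inv_atTop_nhds_zero_nat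
  have hc : Tendsto (fun _ : ℕ => (1:ℝ)) atTop (nhds 1) := tendsto_const_nhds
  have ha := aa_tendsto
  have hb := bb_tendsto
  have h := ((hb.sub (ha.pow 2)).mul ((hc.sub hi).pow 2)).add
    (((ha.add (ha.pow 2)).sub (hb.const_mul 2)).mul (((hi.mul (hc.sub hi)).div_const 2)))
  have e : (∏' p : Nat.Primes, (1 - 2 / (p : ℝ) ^ 2 + 1 / (p : ℝ) ^ 3) - (6 / π ^ 2) ^ 2) * (1 - 0) ^ 2
      + (6 / π ^ 2 + (6 / π ^ 2) ^ 2 -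
        2 * ∏' p : Nat.Primes, (1 - 2 / (p : ℝ) ^ 2 + 1 / (p : ℝ) ^ 3)) * (0 * (1 - 0) / 2)
      = ∏' p : Nat.Primes, (1 - 2 / (p : ℝ) ^ 2 + 1 / (p : ℝ) ^ 3) - 36 / π ^ 4 := by
    ring
  rw [e] at h
  refine h.congr' ?_
  filter_upwards [eventually_gt_atTop 0] with n hn
  have hn' : (n:ℝ) ≠ 0 := by exact_mod_cast hn.ne'
  rw [var_eq hn]
  field_simp
end

section
/- The laws of V_n := (1/n) ∑_{i=1}^n 1_{X_i is square-free} satisfy a large deviation principle with speed n and rate function I(x) = x·log(x/(6/π²)) + (1−x)·log((1−x)/(1−6/π²)) for x ∈ [0,1] (with the conventions 0·log 0 = 0, and I(x) = +∞ for x ∉ [0,1]): for every Borel set A ⊆ ℝ, −inf_{x∈A°} I(x) ≤ liminf_{n→∞} (1/n) log P(V_n ∈ A) ≤ limsup_{n→∞} (1/n) log P(V_n ∈ A) ≤ −inf_{x∈closure(A)} I(x). -/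
open MeasureTheory ProbabilityTheory Filter Real

/-- The rate function `I(x) = x log(x/(6/π²)) + (1−x) log((1−x)/(1−6/π²))` on
`[0,1]`, equal to `+∞` outside `[0,1]`.  (Note that in Lean `0 * Real.log 0 = 0`
automatically, which realizes the convention `0·log 0 = 0`.) -/
noncomputable def squarefreeRate (x : ℝ) : EReal :=
  if 0 ≤ x ∧ x ≤ 1 then
    ((x * Real.log (x / (6 / π ^ 2)) +
      (1 - x) * Real.log ((1 - x) / (1 - 6 / π ^ 2)) : ℝ) : EReal)
  else ⊤


def sqfCount (n : ℕ) : ℕ := ((Finset.Icc 1 n).filter Squarefree).card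

lemma sq_dvd_aux {a b d : ℕ} (ha : Squarefree a) (hb : b ≠ 0) (h : d ^ 2 ∣ b ^ 2 * a) : d ∣ b := by
  have ha0 : a ≠ 0 := ha.ne_zero
  have hd : d ≠ 0 := by
    rintro rfl
    have : b ^ 2 * a = 0 := by simpa using h
    simp [hb, ha0] at this
  rw [← Nat.factorization_le_iff_dvd hd hb]
  have h2 := (Nat.factorization_le_iff_dvd (pow_ne_zero 2 hd) (mul_ne_zero (pow_ne_zero 2 hb) ha0)).2 h
  intro p
  have h3 := h2 p
  rw [Nat.factorization_mul (pow_ne_zero 2 hb) ha0, Nat.factorization_pow, Nat.factorization_pow] at h3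
  have h4 := ha.natFactorization_le_one p
  simp at h3
  omega

lemma sqf_ind {n k : ℕ} (hk : k ∈ Finset.Icc 1 n) :
    (if Squarefree k then (1:ℤ) else 0) =
      ∑ d ∈ Finset.Icc 1 n, if d ^ 2 ∣ k then ArithmeticFunction.moebius d else 0 := by
  rw [Finset.mem_Icc] at hk
  obtain ⟨a, b, hab, ha⟩ := Nat.sq_mul_squarefree k
  have hb : b ≠ 0 := by rintro rfl; simp at hab; omega
  have hbk : b ≤ k := by
    have : 0 < a := Nat.pos_of_ne_zero ha.ne_zero
    rw [← hab]; nlinarith [Nat.pos_of_ne_zero hb]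
  have hS : (Finset.Icc 1 n).filter (fun d => d ^ 2 ∣ k) = b.divisors := by
    ext d
    simp only [Finset.mem_filter, Finset.mem_Icc, Nat.mem_divisors]
    constructor
    · rintro ⟨_, h⟩
      rw [← hab] at h
      exact ⟨sq_dvd_aux ha hb h, hb⟩
    · rintro ⟨h, _⟩
      have := Nat.le_of_dvd (Nat.pos_of_ne_zero hb) h
      have := Nat.pos_of_dvd_of_pos h (Nat.pos_of_ne_zero hb)
      refine ⟨by omega, ?_⟩
      rw [← hab]
      exact (pow_dvd_pow_of_dvd h 2).mul_right a
  rw [← Finset.sum_filter, hS, ← ArithmeticFunction.coe_mul_zeta_apply,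
    ArithmeticFunction.moebius_mul_coe_zeta, ArithmeticFunction.one_apply]
  congr 1
  apply propext
  constructor
  · intro h
    have : IsUnit b := h b (by rw [← hab]; exact ⟨a, by ring⟩)
    simpa using this
  · rintro rfl
    simpa [← hab] using ha

lemma sqfCount_eq (n : ℕ) :
    (sqfCount n : ℤ) = ∑ d ∈ Finset.Icc 1 n, ArithmeticFunction.moebius d * ((n / d ^ 2 : ℕ) : ℤ) := by
  rw [sqfCount, Finset.card_filter]
  simp only [Nat.cast_sum, Nat.cast_ite, Nat.cast_one, Nat.cast_zero]
  rw [Finset.sum_congr rfl (fun k hk => sqf_ind hk), Finset.sum_comm]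
  refine Finset.sum_congr rfl fun d _ => ?_
  rw [← Finset.sum_filter, Finset.sum_const, ← Nat.Ioc_filter_dvd_card_eq_div]
  simp only [nsmul_eq_mul]
  rw [mul_comm]
  rfl

lemma moebius_sum : ∑' d : ℕ, (ArithmeticFunction.moebius d : ℝ) / (d:ℝ) ^ 2 = 6 / π ^ 2 := by
  have h1 := ArithmeticFunction.LSeries_zeta_mul_Lseries_moebius (s := 2) (by norm_num)
  rw [ArithmeticFunction.LSeries_zeta_eq_riemannZeta (by norm_num), riemannZeta_two] at h1
  have h2 : LSeries (fun n => ((ArithmeticFunction.moebius n : ℤ) : ℂ)) 2 =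
      ((∑' d : ℕ, (ArithmeticFunction.moebius d : ℝ) / (d:ℝ) ^ 2 : ℝ) : ℂ) := by
    rw [LSeries, Complex.ofReal_tsum]
    refine tsum_congr fun d => ?_
    rw [LSeries.term_def]
    split_ifs with h
    · simp [h]
    · push_cast
      congr 1
      exact Complex.cpow_ofNat _ _
  rw [h2] at h1
  have h3 : (π ^ 2 / 6) * (∑' d : ℕ, (ArithmeticFunction.moebius d : ℝ) / (d:ℝ) ^ 2 : ℝ) = 1 := by
    exact_mod_cast h1
  have := Real.pi_pos
  field_simp at h3 ⊢
  linarith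

lemma sqf_tendsto : Tendsto (fun n : ℕ => (sqfCount n : ℝ) / n) atTop (nhds (6 / π ^ 2)) := by
  rw [← moebius_sum]
  have key : ∀ n : ℕ, (sqfCount n : ℝ) / n =
      ∑' d : ℕ, (ArithmeticFunction.moebius d : ℝ) * (((n / d ^ 2 : ℕ) : ℝ) / n) := by
    intro n
    rw [tsum_eq_sum (s := Finset.Icc 1 n)]
    · have : (sqfCount n : ℝ) = ∑ d ∈ Finset.Icc 1 n, (ArithmeticFunction.moebius d : ℝ) * ((n / d ^ 2 : ℕ) : ℝ) := by
        have h := congrArg (Int.cast : ℤ → ℝ) (sqfCount_eq n)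
        simpa only [Int.cast_natCast, Int.cast_sum, Int.cast_mul] using h
      rw [this, Finset.sum_div]
      exact Finset.sum_congr rfl fun d _ => by ring
    · intro d hd
      have : n / d ^ 2 = 0 := by
        rcases Nat.eq_zero_or_pos d with rfl | hd0
        · simp
        · apply Nat.div_eq_of_lt
          simp at hd
          have := hd hd0
          nlinarith
      rw [this]; simp
  simp_rw [key]
  refine tendsto_tsum_of_dominated_convergence (bound := fun d : ℕ => 1 / (d:ℝ) ^ 2)
    (Real.summable_one_div_nat_pow.2 (by norm_num)) ?_ ?_
  · intro d
    rw [div_eq_mul_inv]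
    refine Tendsto.const_mul _ ?_
    have h := (tendsto_nat_floor_mul_div_atTop (R := ℝ) (a := ((d:ℝ)^2)⁻¹) (by positivity)).comp tendsto_natCast_atTop_atTop
    refine h.congr fun n => ?_
    simp only [Function.comp]
    congr 2
    rw [mul_comm, ← div_eq_mul_inv]
    exact_mod_cast Nat.floor_div_eq_div (K := ℝ) n (d^2)
  · refine Eventually.of_forall fun n d => ?_
    rw [norm_mul]
    have h1 : ‖(ArithmeticFunction.moebius d : ℝ)‖ ≤ 1 := by
      rw [Real.norm_eq_abs]
      exact_mod_cast ArithmeticFunction.abs_moebius_le_one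
    have h2 : ‖((n / d ^ 2 : ℕ) : ℝ) / n‖ ≤ 1 / (d:ℝ)^2 := by
      rw [Real.norm_of_nonneg (by positivity)]
      rcases Nat.eq_zero_or_pos n with rfl | hn
      · simp
      have : ((n / d ^ 2 : ℕ) : ℝ) ≤ (n:ℝ) / ((d ^ 2 : ℕ):ℝ) := Nat.cast_div_le
      have hn' : (0:ℝ) < n := by exact_mod_cast hn
      rw [div_le_iff₀ hn']
      refine this.trans (le_of_eq ?_)
      push_cast; ring
    calc _ ≤ 1 * (1 / (d:ℝ)^2) := mul_le_mul h1 h2 (norm_nonneg _) zero_le_one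
      _ = _ := one_mul _

lemma fact_pow_le (j k : ℕ) : k.factorial * k ^ j ≤ j.factorial * k ^ k := by
  rcases le_total k j with h | h
  · have h1 := Nat.factorial_mul_pow_sub_le_factorial h
    have : k ^ j = k ^ (j - k) * k ^ k := by rw [← pow_add]; congr 1; omega
    rw [this, ← mul_assoc]
    exact Nat.mul_le_mul_right _ h1
  · have h1 : k.factorial ≤ j.factorial * k ^ (k - j) := by
      have := Nat.factorial_mul_descFactorial (n := k) (k := k - j) (by omega)
      rw [show k - (k - j) = j by omega] at this
      rw [← this]
      exact Nat.mul_le_mul_left _ (Nat.descFactorial_le_pow _ _)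
    have : k ^ k = k ^ (k - j) * k ^ j := by rw [← pow_add]; congr 1; omega
    rw [this, ← mul_assoc]
    exact Nat.mul_le_mul_right _ h1

lemma choose_mode {n j k : ℕ} (hj : j ≤ n) (hk : k ≤ n) :
    n.choose j * k ^ j * (n - k) ^ (n - j) ≤ n.choose k * k ^ k * (n - k) ^ (n - k) := by
  have h1 := fact_pow_le j k
  have h2 := fact_pow_le (n - j) (n - k)
  have h3 := Nat.mul_le_mul h1 h2
  have e1 := Nat.choose_mul_factorial_mul_factorial hj
  have e2 := Nat.choose_mul_factorial_mul_factorial hk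
  have hpos : 0 < k.factorial * (n-k).factorial * (j.factorial * (n-j).factorial) := by positivity
  refine Nat.le_of_mul_le_mul_left ?_ hpos
  calc _ = (n.choose j * j.factorial * (n-j).factorial) * (k.factorial * k ^ j * ((n-k).factorial * (n-k)^(n-j))) := by ring
    _ ≤ (n.choose j * j.factorial * (n-j).factorial) * (j.factorial * k ^ k * ((n-j).factorial * (n-k)^(n-k))) := Nat.mul_le_mul_left _ h3
    _ = (n.choose k * k.factorial * (n-k).factorial) * (j.factorial * k ^ k * ((n-j).factorial * (n-k)^(n-k))) := by rw [e1, e2]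
    _ = _ := by ring

lemma binom_nn {n k : ℕ} (hk : k ≤ n) :
    n ^ n = ∑ j ∈ Finset.range (n+1), n.choose j * k ^ j * (n - k) ^ (n - j) := by
  conv_lhs => rw [← Nat.add_sub_cancel' hk]
  rw [show k + (n - k) = n by omega]
  have := add_pow k (n-k) n
  rw [show k + (n - k) = n by omega] at this
  rw [this]
  exact Finset.sum_congr rfl fun j _ => by simp only [Nat.cast_id]; ring

lemma choose_upper {n k : ℕ} (hk : k ≤ n) : n.choose k * k ^ k * (n - k) ^ (n - k) ≤ n ^ n := by
  rw [binom_nn hk]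
  exact Finset.single_le_sum (f := fun j => n.choose j * k ^ j * (n - k) ^ (n - j)) (fun _ _ => Nat.zero_le _) (Finset.mem_range.2 (by omega))

lemma choose_lower {n k : ℕ} (hk : k ≤ n) :
    n ^ n ≤ (n + 1) * (n.choose k * k ^ k * (n - k) ^ (n - k)) := by
  rw [binom_nn hk]
  refine (Finset.sum_le_card_nsmul _ _ (n.choose k * k ^ k * (n - k) ^ (n - k)) ?_).trans ?_
  · intro j hj
    exact choose_mode (by simpa [Nat.lt_succ_iff] using hj) hk
  · simp

/-- relative entropy -/
noncomputable def relEnt (p x : ℝ) : ℝ :=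
  x * Real.log (x / p) + (1 - x) * Real.log ((1 - x) / (1 - p))

lemma mul_log_div (x p : ℝ) (hp : p ≠ 0) : x * Real.log (x / p) = x * Real.log x - x * Real.log p := by
  rcases eq_or_ne x 0 with rfl | hx
  · simp
  · rw [Real.log_div hx hp]; ring

lemma relEnt_eq {p : ℝ} (hp : 0 < p) (hp1 : p < 1) (x : ℝ) :
    relEnt p x = x * Real.log x + (1 - x) * Real.log (1 - x) - x * Real.log p - (1 - x) * Real.log (1 - p) := by
  rw [relEnt, mul_log_div _ _ hp.ne', mul_log_div _ _ (by linarith : 1 - p ≠ 0)]; ring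

lemma log_self_pow_pos (k : ℕ) : 0 < (k:ℝ) ^ k := by
  rcases Nat.eq_zero_or_pos k with rfl | h
  · simp
  · positivity

/-- exp of minus n times the relative entropy -/
lemma exp_relEnt {n k : ℕ} (hn : 0 < n) (hk : k ≤ n) {p : ℝ} (hp : 0 < p) (hp1 : p < 1) :
    Real.exp (-(n * relEnt p (k / n))) * ((k:ℝ)^k * ((n - k : ℕ):ℝ)^(n-k)) = (n:ℝ)^n * (p ^ k * (1-p)^(n-k)) := by
  have hn' : (0:ℝ) < n := by exact_mod_cast hn
  have h1p : 0 < 1 - p := by linarith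
  have a1 := log_self_pow_pos k
  have a2 := log_self_pow_pos (n-k)
  apply Real.log_injOn_pos (Set.mem_Ioi.2 (by positivity)) (Set.mem_Ioi.2 (by positivity))
  rw [Real.log_mul (by positivity) (by positivity), Real.log_mul a1.ne' a2.ne', Real.log_mul (by positivity) (by positivity), Real.log_mul (by positivity) (by positivity), Real.log_exp]
  simp only [Real.log_pow]
  rw [relEnt_eq hp hp1]
  have e : 1 - (k:ℝ)/n = ((n-k:ℕ):ℝ)/n := by
    rw [Nat.cast_sub hk]; field_simp
  rw [e, mul_comm ((k:ℝ)/n) (log _)]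
  have b1 : (k:ℝ)/n * Real.log ((k:ℝ)/n) = (k:ℝ)/n * Real.log k - (k:ℝ)/n * Real.log n := by
    rcases Nat.eq_zero_or_pos k with rfl | h
    · simp
    · rw [Real.log_div (by positivity) (by positivity)]; ring
  have b2 : ((n-k:ℕ):ℝ)/n * Real.log (((n-k:ℕ):ℝ)/n) = ((n-k:ℕ):ℝ)/n * Real.log ((n-k:ℕ):ℝ) - ((n-k:ℕ):ℝ)/n * Real.log n := by
    rcases Nat.eq_zero_or_pos (n-k) with h | h
    · rw [h]; simp
    · rw [Real.log_div (by positivity) (by positivity)]; ring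
  rw [mul_comm (log _) _, b1, b2]
  rw [Nat.cast_sub hk]
  field_simp
  ring

noncomputable def binP (n : ℕ) (p : ℝ) (k : ℕ) : ℝ := n.choose k * (p ^ k * (1-p)^(n-k))

lemma binP_upper {n k : ℕ} (hn : 0 < n) (hk : k ≤ n) {p : ℝ} (hp : 0 < p) (hp1 : p < 1) :
    binP n p k ≤ Real.exp (-(n * relEnt p (k / n))) := by
  have h := exp_relEnt hn hk hp hp1
  have h2 : (n.choose k : ℝ) * (k:ℝ)^k * ((n-k:ℕ):ℝ)^(n-k) ≤ (n:ℝ)^n := by exact_mod_cast choose_upper hk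
  have a1 := log_self_pow_pos k
  have a2 := log_self_pow_pos (n-k)
  have h1p : 0 < 1 - p := by linarith
  refine le_of_mul_le_mul_right ?_ (mul_pos a1 a2)
  rw [h, binP]
  calc _ = ((n.choose k : ℝ) * (k:ℝ)^k * ((n-k:ℕ):ℝ)^(n-k)) * (p ^ k * (1-p)^(n-k)) := by ring
    _ ≤ _ := mul_le_mul_of_nonneg_right h2 (by positivity)

lemma binP_lower {n k : ℕ} (hn : 0 < n) (hk : k ≤ n) {p : ℝ} (hp : 0 < p) (hp1 : p < 1) :
    Real.exp (-(n * relEnt p (k / n))) ≤ (n + 1) * binP n p k := by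
  have h := exp_relEnt hn hk hp hp1
  have h2 : (n:ℝ)^n ≤ (n+1) * ((n.choose k : ℝ) * (k:ℝ)^k * ((n-k:ℕ):ℝ)^(n-k)) := by exact_mod_cast choose_lower hk
  have a1 := log_self_pow_pos k
  have a2 := log_self_pow_pos (n-k)
  have h1p : 0 < 1 - p := by linarith
  refine le_of_mul_le_mul_right ?_ (mul_pos a1 a2)
  rw [h, binP]
  calc _ ≤ ((n+1) * ((n.choose k : ℝ) * (k:ℝ)^k * ((n-k:ℕ):ℝ)^(n-k))) * (p ^ k * (1-p)^(n-k)) := mul_le_mul_of_nonneg_right h2 (by positivity)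
    _ = _ := by ring

lemma unif_sqf {n : ℕ} (hn : 0 < n) :
    uniformOn (Set.Icc 1 n) {x | Squarefree x} = ENNReal.ofReal ((sqfCount n : ℝ) / n) := by
  have hf : (Set.Icc 1 n).Finite := Set.finite_Icc 1 n
  rw [← uniformOn_inter_self hf]
  have e1 : (Set.Icc 1 n : Set ℕ) = ((Finset.Icc 1 n : Finset ℕ) : Set ℕ) := by simp
  have e2 : (Set.Icc 1 n ∩ {x | Squarefree x} : Set ℕ) = (((Finset.Icc 1 n).filter Squarefree : Finset ℕ) : Set ℕ) := by
    ext; simp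
  rw [e2, e1, uniformOn_apply_finset, Finset.inter_eq_right.2 (Finset.filter_subset _ _),
    ENNReal.ofReal_div_of_pos (by exact_mod_cast hn)]
  simp [sqfCount]

lemma unif_not_sqf {n : ℕ} (hn : 0 < n) :
    uniformOn (Set.Icc 1 n) {x | Squarefree x}ᶜ = ENNReal.ofReal (1 - (sqfCount n : ℝ) / n) := by
  have := isProbabilityMeasure_uniformOn (Set.finite_Icc 1 n) (Set.nonempty_Icc.2 hn)
  rw [prob_compl_eq_one_sub (MeasurableSet.of_discrete), unif_sqf hn,
    ENNReal.ofReal_sub _ (by positivity), ENNReal.ofReal_one]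

lemma unif_box {n : ℕ} (hn : 0 < n) (T : Finset (Fin n)) :
    unifVec n {ω | Finset.univ.filter (fun i => Squarefree (ω i)) = T} =
      ENNReal.ofReal (((sqfCount n : ℝ) / n) ^ T.card * (1 - (sqfCount n : ℝ) / n) ^ (n - T.card)) := by
  have hP := isProbabilityMeasure_uniformOn (Set.finite_Icc 1 n) (Set.nonempty_Icc.2 hn)
  have hle : (sqfCount n : ℝ) / n ≤ 1 := by
    rw [div_le_one (by exact_mod_cast hn)]
    have := Finset.card_filter_le (Finset.Icc 1 n) Squarefree
    rw [Nat.card_Icc, Nat.add_sub_cancel] at this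
    exact_mod_cast this
  have e : {ω : Fin n → ℕ | Finset.univ.filter (fun i => Squarefree (ω i)) = T} =
      Set.univ.pi (fun i => if i ∈ T then {x : ℕ | Squarefree x} else {x | Squarefree x}ᶜ) := by
    ext ω
    simp only [Set.mem_ofPred_eq, Set.mem_univ_pi, Finset.ext_iff, Finset.mem_filter, Finset.mem_univ, true_and]
    refine forall_congr' fun i => ?_
    by_cases h : i ∈ T <;> simp [h]
  rw [e, unifVec, Measure.pi_pi]
  have : ∀ i : Fin n, uniformOn (Set.Icc 1 n) (if i ∈ T then {x : ℕ | Squarefree x} else {x | Squarefree x}ᶜ) =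
      if i ∈ T then ENNReal.ofReal ((sqfCount n : ℝ) / n) else ENNReal.ofReal (1 - (sqfCount n : ℝ) / n) := by
    intro i
    split_ifs
    · exact unif_sqf hn
    · exact unif_not_sqf hn
  simp_rw [this]
  rw [Finset.prod_ite, Finset.prod_const, Finset.prod_const, ENNReal.ofReal_mul (by positivity),
    ENNReal.ofReal_pow (by positivity), ENNReal.ofReal_pow (by linarith)]
  congr 2
  · simp
  · have := Finset.card_compl T
    rw [Fintype.card_fin] at this
    rw [← this]
    congr 1
    ext; simp

lemma unif_count {n : ℕ} (hn : 0 < n) (k : ℕ) :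
    unifVec n {ω | (Finset.univ.filter (fun i => Squarefree (ω i))).card = k} =
      ENNReal.ofReal (binP n ((sqfCount n : ℝ) / n) k) := by
  have e : {ω : Fin n → ℕ | (Finset.univ.filter (fun i => Squarefree (ω i))).card = k} =
      ⋃ T ∈ Finset.powersetCard k (Finset.univ : Finset (Fin n)),
        {ω | Finset.univ.filter (fun i => Squarefree (ω i)) = T} := by
    ext ω; simp
  rw [e, measure_biUnion_finset]
  · rw [Finset.sum_congr rfl (g := fun _ => ENNReal.ofReal (((sqfCount n : ℝ) / n) ^ k * (1 - (sqfCount n : ℝ) / n) ^ (n - k)))]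
    · rw [Finset.sum_const, Finset.card_powersetCard, Finset.card_univ, Fintype.card_fin, binP,
        ENNReal.ofReal_mul (p := (n.choose k : ℝ)) (by positivity), ENNReal.ofReal_natCast, nsmul_eq_mul]
    · intro T hT
      rw [unif_box hn, (Finset.mem_powersetCard.1 hT).2]
  · intro T _ T' _ hne
    rw [Function.onFun, Set.disjoint_left]
    intro ω h h'
    exact hne (h.symm.trans h')
  · intro T _
    exact (Set.to_countable _).measurableSet

lemma V_eq {n : ℕ} (ω : Fin n → ℕ) : (1 / (n : ℝ)) * (∑ i : Fin n, if Squarefree (ω i) then (1 : ℝ) else 0)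
    = ((Finset.univ.filter (fun i => Squarefree (ω i))).card : ℝ) / n := by
  rw [Finset.card_filter]; push_cast; ring

lemma prob_lower {n k : ℕ} (hn : 0 < n) (A : Set ℝ) (hk : (k:ℝ)/n ∈ A) :
    ENNReal.ofReal (binP n ((sqfCount n : ℝ) / n) k) ≤ (unifVec n) {ω | (1 / (n : ℝ)) *
                  (∑ i : Fin n, if Squarefree (ω i) then (1 : ℝ) else 0) ∈ A} := by
  rw [← unif_count hn]
  refine measure_mono fun ω h => ?_
  simp only [Set.mem_ofPred_eq, V_eq] at h ⊢
  rwa [h]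

lemma prob_upper {n : ℕ} (hn : 0 < n) (A : Set ℝ) {c : ℝ}
    (h : ∀ k ≤ n, (k:ℝ)/n ∈ A → binP n ((sqfCount n : ℝ) / n) k ≤ c) :
    (unifVec n) {ω | (1 / (n : ℝ)) *
                  (∑ i : Fin n, if Squarefree (ω i) then (1 : ℝ) else 0) ∈ A} ≤ ENNReal.ofReal ((n + 1) * c) := by
  classical
  calc _ ≤ unifVec n (⋃ k ∈ (Finset.range (n+1)).filter (fun k : ℕ => (k:ℝ)/n ∈ A),
        {ω | (Finset.univ.filter (fun i => Squarefree (ω i))).card = k}) := by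
        refine measure_mono fun ω hω => ?_
        simp only [Set.mem_ofPred_eq, V_eq] at hω
        have := Finset.card_le_univ (Finset.univ.filter (fun i => Squarefree (ω i)))
        rw [Fintype.card_fin] at this
        simp only [Set.mem_iUnion]
        exact ⟨_, Finset.mem_filter.2 ⟨Finset.mem_range.2 (by omega), hω⟩, rfl⟩
    _ ≤ ∑ k ∈ (Finset.range (n+1)).filter (fun k : ℕ => (k:ℝ)/n ∈ A), _ := measure_biUnion_finset_le _ _
    _ ≤ ∑ k ∈ (Finset.range (n+1)).filter (fun k : ℕ => (k:ℝ)/n ∈ A), ENNReal.ofReal c := by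
        refine Finset.sum_le_sum fun k hk => ?_
        rw [unif_count hn]
        simp only [Finset.mem_filter, Finset.mem_range] at hk
        exact ENNReal.ofReal_le_ofReal (h k (by omega) hk.2)
    _ ≤ ∑ k ∈ (Finset.range (n+1)), ENNReal.ofReal c := Finset.sum_le_sum_of_subset (Finset.filter_subset _ _)
    _ = _ := by
        rw [Finset.sum_const, Finset.card_range, ENNReal.ofReal_mul (by positivity), nsmul_eq_mul]
        congr 1
        rw [← Nat.cast_succ, ENNReal.ofReal_natCast]

lemma p_pos : 0 < 6 / π ^ 2 := by have := Real.pi_pos; positivity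

lemma p_lt_one : 6 / π ^ 2 < 1 := by
  have := Real.pi_gt_three
  rw [div_lt_one (by positivity)]
  nlinarith

lemma rate_eq {x : ℝ} (h0 : 0 ≤ x) (h1 : x ≤ 1) : squarefreeRate x = (relEnt (6 / π ^ 2) x : EReal) := by
  rw [squarefreeRate, if_pos ⟨h0, h1⟩, relEnt]

lemma log_term_tendsto : Tendsto (fun n : ℕ => (n:ℝ)⁻¹ * Real.log (n + 1)) atTop (nhds 0) := by
  have h := (Real.isLittleO_log_id_atTop.tendsto_div_nhds_zero).comp
    (tendsto_atTop_add_const_right atTop (1:ℝ) tendsto_natCast_atTop_atTop)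
  have h2 : Tendsto (fun n : ℕ => ((n:ℝ) + 1) / n) atTop (nhds 1) := by
    have h3 := (tendsto_inv_atTop_nhds_zero_nat (𝕜 := ℝ)).const_add 1
    rw [add_zero] at h3
    refine h3.congr' ?_
    filter_upwards [eventually_gt_atTop 0] with n hn
    have : (0:ℝ) < n := by exact_mod_cast hn
    field_simp
  have := h.mul h2
  rw [zero_mul] at this
  refine this.congr' ?_
  filter_upwards [eventually_gt_atTop 0] with n hn
  have : (0:ℝ) < n := by exact_mod_cast hn
  simp only [Function.comp, id]
  field_simp

noncomputable def dev (q : ℝ) : ℝ :=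
  |Real.log q - Real.log (6 / π ^ 2)| + |Real.log (1 - q) - Real.log (1 - 6 / π ^ 2)|

lemma relEnt_dev {q x : ℝ} (hq : 0 < q) (hq1 : q < 1) (h0 : 0 ≤ x) (h1 : x ≤ 1) :
    relEnt (6 / π ^ 2) x - dev q ≤ relEnt q x := by
  rw [relEnt_eq hq hq1, relEnt_eq p_pos p_lt_one, dev]
  have a1 := le_abs_self (Real.log q - Real.log (6 / π ^ 2))
  have a2 := le_abs_self (Real.log (1 - q) - Real.log (1 - 6 / π ^ 2))
  have b1 := abs_nonneg (Real.log q - Real.log (6 / π ^ 2))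
  have b2 := abs_nonneg (Real.log (1 - q) - Real.log (1 - 6 / π ^ 2))
  have c1 := mul_le_mul_of_nonneg_left a1 h0
  have c2 := mul_le_mul_of_nonneg_left a2 (sub_nonneg.2 h1)
  have d1 := mul_le_mul_of_nonneg_right h1 b1
  have d2 := mul_le_mul_of_nonneg_right (show 1 - x ≤ 1 by linarith) b2
  linarith

lemma logq_tendsto : Tendsto (fun n : ℕ => Real.log ((sqfCount n : ℝ) / n)) atTop (nhds (Real.log (6 / π ^ 2))) :=
  sqf_tendsto.log p_pos.ne'

lemma logq_tendsto' : Tendsto (fun n : ℕ => Real.log (1 - (sqfCount n : ℝ) / n)) atTop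
    (nhds (Real.log (1 - 6 / π ^ 2))) :=
  (sqf_tendsto.const_sub 1).log (sub_pos.2 p_lt_one).ne'

lemma dev_tendsto : Tendsto (fun n : ℕ => dev ((sqfCount n : ℝ) / n)) atTop (nhds 0) := by
  have := ((logq_tendsto.sub_const (Real.log (6 / π ^ 2))).abs).add
    ((logq_tendsto'.sub_const (Real.log (1 - 6 / π ^ 2))).abs)
  simpa [dev] using this

lemma relEnt_tendsto {x : ℝ} {k : ℕ → ℝ} (hk : Tendsto k atTop (nhds x)) :
    Tendsto (fun n : ℕ => relEnt ((sqfCount n : ℝ) / n) (k n)) atTop (nhds (relEnt (6 / π ^ 2) x)) := by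
  have hk' := hk.const_sub 1
  have h1 := (Real.continuous_mul_log.tendsto x).comp hk
  have h2 := (Real.continuous_mul_log.tendsto (1 - x)).comp hk'
  have h3 := ((h1.add h2).sub (hk.mul logq_tendsto)).sub (hk'.mul logq_tendsto')
  rw [relEnt_eq p_pos p_lt_one]
  refine h3.congr' ?_
  filter_upwards [sqf_tendsto.eventually_const_lt p_pos, sqf_tendsto.eventually_lt_const p_lt_one] with n hq hq1
  rw [relEnt_eq hq hq1]
  rfl

lemma scaled_log {n : ℕ} {t : ℝ} (ht : 0 < t) :
    (((n : ℝ)⁻¹ : ℝ) : EReal) * ENNReal.log (ENNReal.ofReal t) = (((n:ℝ)⁻¹ * Real.log t : ℝ) : EReal) := by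
  rw [ENNReal.log_ofReal_of_pos ht, EReal.coe_mul]

lemma scaled_mono {n : ℕ} {a b : ENNReal} (h : a ≤ b) :
    (((n : ℝ)⁻¹ : ℝ) : EReal) * ENNReal.log a ≤ (((n : ℝ)⁻¹ : ℝ) : EReal) * ENNReal.log b :=
  mul_le_mul_of_nonneg_left (ENNReal.log_le_log h) (EReal.coe_nonneg.2 (by positivity))

/-- The empirical densities `V_n = n⁻¹ ∑_{i=1}^n 1_{X_i squarefree}`
satisfy a large deviation principle with speed `n` and rate function `squarefreeRate`:
for every Borel set `A ⊆ ℝ`,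
`−inf_{x ∈ A°} I(x) ≤ liminf_n (1/n) log P(V_n ∈ A)`
and `limsup_n (1/n) log P(V_n ∈ A) ≤ −inf_{x ∈ closure A} I(x)`
(with `(1/n) log P = −∞` when the probability vanishes). -/
theorem ldp_squarefree (A : Set ℝ) (hA : MeasurableSet A) :
    -(⨅ x ∈ interior A, squarefreeRate x) ≤
        Filter.liminf
          (fun n : ℕ =>
            (((n : ℝ)⁻¹ : ℝ) : EReal) *
              ENNReal.log
                ((unifVec n) {ω | (1 / (n : ℝ)) *
                  (∑ i : Fin n, if Squarefree (ω i) then (1 : ℝ) else 0) ∈ A}))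
          atTop ∧
      Filter.limsup
          (fun n : ℕ =>
            (((n : ℝ)⁻¹ : ℝ) : EReal) *
              ENNReal.log
                ((unifVec n) {ω | (1 / (n : ℝ)) *
                  (∑ i : Fin n, if Squarefree (ω i) then (1 : ℝ) else 0) ∈ A}))
          atTop
        ≤ -(⨅ x ∈ closure A, squarefreeRate x) := by
  constructor
  · rw [EReal.neg_le]
    refine le_iInf₂ fun x hx => ?_
    by_cases hx01 : 0 ≤ x ∧ x ≤ 1
    swap
    · rw [squarefreeRate, if_neg hx01]; exact le_top
    obtain ⟨h0, h1⟩ := hx01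
    rw [rate_eq h0 h1, EReal.neg_le]
    have hk : Tendsto (fun n : ℕ => ((⌊x * n⌋₊ : ℕ) : ℝ) / n) atTop (nhds x) :=
      (tendsto_nat_floor_mul_div_atTop (R := ℝ) h0).comp tendsto_natCast_atTop_atTop
    have hlim := ((relEnt_tendsto hk).neg.sub log_term_tendsto)
    rw [sub_zero] at hlim
    have hlim' := (continuous_coe_real_ereal.tendsto _).comp hlim
    rw [← EReal.coe_neg, ← hlim'.liminf_eq]
    refine liminf_le_liminf ?_
    filter_upwards [sqf_tendsto.eventually_const_lt p_pos, sqf_tendsto.eventually_lt_const p_lt_one,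
      eventually_gt_atTop 0, hk.eventually (isOpen_interior.mem_nhds hx)] with n hq hq1 hn hkA
    have hn' : (0:ℝ) < n := by exact_mod_cast hn
    have hkn : ⌊x * n⌋₊ ≤ n := by
      refine Nat.floor_le_of_le ?_
      nlinarith
    refine le_trans ?_ (scaled_mono (prob_lower hn A (interior_subset hkA)))
    have hl := binP_lower hn hkn hq hq1
    have hpos : 0 < binP n ((sqfCount n : ℝ) / n) ⌊x * n⌋₊ := by
      have := Real.exp_pos (-(n * relEnt ((sqfCount n : ℝ) / n) ((⌊x * n⌋₊ : ℕ) / n)))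
      by_contra hcon
      nlinarith
    rw [scaled_log hpos]
    simp only [Function.comp]
    rw [EReal.coe_le_coe_iff]
    have hl2 := Real.log_le_log (Real.exp_pos _) hl
    rw [Real.log_exp, Real.log_mul (by positivity) hpos.ne'] at hl2
    have hl3 := mul_le_mul_of_nonneg_left hl2 (inv_nonneg.2 hn'.le)
    have e : (n:ℝ)⁻¹ * -(n * relEnt ((sqfCount n : ℝ) / n) ((⌊x * n⌋₊ : ℕ) / n)) =
        - relEnt ((sqfCount n : ℝ) / n) ((⌊x * n⌋₊ : ℕ) / n) := by field_simp
    rw [e] at hl3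
    linarith
  · rw [EReal.le_neg]
    refine EReal.ge_of_forall_gt_iff_ge.1 fun c hc => ?_
    rw [EReal.le_neg]
    have hlim := (log_term_tendsto.add dev_tendsto).sub_const c
    rw [add_zero, zero_sub] at hlim
    have hlim' := (continuous_coe_real_ereal.tendsto _).comp hlim
    rw [← EReal.coe_neg, ← hlim'.limsup_eq]
    refine limsup_le_limsup ?_
    filter_upwards [sqf_tendsto.eventually_const_lt p_pos, sqf_tendsto.eventually_lt_const p_lt_one,
      eventually_gt_atTop 0] with n hq hq1 hn
    have hn' : (0:ℝ) < n := by exact_mod_cast hn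
    have hup := prob_upper hn A (c := Real.exp (-(n * (c - dev ((sqfCount n : ℝ) / n))))) (by
      intro k hk hkA
      refine (binP_upper hn hk hq hq1).trans (Real.exp_le_exp.2 (neg_le_neg (mul_le_mul_of_nonneg_left ?_ hn'.le)))
      have h0 : 0 ≤ (k:ℝ)/n := by positivity
      have h1 : (k:ℝ)/n ≤ 1 := by rw [div_le_one hn']; exact_mod_cast hk
      have hd := relEnt_dev hq hq1 h0 h1
      have hr : c ≤ relEnt (6 / π ^ 2) (k / n) := by
        have := hc.le.trans (iInf₂_le _ (subset_closure hkA))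
        rw [rate_eq h0 h1] at this
        exact EReal.coe_le_coe_iff.1 this
      linarith)
    refine (scaled_mono hup).trans ?_
    rw [scaled_log (by positivity)]
    simp only [Function.comp]
    rw [EReal.coe_le_coe_iff, Real.log_mul (by positivity) (by positivity), Real.log_exp]
    apply le_of_eq
    field_simp
    ring
end
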